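/- arXiv:2106.12697 — 2 statements merged into one kernel-verified Lean document; each statement's English description precedes it below -/
import Mathlib

section
/- Let C be a commutative Noetherian ring with Krull dimension D < ∞ and let A = C[x_1,…,x_n]. Let V be an A-module equipped with a quadratic form q. Suppose the orthogonal direct sum of (V,q) with a hyperbolic plane (the free module A^2 with form (u,v) ↦ uv) is isometric to the free module A^{2r} (respectively A^{2r+1}) with the split quadratic form Σ_{i=1}^r x_i x_{−i} (respectively x_0^2 + Σ_{i=1}^r x_i x_{−i}), where r ≥ max(3, D+2). Then V is a free A-module and q is isometric to the split quadratic form of the corresponding rank, namely Σ_{i=1}^{r−1} x_i x_{−i} (respectively x_0^2 + Σ_{i=1}^{r−1} x_i x_{−i}). -/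
open Matrix

section EvenDefs

variable {R : Type*} [CommRing R]

/-- In the basis `e_1,…,e_r,e_{-r},…,e_{-1}` of `R^{2r}` (0-indexed by `Fin (2*r)`),
the position of `e_{-i}` given the position of `e_i` (and vice versa). -/
def negE (r : ℕ) (i : Fin (2 * r)) : Fin (2 * r) := ⟨2 * r - 1 - i.val, by omega⟩

/-- The split quadratic form `q(x) = ∑_{i=1}^r x_i x_{-i}` on `R^{2r}`. -/
def quadE (r : ℕ) (x : Fin (2 * r) → R) : R :=
  ∑ i : Fin r, x ⟨i.val, by omega⟩ * x ⟨2 * r - 1 - i.val, by omega⟩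

/-- The even split orthogonal group `O(2r,R)`, as a set of matrices. -/
def OE (r : ℕ) (R : Type*) [CommRing R] : Set (Matrix (Fin (2 * r)) (Fin (2 * r)) R) :=
  {g | IsUnit g ∧ ∀ x : Fin (2 * r) → R, quadE r (g.mulVec x) = quadE r x}

/-- The elementary orthogonal transvection `T_{i,j}(ξ) = e + ξ e_{i,j} - ξ e_{-j,-i}`. -/
def TE (r : ℕ) (i j : Fin (2 * r)) (ξ : R) : Matrix (Fin (2 * r)) (Fin (2 * r)) R :=
  1 + ξ • Matrix.single i j 1 - ξ • Matrix.single (negE r j) (negE r i) 1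

/-- Being an elementary orthogonal transvection (even case): `T_{i,j}(ξ)` with `i ≠ ±j`. -/
def IsElemE (r : ℕ) (g : Matrix (Fin (2 * r)) (Fin (2 * r)) R) : Prop :=
  ∃ i j : Fin (2 * r), ∃ ξ : R, i ≠ j ∧ i ≠ negE r j ∧ g = TE r i j ξ

/-- `EO(2r,R)^{≤N}` : products of at most `N` elementary orthogonal transvections. -/
def EOE (r N : ℕ) (R : Type*) [CommRing R] : Set (Matrix (Fin (2 * r)) (Fin (2 * r)) R) :=
  {g | ∃ L : List (Matrix (Fin (2 * r)) (Fin (2 * r)) R),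
    L.length ≤ N ∧ (∀ m ∈ L, IsElemE r m) ∧ g = L.prod}

/-- `IUm_{2r}(R)` : isotropic unimodular columns. -/
def IUmE (r : ℕ) (R : Type*) [CommRing R] : Set (Fin (2 * r) → R) :=
  {b | Ideal.span (Set.range b) = ⊤ ∧ quadE r b = 0}

end EvenDefs
section OddDefs

variable {R : Type*} [CommRing R]

/-- Position of the middle basis vector `e_0` in the basis
`e_1,…,e_r,e_0,e_{-r},…,e_{-1}` of `R^{2r+1}`. -/
def midO (r : ℕ) : Fin (2 * r + 1) := ⟨r, by omega⟩

/-- Position of `e_{-i}` given the position of `e_i` (odd case); fixes the middle position. -/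
def negO (r : ℕ) (i : Fin (2 * r + 1)) : Fin (2 * r + 1) := ⟨2 * r - i.val, by omega⟩

/-- The split quadratic form `q(x) = x_0^2 + ∑_{i=1}^r x_i x_{-i}` on `R^{2r+1}`. -/
def quadO (r : ℕ) (x : Fin (2 * r + 1) → R) : R :=
  x (midO r) * x (midO r) + ∑ i : Fin r, x ⟨i.val, by omega⟩ * x ⟨2 * r - i.val, by omega⟩

/-- The odd split orthogonal group `O(2r+1,R)`, as a set of matrices. -/
def OO (r : ℕ) (R : Type*) [CommRing R] : Set (Matrix (Fin (2 * r + 1)) (Fin (2 * r + 1)) R) :=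
  {g | IsUnit g ∧ ∀ x : Fin (2 * r + 1) → R, quadO r (g.mulVec x) = quadO r x}

/-- Long root elementary transvection `T_{i,j}(ξ) = e + ξ e_{i,j} - ξ e_{-j,-i}` (odd case). -/
def TOlong (r : ℕ) (i j : Fin (2 * r + 1)) (ξ : R) :
    Matrix (Fin (2 * r + 1)) (Fin (2 * r + 1)) R :=
  1 + ξ • Matrix.single i j 1 - ξ • Matrix.single (negO r j) (negO r i) 1

/-- Short root elementary transvection
`T_{i,0}(ξ) = e + 2ξ e_{i,0} - ξ e_{0,-i} - ξ² e_{i,-i}`. -/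
def TOshort (r : ℕ) (i : Fin (2 * r + 1)) (ξ : R) :
    Matrix (Fin (2 * r + 1)) (Fin (2 * r + 1)) R :=
  1 + (2 * ξ) • Matrix.single i (midO r) 1
    - ξ • Matrix.single (midO r) (negO r i) 1
    - (ξ * ξ) • Matrix.single i (negO r i) 1

/-- Being an elementary orthogonal transvection (odd case). -/
def IsElemO (r : ℕ) (g : Matrix (Fin (2 * r + 1)) (Fin (2 * r + 1)) R) : Prop :=
  (∃ i j : Fin (2 * r + 1), ∃ ξ : R, i ≠ midO r ∧ j ≠ midO r ∧ i ≠ j ∧ i ≠ negO r j ∧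
      g = TOlong r i j ξ) ∨
  (∃ i : Fin (2 * r + 1), ∃ ξ : R, i ≠ midO r ∧ g = TOshort r i ξ)

/-- `EO(2r+1,R)^{≤N}` : products of at most `N` elementary orthogonal transvections. -/
def EOO (r N : ℕ) (R : Type*) [CommRing R] :
    Set (Matrix (Fin (2 * r + 1)) (Fin (2 * r + 1)) R) :=
  {g | ∃ L : List (Matrix (Fin (2 * r + 1)) (Fin (2 * r + 1)) R),
    L.length ≤ N ∧ (∀ m ∈ L, IsElemO r m) ∧ g = L.prod}

/-- `IUm_{2r+1}(R)` : columns `b` with `q(b) = 0` such that the row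
`(b_1,…,b_r,2b_0,b_{-r},…,b_{-1})` is unimodular. -/
def IUmO (r : ℕ) (R : Type*) [CommRing R] : Set (Fin (2 * r + 1) → R) :=
  {b | Ideal.span (Set.range fun i => if i = midO r then 2 * b i else b i) = ⊤ ∧ quadO r b = 0}

end OddDefs

/-!
A hyperbolic plane is cancelled by moving its standard basis to the first hyperbolic pair of the
split form: an isometry which does so identifies the two orthogonal complements. Such an isometry
exists as soon as the orthogonal group of the split form acts transitively on isotropic unimodular
vectors over `C[x_1, …, x_n]`.

Transitivity is proved by induction on `n`, following Quillen's solution of Serre's problem. For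
`n = 0` it is a stable range argument with Eichler transvections, which is where `D + 2 ≤ r` enters.
For the inductive step, let `R(X)` be the localization of `R[X]` at the monic polynomials; its
dimension is at most that of `R`, so the induction hypothesis applies to `R(X)[x_1, …, x_{n-1}]`,
in which one variable of `R[x_1, …, x_{n-1}][X]` has become a constant. Over a local ring `B`, a
vector over `B[X]` which is in the orbit of a basis vector over `B(X)` is already in the orbit of
a constant vector over `B[X]` (Horrocks' theorem; here three hyperbolic planes are needed). Hence
`v` is locally, by Quillen patching globally, in the orbit of its value `v(0)` at `X = 0`, and the
induction hypothesis applies to `v(0)`.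
-/

universe u

/-! ### Kronecker's theorem -/

section Kronecker

variable {A : Type*} [CommRing A]

theorem ringKrullDim_quotient_succ_le_of_forall_minimalPrimes {I : Ideal A}
    (hI : ∀ p ∈ minimalPrimes A, ¬ I ≤ p) : ringKrullDim (A ⧸ I) + 1 ≤ ringKrullDim A := by
  rcases isEmpty_or_nonempty (PrimeSpectrum.zeroLocus (R := A) I) with hempty | hne
  · rw [ringKrullDim_quotient, Order.krullDim_eq_bot, WithBot.bot_add]
    exact bot_le
  have : Nonempty (PrimeSpectrum A) := hne.map Subtype.val
  rw [ringKrullDim_quotient, Order.krullDim_eq_iSup_length, ringKrullDim,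
    Order.krullDim_eq_iSup_length, ← WithBot.coe_one, ← WithBot.coe_add,
    ENat.iSup_add, WithBot.coe_le_coe, iSup_le_iff]
  intro l
  obtain ⟨p, hp, hpl⟩ := Ideal.exists_minimalPrimes_le (J := l.head.1.asIdeal) bot_le
  have hlt : (⟨p, hp.1.1⟩ : PrimeSpectrum A) < l.head.1 :=
    lt_of_le_of_ne hpl fun h ↦ hI p hp <| by
      have hl : I ≤ l.head.1.asIdeal := (PrimeSpectrum.mem_zeroLocus _ _).1 l.head.2
      rwa [← h] at hl
  let l' : LTSeries (PrimeSpectrum A) :=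
    (l.map Subtype.val (Subtype.strictMono_coe _)).cons ⟨p, hp.1.1⟩ hlt
  have hlen : l'.length = l.length + 1 := RelSeries.cons_length _ _ _
  have hle := le_iSup (fun q : LTSeries (PrimeSpectrum A) ↦ (q.length : ℕ∞)) l'
  rw [hlen] at hle
  exact_mod_cast hle

theorem exists_notMem_isNilpotent_mul_of_mem_minimalPrimes {a : A} {p : Ideal A}
    (hp : p ∈ minimalPrimes A) (ha : a ∈ p) : ∃ z ∉ p, IsNilpotent (z * a) := by
  have := hp.1.1
  by_contra! hnil
  let M : Submonoid A := p.primeCompl ⊔ Submonoid.powers a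
  have hdisj : Disjoint ((⊥ : Ideal A) : Set A) (M : Set A) := by
    rw [Set.disjoint_left]
    rintro _ hx hxM
    obtain ⟨z, hz, _, ⟨k, rfl⟩, rfl⟩ := Submonoid.mem_sup.1 hxM
    have hza : z * a ^ k = 0 := hx
    refine hnil z hz ⟨k + 1, ?_⟩
    rw [show (z * a) ^ (k + 1) = z * a ^ k * (z ^ k * a) by ring, hza, zero_mul]
  obtain ⟨Q, hQ, -, hQM⟩ := Ideal.exists_le_prime_disjoint _ M hdisj
  have hQp : Q ≤ p := fun x hx ↦ not_not.1 fun hxp ↦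
    Set.disjoint_left.1 hQM hx (Submonoid.mem_sup_left hxp)
  exact Set.disjoint_left.1 hQM (hp.2 ⟨hQ, bot_le⟩ hQp ha)
    (Submonoid.mem_sup_right (Submonoid.mem_powers a))

/-- The Lombardi–Coquand boundary ideal of `a`: it is generated by `a` and the elements whose
product with `a` is nilpotent. -/
def boundaryIdeal (a : A) : Ideal A :=
  Ideal.span {a} ⊔ (nilradical A).colon {a}

theorem not_boundaryIdeal_le_of_mem_minimalPrimes (a : A) {p : Ideal A}
    (hp : p ∈ minimalPrimes A) : ¬ boundaryIdeal a ≤ p := fun hle ↦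
  have ha : a ∈ p := hle (Ideal.mem_sup_left (Ideal.mem_span_singleton_self a))
  have ⟨_, hz, hza⟩ := exists_notMem_isNilpotent_mul_of_mem_minimalPrimes hp ha
  hz (hle (Ideal.mem_sup_right (Submodule.mem_colon_singleton.2 hza)))

theorem ringKrullDim_quotient_boundaryIdeal_succ_le (a : A) :
    ringKrullDim (A ⧸ boundaryIdeal a) + 1 ≤ ringKrullDim A :=
  ringKrullDim_quotient_succ_le_of_forall_minimalPrimes
    fun _ hp ↦ not_boundaryIdeal_le_of_mem_minimalPrimes a hp

theorem exists_mem_radical_of_mem_radical_sup_boundaryIdeal {K : Ideal A} {a b : A}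
    (hb : b ∈ (K ⊔ boundaryIdeal a).radical) :
    ∃ c, b ∈ (K ⊔ Ideal.span {a + c * b}).radical := by
  obtain ⟨n, hn⟩ := hb
  obtain ⟨x, hx, w, hw, hxw⟩ := Submodule.mem_sup.1 hn
  obtain ⟨y, hy, c, hc, rfl⟩ := Submodule.mem_sup.1 hw
  refine ⟨c, ?_⟩
  rw [Ideal.radical_eq_sInf, Ideal.mem_sInf]
  rintro P ⟨hle, hP⟩
  have hacb : a + c * b ∈ P := hle (Ideal.mem_sup_right (Ideal.mem_span_singleton_self _))
  have hca : c * a ∈ P := (Ideal.mem_sInf.1 (nilradical_eq_sInf A ▸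
    Submodule.mem_colon_singleton.1 hc)) hP
  have ha : a ∈ P := by
    refine hP.mem_of_pow_mem 2 ?_
    rw [show a ^ 2 = a * (a + c * b) - b * (c * a) by ring]
    exact P.sub_mem (P.mul_mem_left _ hacb) (P.mul_mem_left _ hca)
  have hcb : c * b ∈ P := (P.add_mem_iff_right ha).1 hacb
  refine (hP.mem_or_mem hcb).elim (fun hcP ↦ hP.mem_of_pow_mem n ?_) id
  rw [← hxw]
  exact P.add_mem (hle (Ideal.mem_sup_left hx))
    (P.add_mem (((Ideal.span_singleton_le_iff_mem P).2 ha) hy) hcP)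

theorem exists_mem_radical_span_range_fin (n : ℕ) {A : Type u} [CommRing A]
    (hA : ringKrullDim A < n) (a : Fin n → A) (b : A) :
    ∃ c : Fin n → A, b ∈ (Ideal.span (Set.range fun i ↦ a i + c i * b)).radical := by
  induction n generalizing A with
  | zero =>
    have : Subsingleton A := not_nontrivial_iff_subsingleton.1 fun _ ↦
      hA.not_ge (by simpa using ringKrullDim_nonneg_of_nontrivial)
    exact ⟨0, Subsingleton.elim 0 b ▸ zero_mem _⟩
  | succ n ih =>
    let N := boundaryIdeal (a (Fin.last n))
    have hN : ringKrullDim (A ⧸ N) < n := by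
      have h := (ringKrullDim_quotient_boundaryIdeal_succ_le (a (Fin.last n))).trans_lt hA
      push_cast at h
      exact lt_of_add_lt_add_right h
    obtain ⟨c', hc'⟩ := ih hN (fun i ↦ Ideal.Quotient.mk N (a i.castSucc)) (Ideal.Quotient.mk N b)
    choose c hc using fun i ↦ Ideal.Quotient.mk_surjective (c' i)
    let K := Ideal.span (Set.range fun i : Fin n ↦ a i.castSucc + c i * b)
    have hbK : b ∈ (K ⊔ N).radical := by
      have hmap : Ideal.span (Set.range fun i ↦ Ideal.Quotient.mk N (a i.castSucc) +
          c' i * Ideal.Quotient.mk N b) = K.map (Ideal.Quotient.mk N) := by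
        rw [Ideal.map_span, ← Set.range_comp]
        simp [← hc, Function.comp_def]
      rwa [hmap, ← Ideal.mem_comap, Ideal.comap_radical,
        Ideal.comap_map_of_surjective' _ Ideal.Quotient.mk_surjective, Ideal.mk_ker] at hc'
    obtain ⟨z, hz⟩ := exists_mem_radical_of_mem_radical_sup_boundaryIdeal hbK
    refine ⟨Fin.snoc (α := fun _ ↦ A) c z, Ideal.radical_mono (sup_le ?_ ?_) hz⟩
    · rw [Ideal.span_le]
      rintro _ ⟨i, rfl⟩
      exact Ideal.subset_span ⟨i.castSucc, by simp⟩
    · rw [Ideal.span_singleton_le_iff_mem]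
      exact Ideal.subset_span ⟨Fin.last n, by simp⟩

theorem exists_forall_isPrime_mem {ι : Type*} [Fintype ι]
    (hA : ringKrullDim A < Fintype.card ι) (a : ι → A) (b : A) :
    ∃ c : ι → A, ∀ P : Ideal A, P.IsPrime → (∀ i, a i + c i * b ∈ P) → b ∈ P := by
  let e := Fintype.equivFin ι
  obtain ⟨c, hc⟩ := exists_mem_radical_span_range_fin _ hA (a ∘ e.symm) b
  refine ⟨c ∘ e, fun P hP h ↦ hP.radical_le_iff.2 (Ideal.span_le.2 ?_) hc⟩
  rintro _ ⟨i, rfl⟩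
  simpa using h (e.symm i)

end Kronecker

/-! ### Localization of polynomial rings at monic polynomials -/

section MonicLocalization

open Polynomial

/-- The submonoid of monic polynomials. -/
def monicSubmonoid (B : Type*) [CommRing B] : Submonoid B[X] where
  carrier := {p | p.Monic}
  one_mem' := monic_one
  mul_mem' := Monic.mul

/-- The ring `B(X)`, obtained from `B[X]` by inverting the monic polynomials. -/
abbrev MonicLocalization (B : Type*) [CommRing B] : Type _ := Localization (monicSubmonoid B)

variable {C : Type*} [CommRing C]

theorem exists_monic_mem_of_isMaximal (P : Ideal C[X]) [P.IsMaximal]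
    (hP : (P.comap Polynomial.C).IsMaximal) : ∃ f ∈ P, f.Monic := by
  have hne : P ≠ (P.comap Polynomial.C).map Polynomial.C := by
    intro heq
    let : Field (C ⧸ P.comap Polynomial.C) := Ideal.Quotient.field _
    have hfield : IsField (C[X] ⧸ (P.comap Polynomial.C).map (Polynomial.C : C →+* C[X])) := by
      rw [← heq]
      exact (Ideal.Quotient.maximal_ideal_iff_isField_quotient P).1 inferInstance
    exact Polynomial.not_isField (C ⧸ P.comap Polynomial.C)
      ((Ideal.polynomialQuotientEquivQuotientPolynomial _).toMulEquiv.isField hfield)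
  obtain ⟨f, hf, hPf⟩ := Polynomial.exists_monic_span_sup_map_eq C P hP hne
  exact ⟨f, hPf ▸ Ideal.mem_sup_right (Ideal.mem_span_singleton_self f), hf⟩

theorem height_le_of_forall_not_monic [IsNoetherianRing C] {D : ℕ} (hD : ringKrullDim C ≤ D)
    (P : Ideal C[X]) [P.IsPrime] (hP : ∀ f ∈ P, ¬ f.Monic) : P.height ≤ D := by
  have hheight (p : Ideal C) (hp : p.IsPrime) : p.height ≤ D :=
    mod_cast (ringKrullDim_le_iff_height_le _).1 hD hp
  by_cases hPmax : P.IsMaximal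
  · have hnot : ¬ (P.under C).IsMaximal := fun h ↦
      have ⟨f, hf, hfm⟩ := exists_monic_mem_of_isMaximal P h
      hP f hf hfm
    obtain ⟨m, hm, hle⟩ := (P.under C).exists_le_maximal (Ideal.IsPrime.ne_top inferInstance)
    have := hm.isPrime
    rw [height_eq_height_add_one (P.under C) P]
    exact (Ideal.height_add_one_le_of_lt_of_isPrime
      (lt_of_le_of_ne hle fun h ↦ hnot (h ▸ hm))).trans (hheight m this)
  · obtain ⟨m, hm, hle⟩ := P.exists_le_maximal (Ideal.IsPrime.ne_top ‹_›)
    have := hm.isPrime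
    have hmD : m.height ≤ D + 1 := by
      rw [height_eq_height_add_one (m.under C) m]
      gcongr
      exact hheight _ inferInstance
    refine (ENat.add_le_add_iff_right ENat.one_ne_top).1 (le_trans ?_ hmD)
    exact Ideal.height_add_one_le_of_lt_of_isPrime (lt_of_le_of_ne hle fun h ↦ hPmax (h ▸ hm))

theorem ringKrullDim_monicLocalization_le [IsNoetherianRing C] {D : ℕ} (hD : ringKrullDim C ≤ D) :
    ringKrullDim (MonicLocalization C) ≤ D := by
  rw [ringKrullDim_le_iff_isMaximal_height_le]
  intro M hM
  rw [← IsLocalization.height_under (monicSubmonoid C) M]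
  have hnot : ∀ f ∈ M.under C[X], ¬ f.Monic := fun f hf hfm ↦
    hM.ne_top (Ideal.eq_top_of_isUnit_mem _ hf
      (IsLocalization.map_units (MonicLocalization C) (⟨f, hfm⟩ : monicSubmonoid C)))
  exact_mod_cast height_le_of_forall_not_monic hD _ hnot

end MonicLocalization

/-! ### Eichler transvections -/

section QuadraticForm

open QuadraticMap

variable {R M : Type*} [CommRing R] [AddCommGroup M] [Module R M] {Q : QuadraticForm R M}

theorem quadraticMap_ext_basis {ι : Type*} (b : Module.Basis ι R M) {Q' : QuadraticForm R M}
    (hQ : ∀ i, Q (b i) = Q' (b i)) (hpolar : ∀ i j, polar Q (b i) (b j) = polar Q' (b i) (b j)) :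
    Q = Q' := by
  have hbilin : Q.polarBilin = Q'.polarBilin := b.ext fun i ↦ b.ext (hpolar i)
  ext v
  induction b.mem_span v using Submodule.span_induction with
  | mem _ h => obtain ⟨i, rfl⟩ := h; exact hQ i
  | zero => simp
  | add x y _ _ hx hy =>
    rw [QuadraticMap.map_add Q, QuadraticMap.map_add Q', hx, hy]
    exact congrArg _ (DFunLike.congr_fun (DFunLike.congr_fun hbilin x) y)
  | smul a x _ hx => rw [QuadraticMap.map_smul, QuadraticMap.map_smul, hx]

variable (Q) in
/-- The Eichler transvection `v ↦ v + B(v, e) w - (B(v, w) + Q(w) B(v, e)) e`, where `B` is the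
polar form of `Q`. It is an isometry when `e` is isotropic and orthogonal to `w`. -/
def eichlerTransvection (e w : M) : M →ₗ[R] M :=
  LinearMap.id + (Q.polarBilin.flip e).smulRight w
    - (Q.polarBilin.flip w + Q w • Q.polarBilin.flip e).smulRight e

theorem eichlerTransvection_apply (e w v : M) :
    eichlerTransvection Q e w v =
      v + polar Q v e • w - (polar Q v w + Q w * polar Q v e) • e := rfl

theorem map_eichlerTransvection {e w : M} (he : Q e = 0) (hwe : polar Q w e = 0) (v : M) :
    Q (eichlerTransvection Q e w v) = Q v := by
  simp only [eichlerTransvection_apply, sub_eq_add_neg, ← neg_smul, QuadraticMap.map_add Q,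
    QuadraticMap.map_smul, polar_add_left, polar_smul_left, polar_smul_right, he, hwe,
    smul_eq_mul]
  ring

theorem eichlerTransvection_neg_apply_apply {e w : M} (he : Q e = 0) (hwe : polar Q w e = 0)
    (v : M) : eichlerTransvection Q e (-w) (eichlerTransvection Q e w v) = v := by
  have hee : polar Q e e = 0 := by rw [polar_self, he, smul_zero]
  have hew : polar Q e w = 0 := by rw [polar_comm, hwe]
  have hww : polar Q w w = 2 * Q w := by rw [polar_self, two_nsmul, two_mul]
  simp only [eichlerTransvection_apply, sub_eq_add_neg, ← neg_smul, polar_add_left,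
    polar_smul_left, polar_neg_right, QuadraticMap.map_neg, hee, hew, hwe, hww, smul_eq_mul]
  module

/-- The Eichler transvection as an isometry. -/
def eichlerIsometry {e w : M} (he : Q e = 0) (hwe : polar Q w e = 0) : Q.IsometryEquiv Q where
  toLinearEquiv := LinearEquiv.ofLinearMap
    (eichlerTransvection Q e w) (eichlerTransvection Q e (-w))
    (LinearMap.ext fun v ↦ by
      simpa using eichlerTransvection_neg_apply_apply (w := -w) he (by simp [hwe]) v)
    (LinearMap.ext (eichlerTransvection_neg_apply_apply he hwe))
  map_app' := map_eichlerTransvection he hwe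

@[simp]
theorem eichlerIsometry_apply {e w : M} (he : Q e = 0) (hwe : polar Q w e = 0) (v : M) :
    eichlerIsometry he hwe v = eichlerTransvection Q e w v := rfl

/-- If `e, f` is a hyperbolic pair, the transvection along `f` by this vector carries every
isotropic `v` with `B(v, f) = 1` to `e`. -/
def hyperbolicComplement (Q : QuadraticForm R M) (e f v : M) : M := e - v + polar Q v e • f

variable {e f v : M}

theorem polar_hyperbolicComplement_right (hf : Q f = 0) (hef : polar Q e f = 1)
    (hvf : polar Q v f = 1) : polar Q (hyperbolicComplement Q e f v) f = 0 := by
  have hff : polar Q f f = 0 := by rw [polar_self, hf, smul_zero]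
  rw [hyperbolicComplement, polar_add_left, polar_sub_left, polar_smul_left, hef, hvf, hff]
  simp

theorem eichlerTransvection_hyperbolicComplement (he : Q e = 0) (hf : Q f = 0)
    (hef : polar Q e f = 1) (hv : Q v = 0) (hvf : polar Q v f = 1) :
    eichlerTransvection Q f (hyperbolicComplement Q e f v) v = e := by
  have hvv : polar Q v v = 0 := by rw [polar_self, hv, smul_zero]
  have hev : polar Q e v = polar Q v e := polar_comm _ _ _
  have hpolar : polar Q v (hyperbolicComplement Q e f v) = 2 * polar Q v e := by
    rw [hyperbolicComplement, polar_add_right, polar_sub_right, polar_smul_right, hvv, hvf]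
    simp only [smul_eq_mul]
    ring
  have hQ : Q (hyperbolicComplement Q e f v) = -polar Q v e := by
    simp only [hyperbolicComplement, sub_eq_add_neg, QuadraticMap.map_add Q, QuadraticMap.map_smul,
      QuadraticMap.map_neg, polar_add_left, polar_smul_right, polar_neg_left, polar_neg_right,
      he, hf, hv, hef, hev, hvf, smul_eq_mul]
    ring
  rw [eichlerTransvection_apply, hvf, hpolar, hQ, hyperbolicComplement]
  module

/-- The reflection in a vector `e` with `Q e` invertible, written with an inverse `c` of `Q e`. -/
def reflectionIsometry {e : M} {c : R} (hc : c * Q e = 1) : Q.IsometryEquiv Q where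
  toLinearEquiv := Module.reflection (f := c • Q.polarBilin.flip e) (x := e) <| by
    change c * polar Q e e = 2
    rw [polar_self, two_nsmul, ← two_mul, mul_left_comm, hc, mul_one]
  map_app' v := by
    change Q (v - (c * polar Q v e) • e) = Q v
    rw [sub_eq_add_neg, ← neg_smul, QuadraticMap.map_add Q, QuadraticMap.map_smul, polar_smul_right]
    simp only [smul_eq_mul]
    linear_combination c * polar Q v e ^ 2 * hc

theorem reflectionIsometry_apply {e : M} {c : R} (hc : c * Q e = 1) (v : M) :
    reflectionIsometry hc v = v - (c * polar Q v e) • e := rfl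

end QuadraticForm

/-! ### Quadratic forms with integral coefficients -/

section IntForm

open QuadraticMap

theorem comp_indicator_one {J R S : Type*} [CommRing R] [CommRing S] (φ : R →+* S) (s : Set J) :
    φ ∘ s.indicator 1 = s.indicator 1 :=
  (Set.indicator_comp_of_zero (map_zero φ)).symm.trans (by ext; simp)

variable {J : Type*} [DecidableEq J]

theorem comp_single_one {R S : Type*} [CommRing R] [CommRing S] (φ : R →+* S) (i : J) :
    φ ∘ Pi.single i 1 = Pi.single i 1 := by
  ext j
  simp [Pi.single_apply, apply_ite φ]

variable [Fintype J] (U : Matrix J J ℤ)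

/-- The quadratic form `v ↦ ∑ i, ∑ j, U i j * v i * v j`, over an arbitrary commutative ring `R`. -/
def intForm (R : Type*) [CommRing R] : QuadraticForm R (J → R) :=
  (U.map (Int.castRingHom R)).toQuadraticForm'

variable {R S T : Type*} [CommRing R] [CommRing S] [CommRing T]

theorem intForm_apply (v : J → R) :
    intForm U R v = v ⬝ᵥ (U.map (Int.castRingHom R) *ᵥ v) := by
  simp [intForm, Matrix.toQuadraticForm', Matrix.toLinearMap₂'_apply',
    LinearMap.BilinMap.toQuadraticMap_apply]

theorem intForm_comp (φ : R →+* S) (v : J → R) : intForm U S (φ ∘ v) = φ (intForm U R v) := by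
  rw [intForm_apply, intForm_apply, RingHom.map_dotProduct]
  congr 1
  ext i
  rw [Function.comp_apply, RingHom.map_mulVec]
  congr 2
  ext
  simp

theorem polar_intForm_comp (φ : R →+* S) (v w : J → R) :
    polar (intForm U S) (φ ∘ v) (φ ∘ w) = φ (polar (intForm U R) v w) := by
  have hadd : φ ∘ v + φ ∘ w = φ ∘ (v + w) := by ext; simp
  simp only [polar, hadd, intForm_comp, map_sub]

theorem eichlerTransvection_comp (φ : R →+* S) (e w v : J → R) :
    eichlerTransvection (intForm U S) (φ ∘ e) (φ ∘ w) (φ ∘ v) =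
      φ ∘ eichlerTransvection (intForm U R) e w v := by
  ext i
  simp [eichlerTransvection_apply, polar_intForm_comp, intForm_comp]

theorem map_smul_comp (φ : R →+* S) (g : GL J R) (v : J → R) :
    GeneralLinearGroup.map φ g • (φ ∘ v) = φ ∘ (g • v) :=
  funext fun i ↦ (RingHom.map_mulVec φ g.1 v i).symm

theorem map_sub_one_apply_eq_zero {φ : R →+* S} {g : GL J R}
    (hg : GeneralLinearGroup.map φ g = 1) (i j : J) : φ ((g.1 - 1) i j) = 0 := by
  have hval : (GeneralLinearGroup.map φ g).1 = 1 := by rw [hg, Units.val_one]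
  have hentry : φ (g.1 i j) = (1 : Matrix J J S) i j := congr_fun₂ hval i j
  rw [Matrix.sub_apply, map_sub, hentry, sub_eq_zero, Matrix.one_apply, Matrix.one_apply,
    apply_ite φ, map_one, map_zero]

/-- The group of invertible matrices over `R` which preserve the form `intForm U R`. -/
def isometryGroup (R : Type*) [CommRing R] : Subgroup (GL J R) where
  carrier := {g | ∀ v, intForm U R (g • v) = intForm U R v}
  one_mem' v := by rw [one_smul]
  mul_mem' {g h} hg hh v := by rw [mul_smul, hg, hh]
  inv_mem' {g} hg v := by rw [← hg, smul_inv_smul]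

variable {U}

theorem polar_smul_smul {g : GL J R} (hg : g ∈ isometryGroup U R) (v w : J → R) :
    polar (intForm U R) (g • v) (g • w) = polar (intForm U R) v w := by
  simp only [polar, ← smul_add, hg _]

theorem map_mem_isometryGroup (φ : R →+* S) {g : GL J R} (hg : g ∈ isometryGroup U R) :
    GeneralLinearGroup.map φ g ∈ isometryGroup U S := by
  let g' := GeneralLinearGroup.map φ g
  have hsingle (i : J) : g'.1.mulVecLin (Pi.basisFun S J i) = φ ∘ (g • Pi.single i 1) := by
    rw [← map_smul_comp, comp_single_one, Pi.basisFun_apply]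
    rfl
  have hbasis (i : J) : Pi.basisFun S J i = φ ∘ Pi.single i 1 := by
    rw [comp_single_one, Pi.basisFun_apply]
  have hcomp : (intForm U S).comp g'.1.mulVecLin = intForm U S := by
    refine quadraticMap_ext_basis (Pi.basisFun S J) (fun i ↦ ?_) fun i j ↦ ?_
    · rw [QuadraticMap.comp_apply, hsingle, intForm_comp, hg, ← intForm_comp, hbasis]
    · rw [← polarBilin_apply_apply, polarBilin_comp]
      change polar (intForm U S) (g'.1.mulVecLin _) (g'.1.mulVecLin _) = _
      rw [hsingle, hsingle, polar_intForm_comp, polar_smul_smul hg, ← polar_intForm_comp,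
        hbasis, hbasis]
  exact fun v ↦ DFunLike.congr_fun hcomp v

/-- The matrix of an isometry of `intForm U R`. -/
def isometryMatrix (f : (intForm U R).IsometryEquiv (intForm U R)) : GL J R :=
  GeneralLinearGroup.toLin.symm
    ((LinearMap.GeneralLinearGroup.generalLinearEquiv R (J → R)).symm f.toLinearEquiv)

theorem isometryMatrix_smul (f : (intForm U R).IsometryEquiv (intForm U R)) (v : J → R) :
    isometryMatrix f • v = f v := by
  change Matrix.mulVecLin (isometryMatrix f).1 v = f v
  rw [← GeneralLinearGroup.toLin_apply, isometryMatrix, MulEquiv.apply_symm_apply]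
  rfl

theorem map_isometryMatrix_smul {φ : R →+* S} {f : (intForm U R).IsometryEquiv (intForm U R)}
    {f' : (J → S) →ₗ[S] J → S} (hf : ∀ v, f' (φ ∘ v) = φ ∘ f v) (v : J → S) :
    GeneralLinearGroup.map φ (isometryMatrix f) • v = f' v := by
  have h : (GeneralLinearGroup.map φ (isometryMatrix f)).1.mulVecLin = f' :=
    (Pi.basisFun S J).ext fun i ↦ by
      rw [Pi.basisFun_apply, ← comp_single_one φ, hf, ← isometryMatrix_smul, ← map_smul_comp]
      rfl
  exact LinearMap.congr_fun h v

theorem map_isometryMatrix_reflectionIsometry_smul (φ : R →+* S) {e : J → R} {c : R}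
    (hc : c * intForm U R e = 1) (v : J → S) :
    GeneralLinearGroup.map φ (isometryMatrix (reflectionIsometry hc)) • v =
      v - (φ c * polar (intForm U S) v (φ ∘ e)) • (φ ∘ e) := by
  have hc' : φ c * intForm U S (φ ∘ e) = 1 := by rw [intForm_comp, ← map_mul, hc, map_one]
  refine map_isometryMatrix_smul
    (f' := ((reflectionIsometry hc').toLinearEquiv : (J → S) →ₗ[S] J → S)) (fun v ↦ ?_) v
  ext i
  simp [reflectionIsometry_apply, polar_intForm_comp]

theorem isometryMatrix_mem (f : (intForm U R).IsometryEquiv (intForm U R)) :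
    isometryMatrix f ∈ isometryGroup U R := fun v ↦ by
  rw [isometryMatrix_smul, f.map_app]

/-- An element of `isometryGroup` as an isometry. -/
def isometryEquivOfMem {g : GL J R} (hg : g ∈ isometryGroup U R) :
    (intForm U R).IsometryEquiv (intForm U R) where
  toLinearEquiv := DistribMulAction.toLinearEquiv R (J → R) g
  map_app' := hg

/-- `w` lies in the orbit of `v` under the image in `GL J S` of a subgroup `H` of `GL J R`. -/
def OrbitRel (φ : R →+* S) (H : Subgroup (GL J R)) (v w : J → S) : Prop :=
  ∃ g ∈ H, GeneralLinearGroup.map φ g • v = w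

namespace OrbitRel

variable {φ : R →+* S} {H : Subgroup (GL J R)} {u v w : J → S}

theorem refl (φ : R →+* S) (H : Subgroup (GL J R)) (v : J → S) : OrbitRel φ H v v :=
  ⟨1, one_mem _, by rw [map_one, one_smul]⟩

theorem symm : OrbitRel φ H v w → OrbitRel φ H w v := by
  rintro ⟨g, hg, rfl⟩
  exact ⟨g⁻¹, inv_mem hg, by rw [map_inv, inv_smul_smul]⟩

theorem trans : OrbitRel φ H u v → OrbitRel φ H v w → OrbitRel φ H u w := by
  rintro ⟨g, hg, rfl⟩ ⟨h, hh, rfl⟩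
  exact ⟨h * g, mul_mem hh hg, by rw [map_mul, mul_smul]⟩

theorem mono {H' : Subgroup (GL J R)} (hH : H ≤ H') : OrbitRel φ H v w → OrbitRel φ H' v w :=
  fun ⟨g, hg, h⟩ ↦ ⟨g, hH hg, h⟩

theorem comp (ψ : S →+* T) : OrbitRel φ H v w → OrbitRel (ψ.comp φ) H (ψ ∘ v) (ψ ∘ w) := by
  rintro ⟨g, hg, rfl⟩
  exact ⟨g, hg, map_smul_comp ψ (GeneralLinearGroup.map φ g) v⟩

theorem of_comp {ψ : S →+* T} {v w : J → T} :
    OrbitRel (ψ.comp φ) (isometryGroup U R) v w → OrbitRel ψ (isometryGroup U S) v w := by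
  rintro ⟨g, hg, rfl⟩
  exact ⟨GeneralLinearGroup.map φ g, map_mem_isometryGroup φ hg, rfl⟩

theorem map (φ : R →+* S) {v w : J → R} (h : OrbitRel (RingHom.id R) (isometryGroup U R) v w) :
    OrbitRel (RingHom.id S) (isometryGroup U S) (φ ∘ v) (φ ∘ w) :=
  of_comp (h.comp φ)

theorem intForm_eq (h : OrbitRel φ (isometryGroup U R) v w) : intForm U S w = intForm U S v := by
  obtain ⟨g, hg, rfl⟩ := h
  exact map_mem_isometryGroup φ hg v

end OrbitRel

end IntForm

/-! ### The split form -/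

section SplitForm

open QuadraticMap

variable {ι κ : Type*} [DecidableEq ι] [DecidableEq κ] {R S : Type*} [CommRing R] [CommRing S]

variable (ι κ) in
/-- The matrix of the quadratic form `∑ i, x i * y i + ∑ k, z k ^ 2`, where `x`, `y` and `z` are
the coordinates indexed by the three summands of `(ι ⊕ ι) ⊕ κ`. -/
def splitMatrix : Matrix ((ι ⊕ ι) ⊕ κ) ((ι ⊕ ι) ⊕ κ) ℤ :=
  fromBlocks (fromBlocks 0 1 0 0) 0 0 1

variable (κ R) in
/-- The basis vectors of the hyperbolic part of the split form; `hyp κ R a` and `hyp κ R a.swap`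
form a hyperbolic pair. -/
abbrev hyp (a : ι ⊕ ι) : (ι ⊕ ι) ⊕ κ → R := Pi.single (Sum.inl a) 1

theorem comp_hyp (φ : R →+* S) (a : ι ⊕ ι) : φ ∘ hyp κ R a = hyp κ S a :=
  comp_single_one φ _

variable [Fintype ι] [Fintype κ]

variable (ι κ) in
/-- The quadratic form `∑ i, x i * y i + ∑ k, z k ^ 2` over `R`. -/
abbrev splitForm (R : Type*) [CommRing R] : QuadraticForm R ((ι ⊕ ι) ⊕ κ → R) :=
  intForm (splitMatrix ι κ) R

theorem splitForm_apply (v : (ι ⊕ ι) ⊕ κ → R) : splitForm ι κ R v =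
    ∑ i, v (.inl (.inl i)) * v (.inl (.inr i)) + ∑ k, v (.inr k) ^ 2 := by
  simp [intForm_apply, splitMatrix, dotProduct, mulVec, Fintype.sum_sum_type, one_apply, pow_two]

theorem polar_splitForm (v w : (ι ⊕ ι) ⊕ κ → R) : polar (splitForm ι κ R) v w =
    ∑ a, v (.inl a) * w (.inl a.swap) + 2 * ∑ k, v (.inr k) * w (.inr k) := by
  have hswap (i : ι) :
      v (.inl (.inr i)) * w (.inl (.inl i)) = w (.inl (.inl i)) * v (.inl (.inr i)) :=
    mul_comm _ _
  simp only [polar, splitForm_apply, Pi.add_apply, Fintype.sum_sum_type, Sum.swap_inl,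
    Sum.swap_inr, Finset.mul_sum, add_mul, mul_add, add_sq, Finset.sum_add_distrib, mul_assoc,
    hswap]
  ring

@[simp]
theorem polar_splitForm_hyp (v : (ι ⊕ ι) ⊕ κ → R) (a : ι ⊕ ι) :
    polar (splitForm ι κ R) v (hyp κ R a) = v (.inl a.swap) := by
  rw [polar_splitForm, Fintype.sum_eq_single a.swap]
  · simp
  · intro b hb
    have : b.swap ≠ a := fun h ↦ hb (by rw [← h, Sum.swap_swap])
    simp [this]

@[simp]
theorem splitForm_hyp (a : ι ⊕ ι) : splitForm ι κ R (hyp κ R a) = 0 := by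
  rw [splitForm_apply]
  cases a <;> simp [Pi.single_apply]

theorem polar_splitForm_single_inr (v : (ι ⊕ ι) ⊕ κ → R) (k : κ) :
    polar (splitForm ι κ R) v (Pi.single (.inr k) 1) = 2 * v (.inr k) := by
  simp [polar_splitForm, Pi.single_apply]

theorem splitForm_single_inr (k : κ) : splitForm ι κ R (Pi.single (.inr k) 1) = 1 := by
  simp [splitForm_apply, Pi.single_apply]

theorem eichlerTransvection_hyp_apply_of_ne {a : ι ⊕ ι} {j : (ι ⊕ ι) ⊕ κ} (hj : j ≠ .inl a)
    (w v : (ι ⊕ ι) ⊕ κ → R) :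
    eichlerTransvection (splitForm ι κ R) (hyp κ R a) w v j = v j + v (.inl a.swap) * w j := by
  simp [eichlerTransvection_apply, hj]

theorem eichlerTransvection_hyp_apply_self (a : ι ⊕ ι) (w v : (ι ⊕ ι) ⊕ κ → R) :
    eichlerTransvection (splitForm ι κ R) (hyp κ R a) w v (.inl a) =
      v (.inl a) + v (.inl a.swap) * w (.inl a)
        - (polar (splitForm ι κ R) v w + splitForm ι κ R w * v (.inl a.swap)) := by
  simp [eichlerTransvection_apply]

/-! ### Isometries fixing hyperbolic basis vectors -/

variable (κ) in
/-- The isometries of the split form which fix the hyperbolic basis vectors indexed by `s`. -/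
def fixingIsometryGroup (s : Set (ι ⊕ ι)) (R : Type*) [CommRing R] :
    Subgroup (GL ((ι ⊕ ι) ⊕ κ) R) :=
  isometryGroup (splitMatrix ι κ) R ⊓ fixingSubgroup (GL ((ι ⊕ ι) ⊕ κ) R) (hyp κ R '' s)

variable {s : Set (ι ⊕ ι)}

theorem mem_fixingIsometryGroup {g : GL ((ι ⊕ ι) ⊕ κ) R} :
    g ∈ fixingIsometryGroup κ s R ↔
      g ∈ isometryGroup (splitMatrix ι κ) R ∧ ∀ a ∈ s, g • hyp κ R a = hyp κ R a := by
  rw [fixingIsometryGroup, Subgroup.mem_inf, mem_fixingSubgroup_iff, Set.forall_mem_image]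

theorem map_mem_fixingIsometryGroup (φ : R →+* S) {g : GL ((ι ⊕ ι) ⊕ κ) R}
    (hg : g ∈ fixingIsometryGroup κ s R) :
    GeneralLinearGroup.map φ g ∈ fixingIsometryGroup κ s S := by
  rw [mem_fixingIsometryGroup] at hg ⊢
  refine ⟨map_mem_isometryGroup φ hg.1, fun a ha ↦ ?_⟩
  rw [← comp_hyp φ, map_smul_comp, hg.2 a ha]

theorem isometryMatrix_mem_fixingIsometryGroup
    {f : (splitForm ι κ R).IsometryEquiv (splitForm ι κ R)}
    (hf : ∀ a ∈ s, f (hyp κ R a) = hyp κ R a) : isometryMatrix f ∈ fixingIsometryGroup κ s R :=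
  mem_fixingIsometryGroup.2
    ⟨isometryMatrix_mem f, fun a ha ↦ by rw [isometryMatrix_smul, hf a ha]⟩

variable {φ : R →+* S} {a : ι ⊕ ι} {v w : (ι ⊕ ι) ⊕ κ → S}

theorem orbitRel_eichlerTransvection (hφ : Function.Surjective φ) (ha : a.swap ∉ s)
    (hwa : w (.inl a.swap) = 0) (hws : ∀ b ∈ s, w (.inl b.swap) = 0) :
    OrbitRel φ (fixingIsometryGroup κ s R) v
      (eichlerTransvection (splitForm ι κ S) (hyp κ S a) w v) := by
  classical
  choose f hf using hφ
  let w' (j) : R := if w j = 0 then 0 else f (w j)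
  have hw' : φ ∘ w' = w := by
    ext j
    by_cases h : w j = 0 <;> simp [w', h, hf]
  have hw'a : polar (splitForm ι κ R) w' (hyp κ R a) = 0 := by simp [w', hwa]
  refine ⟨isometryMatrix (eichlerIsometry (splitForm_hyp a) hw'a),
    isometryMatrix_mem_fixingIsometryGroup fun b hb ↦ ?_, map_isometryMatrix_smul (fun v ↦ ?_) v⟩
  · have hba : a ≠ b.swap := fun h ↦ ha (by rwa [h, Sum.swap_swap])
    have hw'b : w' (.inl b.swap) = 0 := if_pos (hws b hb)
    have hpolar : polar (splitForm ι κ R) (hyp κ R b) w' = 0 := by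
      rw [polar_comm, polar_splitForm_hyp, hw'b]
    have hpolar' : polar (splitForm ι κ R) (hyp κ R b) (hyp κ R a) = 0 := by
      rw [polar_comm, polar_splitForm_hyp]
      exact Pi.single_eq_of_ne (Sum.inl_injective.ne hba.symm) 1
    simp [eichlerTransvection_apply, hpolar, hpolar']
  · rw [eichlerIsometry_apply, ← comp_hyp φ, ← hw']
    exact eichlerTransvection_comp _ φ _ w' v

theorem orbitRel_hyp_of_apply_eq_one (hφ : Function.Surjective φ) (ha : a ∉ s)
    (hv : splitForm ι κ S v = 0) (hva : v (.inl a) = 1)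
    (hvs : ∀ b ∈ s, v (.inl b.swap) = hyp κ S a (.inl b.swap)) :
    OrbitRel φ (fixingIsometryGroup κ s R) v (hyp κ S a) := by
  have hpolar : polar (splitForm ι κ S) v (hyp κ S a.swap) = 1 := by simp [hva]
  have hpair : polar (splitForm ι κ S) (hyp κ S a) (hyp κ S a.swap) = 1 := by simp
  have hrel : OrbitRel φ (fixingIsometryGroup κ s R) v
      (eichlerTransvection (splitForm ι κ S) (hyp κ S a.swap)
        (hyperbolicComplement (splitForm ι κ S) (hyp κ S a) (hyp κ S a.swap) v) v) := by
    refine orbitRel_eichlerTransvection hφ (by simpa) ?_ fun b hb ↦ ?_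
    · simpa only [polar_splitForm_hyp] using
        polar_hyperbolicComplement_right (splitForm_hyp _) hpair hpolar
    · have hba : b.swap ≠ a.swap := fun h ↦ ha (Sum.swap_leftInverse.injective h ▸ hb)
      simp [hyperbolicComplement, hvs b hb, hba]
  rwa [eichlerTransvection_hyperbolicComplement (splitForm_hyp a) (splitForm_hyp a.swap) hpair hv
    hpolar] at hrel

end SplitForm

/-! ### Transitivity on unimodular isotropic vectors -/

section Transitivity

open QuadraticMap

variable {ι κ R S : Type*} [CommRing R] [CommRing S]

/-- The hyperbolic coordinates of `v` indexed by `s` generate the unit ideal. -/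
def UnimodularOn (s : Set (ι ⊕ ι)) (v : (ι ⊕ ι) ⊕ κ → R) : Prop :=
  Ideal.span ((v ∘ Sum.inl) '' s) = ⊤

theorem unimodularOn_iff_forall_isPrime {s : Set (ι ⊕ ι)} {v : (ι ⊕ ι) ⊕ κ → R} :
    UnimodularOn s v ↔ ∀ P : Ideal R, P.IsPrime → ¬ ∀ a ∈ s, v (.inl a) ∈ P := by
  constructor
  · intro h P hP hs
    exact hP.ne_top (top_le_iff.1 (h ▸ Ideal.span_le.2 (Set.forall_mem_image.2 hs)))
  · intro h
    by_contra hne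
    obtain ⟨P, hP, hle⟩ := Ideal.exists_le_maximal _ hne
    exact h P hP.isPrime fun a ha ↦ hle (Ideal.subset_span ⟨a, ha, rfl⟩)

theorem UnimodularOn.comp {s : Set (ι ⊕ ι)} {v : (ι ⊕ ι) ⊕ κ → R} (h : UnimodularOn s v)
    (φ : R →+* S) : UnimodularOn s (φ ∘ v) := by
  have hmap := congrArg (Ideal.map φ) h
  rwa [Ideal.map_span, Ideal.map_top, ← Set.image_comp, ← Function.comp_assoc] at hmap

variable [Fintype ι]

theorem UnimodularOn.exists_sum_eq_one {s : Set (ι ⊕ ι)} {v : (ι ⊕ ι) ⊕ κ → R}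
    (h : UnimodularOn s v) :
    ∃ c : ι ⊕ ι → R, (∀ a ∉ s, c a = 0) ∧ ∑ a, c a * v (.inl a) = 1 := by
  have h1 : (1 : R) ∈ Ideal.span ((v ∘ Sum.inl) '' s) := h ▸ Submodule.mem_top
  obtain ⟨c, hc, hc1⟩ := (Finsupp.mem_span_image_iff_linearCombination R).1 h1
  refine ⟨c, fun a ha ↦ Finsupp.notMem_support_iff.1 fun h ↦ ha (hc h), ?_⟩
  rw [← hc1, Finsupp.linearCombination_apply, Finsupp.sum_fintype _ _ (by simp)]
  rfl

theorem exists_forall_isPrime_mem_of_ne (hdim : ringKrullDim S + 1 < Fintype.card ι) (o : ι)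
    (a : ι → S) (b : S) : ∃ c : ι → S, c o = 0 ∧
      ∀ P : Ideal S, P.IsPrime → (∀ i ≠ o, a i + c i * b ∈ P) → b ∈ P := by
  classical
  have hcard : Fintype.card {i // i ≠ o} + 1 = Fintype.card ι := by
    rw [← Fintype.card_option]
    exact Fintype.card_congr (Equiv.optionSubtypeNe o)
  have hdim' : ringKrullDim S < Fintype.card {i // i ≠ o} := by
    rw [← hcard] at hdim
    push_cast at hdim
    contrapose! hdim
    gcongr
  obtain ⟨c, hc⟩ := exists_forall_isPrime_mem hdim' (fun i ↦ a i) b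
  refine ⟨fun i ↦ if h : i ≠ o then c ⟨i, h⟩ else 0, by simp, fun P hP h ↦ hc P hP ?_⟩
  rintro ⟨i, hi⟩
  simpa [hi] using h i hi

variable [DecidableEq ι] [Fintype κ] [DecidableEq κ]

theorem polar_splitForm_elim_left (v : (ι ⊕ ι) ⊕ κ → S) (d : ι → S) :
    polar (splitForm ι κ S) v (Sum.elim (Sum.elim d 0) 0) = ∑ i, d i * v (.inl (.inr i)) := by
  simp [polar_splitForm, mul_comm]

theorem polar_splitForm_elim_right (v : (ι ⊕ ι) ⊕ κ → S) (d : ι → S) :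
    polar (splitForm ι κ S) v (Sum.elim (Sum.elim 0 d) 0) = ∑ i, d i * v (.inl (.inl i)) := by
  simp [polar_splitForm, mul_comm]

variable {φ : R →+* S} {v : (ι ⊕ ι) ⊕ κ → S} {o : ι}

theorem exists_orbitRel_unimodularOn_of_insert (hφ : Function.Surjective φ)
    (hdim : ringKrullDim S + 1 < Fintype.card ι) {s : Set (ι ⊕ ι)} (hs : ∀ i ≠ o, .inl i ∈ s)
    (hso : .inl o ∈ s → ∀ i ≠ o, .inr i ∈ s) (hv : UnimodularOn (insert (.inr o) s) v) :
    ∃ v', OrbitRel φ (isometryGroup (splitMatrix ι κ) R) v v' ∧ UnimodularOn s v' := by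
  obtain ⟨d, hdo, hd⟩ := exists_forall_isPrime_mem_of_ne hdim o (fun i ↦ v (.inl (.inl i)))
    (v (.inl (.inr o)))
  let w : (ι ⊕ ι) ⊕ κ → S := Sum.elim (Sum.elim d 0) 0
  let v' := eichlerTransvection (splitForm ι κ S) (hyp κ S (.inl o)) w v
  have hx (i) (hi : i ≠ o) : v' (.inl (.inl i)) = v (.inl (.inl i)) + d i * v (.inl (.inr o)) := by
    rw [mul_comm]
    exact eichlerTransvection_hyp_apply_of_ne (by simpa) _ _
  have hy (i) : v' (.inl (.inr i)) = v (.inl (.inr i)) := by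
    simp [v', w, eichlerTransvection_hyp_apply_of_ne]
  have hxo : v' (.inl (.inl o)) = v (.inl (.inl o)) - ∑ i, d i * v (.inl (.inr i)) := by
    simp [v', w, eichlerTransvection_hyp_apply_self, hdo, polar_splitForm_elim_left,
      splitForm_apply]
  refine ⟨v', (orbitRel_eichlerTransvection (s := ∅) hφ (by simp) rfl (by simp)).mono inf_le_left,
    unimodularOn_iff_forall_isPrime.2 fun P hP hP' ↦ ?_⟩
  have hb : v (.inl (.inr o)) ∈ P := hd P hP fun i hi ↦ hx i hi ▸ hP' _ (hs i hi)
  refine unimodularOn_iff_forall_isPrime.1 hv P hP ?_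
  rintro a (rfl | ha)
  · exact hb
  · obtain i | i := a
    · obtain rfl | hi := eq_or_ne i o
      · have hsum : ∑ j, d j * v (.inl (.inr j)) ∈ P := P.sum_mem fun j _ ↦ P.mul_mem_left _ <| by
          obtain rfl | hj := eq_or_ne j i
          · exact hb
          · exact hy j ▸ hP' _ (hso ha j hj)
        exact (P.sub_mem_iff_left hsum).1 (hxo ▸ hP' _ ha)
      · exact (P.add_mem_iff_left (P.mul_mem_left _ hb)).1 (hx i hi ▸ hP' _ ha)
    · exact hy i ▸ hP' _ ha

theorem exists_orbitRel_unimodularOn_insert (hφ : Function.Surjective φ)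
    (hdim : ringKrullDim S + 1 < Fintype.card ι) (hv : UnimodularOn {.inr o}ᶜ v) :
    ∃ v', OrbitRel φ (isometryGroup (splitMatrix ι κ) R) v v' ∧
      UnimodularOn (insert (.inr o) (Sum.inl '' {o}ᶜ)) v' := by
  obtain ⟨c, hc, hc1⟩ := hv.exists_sum_eq_one
  obtain ⟨d, hdo, hd⟩ := exists_forall_isPrime_mem_of_ne hdim o
    (fun i ↦ v (.inl (.inl i)) + (v (.inl (.inr o)) - 1) * c (.inr i) * v (.inl (.inl o)))
    (v (.inl (.inl o)) ^ 2)
  let d' (i : ι) : S := (v (.inl (.inr o)) - 1) * c (.inr i) + d i * v (.inl (.inl o))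
  have hd'o : d' o = 0 := by simp [d', hdo, hc]
  let w : (ι ⊕ ι) ⊕ κ → S := Sum.elim (Sum.elim d' 0) 0
  let v' := eichlerTransvection (splitForm ι κ S) (hyp κ S (.inr o)) w v
  have hx (i) : v' (.inl (.inl i)) = v (.inl (.inl i)) + d' i * v (.inl (.inl o)) := by
    rw [mul_comm]
    exact eichlerTransvection_hyp_apply_of_ne (by simp) _ _
  have hyo : v' (.inl (.inr o)) = 1 - v (.inl (.inl o)) * ∑ i, d i * v (.inl (.inr i))
      + (v (.inl (.inr o)) - 1) * ∑ i, c (.inl i) * v (.inl (.inl i)) := by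
    have hsum : ∑ i, d' i * v (.inl (.inr i)) =
        (v (.inl (.inr o)) - 1) * ∑ i, c (.inr i) * v (.inl (.inr i)) +
          v (.inl (.inl o)) * ∑ i, d i * v (.inl (.inr i)) := by
      simp only [d', Finset.mul_sum, ← Finset.sum_add_distrib]
      exact Finset.sum_congr rfl fun i _ ↦ by ring
    have hv' : v' (.inl (.inr o)) = v (.inl (.inr o)) - ∑ i, d' i * v (.inl (.inr i)) := by
      simp [v', w, eichlerTransvection_hyp_apply_self, polar_splitForm_elim_left, splitForm_apply]
    rw [Fintype.sum_sum_type] at hc1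
    rw [hv', hsum]
    linear_combination (1 - v (.inl (.inr o))) * hc1
  refine ⟨v', (orbitRel_eichlerTransvection (s := ∅) hφ (by simp) hd'o (by simp)).mono inf_le_left,
    unimodularOn_iff_forall_isPrime.2 fun P hP hP' ↦ hP.one_notMem ?_⟩
  have hx' (i) (hi : i ≠ o) : v' (.inl (.inl i)) ∈ P := hP' _ (.inr ⟨i, hi, rfl⟩)
  have ho : v (.inl (.inl o)) ∈ P := hP.mem_of_pow_mem 2 <| hd P hP fun i hi ↦ by
    convert hx' i hi using 1
    simp only [hx, d']
    ring
  have hxv (i) : v (.inl (.inl i)) ∈ P := by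
    obtain rfl | hi := eq_or_ne i o
    · exact ho
    · exact (P.add_mem_iff_left (P.mul_mem_left _ ho)).1 (hx i ▸ hx' i hi)
  have h1 := hP' (.inr o) (.inl rfl)
  rw [hyo] at h1
  exact (P.sub_mem_iff_left (P.mul_mem_right _ ho)).1 <| (P.add_mem_iff_left <|
    P.mul_mem_left _ <| P.sum_mem fun i _ ↦ P.mul_mem_left _ (hxv i)).1 h1

theorem orbitRel_hyp_of_unimodularOn_compl (hφ : Function.Surjective φ)
    (hQ : splitForm ι κ S v = 0) (hv : UnimodularOn (Sum.inl '' {o}ᶜ) v) :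
    OrbitRel φ (isometryGroup (splitMatrix ι κ) R) v (hyp κ S (.inl o)) := by
  obtain ⟨c, hc, hc1⟩ := hv.exists_sum_eq_one
  let d (i : ι) : S := (v (.inl (.inl o)) - 1) * c (.inl i)
  let w : (ι ⊕ ι) ⊕ κ → S := Sum.elim (Sum.elim 0 d) 0
  let v' := eichlerTransvection (splitForm ι κ S) (hyp κ S (.inl o)) w v
  have hdo : d o = 0 := by simp [d, hc]
  have hrel : OrbitRel φ (isometryGroup (splitMatrix ι κ) R) v v' :=
    (orbitRel_eichlerTransvection (s := ∅) hφ (by simp) hdo (by simp)).mono inf_le_left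
  have hv'o : v' (.inl (.inl o)) = 1 := by
    have hcr (i) : c (.inr i) = 0 := hc _ (by simp)
    have hsum : ∑ i, d i * v (.inl (.inl i)) = v (.inl (.inl o)) - 1 := by
      simp only [d, mul_assoc, ← Finset.mul_sum]
      simp only [Fintype.sum_sum_type, hcr, zero_mul, Finset.sum_const_zero, add_zero] at hc1
      rw [hc1, mul_one]
    simp [v', w, eichlerTransvection_hyp_apply_self, polar_splitForm_elim_right, splitForm_apply,
      hsum]
  exact hrel.trans <| (orbitRel_hyp_of_apply_eq_one (s := ∅) hφ (by simp)
    (hrel.intForm_eq.trans hQ) hv'o (by simp)).mono inf_le_left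

theorem orbitRel_hyp_of_unimodularOn_univ (hφ : Function.Surjective φ)
    (hdim : ringKrullDim S + 1 < Fintype.card ι) (hQ : splitForm ι κ S v = 0)
    (hv : UnimodularOn Set.univ v) (o : ι) :
    OrbitRel φ (isometryGroup (splitMatrix ι κ) R) v (hyp κ S (.inl o)) := by
  have huniv : insert (.inr o) {.inr o}ᶜ = (Set.univ : Set (ι ⊕ ι)) := by simp [Set.insert_eq]
  obtain ⟨v₁, hrel₁, hv₁⟩ := exists_orbitRel_unimodularOn_of_insert (o := o) (s := {.inr o}ᶜ) hφ
    hdim (by simp) (fun _ i hi ↦ by simpa) (huniv ▸ hv)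
  obtain ⟨v₂, hrel₂, hv₂⟩ := exists_orbitRel_unimodularOn_insert hφ hdim hv₁
  obtain ⟨v₃, hrel₃, hv₃⟩ := exists_orbitRel_unimodularOn_of_insert hφ hdim (by simp) (by simp) hv₂
  have hrel := (hrel₁.trans hrel₂).trans hrel₃
  exact hrel.trans (orbitRel_hyp_of_unimodularOn_compl hφ (hrel.intForm_eq.trans hQ) hv₃)

end Transitivity

/-! ### Lifting isometries from a field -/

section Lifting

open QuadraticMap

variable {ι κ R F : Type*} [Fintype ι] [DecidableEq ι] [Fintype κ] [DecidableEq κ] [CommRing R]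

theorem smul_apply_swap_of_mem [CommRing F] {s : Set (ι ⊕ ι)} {g : GL ((ι ⊕ ι) ⊕ κ) F}
    (hg : g ∈ fixingIsometryGroup κ s F) {a : ι ⊕ ι} (ha : a ∈ s) (v : (ι ⊕ ι) ⊕ κ → F) :
    (g • v) (.inl a.swap) = v (.inl a.swap) := by
  rw [mem_fixingIsometryGroup] at hg
  rw [← polar_splitForm_hyp (g • v), ← hg.2 a ha, polar_smul_smul hg.1, polar_splitForm_hyp]

theorem generalLinearGroup_ext_smul_single {J : Type*} [Fintype J] [DecidableEq J] [CommRing F]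
    {g h : GL J F} (H : ∀ j, g • (Pi.single j 1 : J → F) = h • (Pi.single j 1 : J → F)) : g = h :=
  Units.ext (Matrix.ext_of_mulVec_single H)

-- This is the reflection in `hyp κ F a - π u • hyp κ F a.swap`.
theorem orbitRel_sub_smul [CommRing F] {π : R →+* F} {s : Set (ι ⊕ ι)} {a : ι ⊕ ι} (ha : a ∉ s)
    (ha' : a.swap ∉ s) (u : Rˣ) (v : (ι ⊕ ι) ⊕ κ → F) :
    OrbitRel π (fixingIsometryGroup κ s R) v (v - (v (.inl a) - π ↑u⁻¹ * v (.inl a.swap)) •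
      (hyp κ F a - π u • hyp κ F a.swap)) := by
  let e : (ι ⊕ ι) ⊕ κ → R := hyp κ R a - (u : R) • hyp κ R a.swap
  have hQ : -(↑u⁻¹ : R) * splitForm ι κ R e = 1 := by
    simp only [e, sub_eq_add_neg, ← neg_smul, QuadraticMap.map_add (splitForm ι κ R),
      QuadraticMap.map_smul, polar_smul_right, polar_splitForm_hyp, splitForm_hyp]
    simp
  refine ⟨isometryMatrix (reflectionIsometry hQ),
    isometryMatrix_mem_fixingIsometryGroup fun b hb ↦ ?_, ?_⟩
  · have hba : a ≠ b := fun h ↦ ha (h ▸ hb)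
    have hba' : a.swap ≠ b := fun h ↦ ha' (h ▸ hb)
    simp only [reflectionIsometry_apply, e, sub_eq_add_neg, ← neg_smul, polar_add_right,
      polar_smul_right, polar_splitForm_hyp]
    simp [hba, hba']
  · have he : π ∘ e = hyp κ F a - π u • hyp κ F a.swap := by
      rw [← comp_hyp π, ← comp_hyp π]
      ext
      simp [e]
    have huinv : π ↑u⁻¹ * π u = 1 := by rw [← map_mul, Units.inv_mul, map_one]
    rw [map_isometryMatrix_reflectionIsometry_smul, he]
    congr 2
    rw [sub_eq_add_neg, ← neg_smul, polar_add_right, polar_smul_right, polar_splitForm_hyp,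
      polar_splitForm_hyp, Sum.swap_swap, map_neg, smul_eq_mul]
    linear_combination v (.inl a) * huinv

variable [Field F] {π : R →+* F} {s : Set (ι ⊕ ι)} {a c : ι ⊕ ι} {v : (ι ⊕ ι) ⊕ κ → F}

theorem surjective_of_forall_ne_zero_exists_units (hπ : ∀ x : F, x ≠ 0 → ∃ y : Rˣ, π y = x) :
    Function.Surjective π := fun x ↦ by
  obtain rfl | hx := eq_or_ne x 0
  · exact ⟨0, map_zero π⟩
  · exact (hπ x hx).imp' _ fun _ ↦ id

theorem orbitRel_hyp_of_apply_swap_ne_zero (hπ : ∀ x : F, x ≠ 0 → ∃ y : Rˣ, π y = x)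
    (hs : ∀ b ∈ s, b.swap ∈ s) (ha : a ∉ s) (hv : splitForm ι κ F v = 0)
    (hvs : ∀ b ∈ s, v (.inl b) = 0) (hva : v (.inl a.swap) ≠ 0) :
    OrbitRel π (fixingIsometryGroup κ s R) v (hyp κ F a) := by
  obtain ⟨u, hu⟩ := hπ _ hva
  have ha' : a.swap ∉ s := fun h ↦ ha (Sum.swap_swap a ▸ hs _ h)
  have hrel := orbitRel_sub_smul (π := π) ha ha' u v
  refine hrel.trans (orbitRel_hyp_of_apply_eq_one (surjective_of_forall_ne_zero_exists_units hπ)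
    ha ((hrel.mono inf_le_left).intForm_eq.trans hv) ?_ fun b hb ↦ ?_)
  · have hswap : a ≠ a.swap := by cases a <;> simp
    simp [hu, hva, hswap]
  · have hba : b.swap ≠ a := fun h ↦ ha (h ▸ hs b hb)
    have hba' : b.swap ≠ a.swap := fun h ↦ ha' (h ▸ hs b hb)
    simp [hvs _ (hs b hb), hba, hba']

theorem orbitRel_hyp_hyp (hπ : ∀ x : F, x ≠ 0 → ∃ y : Rˣ, π y = x)
    (hs : ∀ b ∈ s, b.swap ∈ s) (ha : a ∉ s) (hc : c ∉ s) :
    OrbitRel π (fixingIsometryGroup κ s R) (hyp κ F c) (hyp κ F a) := by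
  have hsurj := surjective_of_forall_ne_zero_exists_units hπ
  have hne (b) (hb : b ∈ s) : b.swap ≠ a ∧ b.swap ≠ c :=
    ⟨fun h ↦ ha (h ▸ hs b hb), fun h ↦ hc (h ▸ hs b hb)⟩
  obtain rfl | hca := eq_or_ne c a
  · exact .refl _ _ _
  obtain rfl | hca' := eq_or_ne c a.swap
  · refine orbitRel_hyp_of_apply_swap_ne_zero hπ hs ha (splitForm_hyp _) (fun b hb ↦ ?_) (by simp)
    exact Pi.single_eq_of_ne (Sum.inl_injective.ne fun h : b = a.swap ↦ hc (h ▸ hb)) 1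
  have hrel : OrbitRel π (fixingIsometryGroup κ s R) (hyp κ F c)
      (eichlerTransvection (splitForm ι κ F) (hyp κ F c.swap) (hyp κ F a) (hyp κ F c)) :=
    orbitRel_eichlerTransvection hsurj (by simpa) (by simpa [Pi.single_apply] using hca)
      fun b hb ↦ by simpa [Pi.single_apply] using (hne b hb).1
  refine hrel.trans (orbitRel_hyp_of_apply_eq_one hsurj ha ?_ ?_ fun b hb ↦ ?_)
  · exact (hrel.mono inf_le_left).intForm_eq.trans (splitForm_hyp _)
  · simp [eichlerTransvection_apply, hca', hca.symm]
  · have hbc : b.swap ≠ c.swap := fun h ↦ hc (Sum.swap_leftInverse.injective h ▸ hb)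
    simp [eichlerTransvection_hyp_apply_of_ne, hne b hb, hbc]

theorem orbitRel_hyp_of_ne_zero [Subsingleton κ] (hπ : ∀ x : F, x ≠ 0 → ∃ y : Rˣ, π y = x)
    (hs : ∀ b ∈ s, b.swap ∈ s) (ha : a ∉ s) (hv : splitForm ι κ F v = 0)
    (hvs : ∀ b ∈ s, v (.inl b) = 0) (hv0 : v ≠ 0) :
    OrbitRel π (fixingIsometryGroup κ s R) v (hyp κ F a) := by
  obtain ⟨c, hc⟩ : ∃ c, v (.inl c) ≠ 0 := by
    contrapose! hv0
    rw [splitForm_apply] at hv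
    ext (c | k)
    · exact hv0 c
    · simpa [hv0, Fintype.sum_subsingleton _ k] using hv
  have hcs : c ∉ s := fun h ↦ hc (hvs c h)
  have hcs' : c.swap ∉ s := fun h ↦ hcs (Sum.swap_swap c ▸ hs _ h)
  exact (orbitRel_hyp_of_apply_swap_ne_zero hπ hs hcs' hv hvs (by simpa)).trans
    (orbitRel_hyp_hyp hπ hs ha hcs')

theorem orbitRel_smul_hyp [Subsingleton κ] (hπ : ∀ x : F, x ≠ 0 → ∃ y : Rˣ, π y = x)
    (hs : ∀ b ∈ s, b.swap ∈ s) (ha : a ∉ s) {h : GL ((ι ⊕ ι) ⊕ κ) F}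
    (hh : h ∈ fixingIsometryGroup κ s F) :
    OrbitRel π (fixingIsometryGroup κ s R) (h • hyp κ F a) (hyp κ F a) := by
  refine orbitRel_hyp_of_ne_zero hπ hs ha ?_ (fun b hb ↦ ?_) ?_
  · rw [hh.1, splitForm_hyp]
  · have hba : b ≠ a := fun h ↦ ha (h ▸ hb)
    rw [← Sum.swap_swap b, smul_apply_swap_of_mem hh (hs b hb), Sum.swap_swap]
    simp [hba]
  · rw [smul_ne_zero_iff_ne]
    exact Pi.single_ne_zero_iff.2 one_ne_zero

theorem orbitRel_smul_hyp_of_swap_mem (hπ : Function.Surjective π) (ha : a ∉ s) (ha' : a.swap ∈ s)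
    {h : GL ((ι ⊕ ι) ⊕ κ) F} (hh : h ∈ fixingIsometryGroup κ s F) :
    OrbitRel π (fixingIsometryGroup κ s R) (h • hyp κ F a) (hyp κ F a) := by
  refine orbitRel_hyp_of_apply_eq_one hπ ha ?_ ?_ fun b hb ↦ smul_apply_swap_of_mem hh hb _
  · rw [hh.1, splitForm_hyp]
  · rw [← Sum.swap_swap a, smul_apply_swap_of_mem hh ha']
    exact Pi.single_eq_same _ _

theorem fixingIsometryGroup_le_map_of_insert {a : ι ⊕ ι}
    (hrel : ∀ h ∈ fixingIsometryGroup κ s F,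
      OrbitRel π (fixingIsometryGroup κ s R) (h • hyp κ F a) (hyp κ F a))
    (hle : fixingIsometryGroup κ (insert a s) F ≤
      (fixingIsometryGroup κ (insert a s) R).map (GeneralLinearGroup.map π)) :
    fixingIsometryGroup κ s F ≤ (fixingIsometryGroup κ s R).map (GeneralLinearGroup.map π) := by
  intro h hh
  obtain ⟨g, hg, hgh⟩ := hrel h hh
  have hmem := mem_fixingIsometryGroup.1 (mul_mem (map_mem_fixingIsometryGroup π hg) hh)
  obtain ⟨g', hg', hgg'⟩ := hle <| mem_fixingIsometryGroup.2
    ⟨hmem.1, Set.forall_mem_insert.2 ⟨by rw [mul_smul, hgh], hmem.2⟩⟩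
  rw [SetLike.mem_coe, mem_fixingIsometryGroup, Set.forall_mem_insert] at hg'
  exact ⟨g⁻¹ * g', mul_mem (inv_mem hg) (mem_fixingIsometryGroup.2 ⟨hg'.1, hg'.2.2⟩), by
    rw [map_mul, map_inv, hgg', inv_mul_cancel_left]⟩

theorem smul_single_inr_eq_or_eq_neg [Subsingleton κ] {h : GL ((ι ⊕ ι) ⊕ κ) F}
    (hh : h ∈ fixingIsometryGroup κ Set.univ F) (k : κ) :
    h • (Pi.single (.inr k) 1 : (ι ⊕ ι) ⊕ κ → F) = Pi.single (.inr k) 1 ∨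
      h • (Pi.single (.inr k) 1 : (ι ⊕ ι) ⊕ κ → F) = -Pi.single (.inr k) 1 := by
  let x : (ι ⊕ ι) ⊕ κ → F := Pi.single (.inr k) 1
  have hx : h • x = (h • x) (.inr k) • x := by
    ext (b | l)
    · rw [← Sum.swap_swap b, smul_apply_swap_of_mem hh trivial]
      simp [x]
    · rw [Subsingleton.elim l k]
      simp [x]
  have hc : (h • x) (.inr k) * (h • x) (.inr k) = 1 := by
    have hQ := hh.1 x
    rwa [hx, QuadraticMap.map_smul, splitForm_single_inr, smul_eq_mul, mul_one] at hQ
  rcases mul_self_eq_one_iff.1 hc with hc | hc <;> rw [hc] at hx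
  · exact .inl (hx.trans (one_smul _ _))
  · exact .inr (hx.trans (neg_one_smul _ _))

theorem fixingIsometryGroup_univ_le_map [Subsingleton κ] (π : R →+* F) :
    fixingIsometryGroup κ (Set.univ : Set (ι ⊕ ι)) F ≤
      (fixingIsometryGroup κ Set.univ R).map (GeneralLinearGroup.map π) := by
  intro h hh
  have hext (g) (hg : g ∈ fixingIsometryGroup κ (Set.univ : Set (ι ⊕ ι)) R)
      (hgh : ∀ k : κ, GeneralLinearGroup.map π g • (Pi.single (.inr k) 1 : (ι ⊕ ι) ⊕ κ → F) =
        h • Pi.single (.inr k) 1) :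
      h ∈ (fixingIsometryGroup κ Set.univ R).map (GeneralLinearGroup.map π) := by
    refine ⟨g, hg, generalLinearGroup_ext_smul_single ?_⟩
    rintro (a | k)
    · exact ((mem_fixingIsometryGroup.1 (map_mem_fixingIsometryGroup π hg)).2 a trivial).trans
        ((mem_fixingIsometryGroup.1 hh).2 a trivial).symm
    · exact hgh k
  by_cases hfix : ∀ k : κ, h • (Pi.single (.inr k) 1 : (ι ⊕ ι) ⊕ κ → F) = Pi.single (.inr k) 1
  · exact hext 1 (one_mem _) fun k ↦ by rw [map_one, one_smul, hfix]
  push Not at hfix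
  obtain ⟨k, hk⟩ := hfix
  have hQ : 1 * splitForm ι κ R (Pi.single (.inr k) 1) = 1 := by
    rw [splitForm_single_inr, one_mul]
  refine hext (isometryMatrix (reflectionIsometry hQ))
    (isometryMatrix_mem_fixingIsometryGroup fun a _ ↦ ?_) fun l ↦ ?_
  · rw [reflectionIsometry_apply, polar_splitForm_single_inr]
    simp
  · rw [Subsingleton.elim l k, (smul_single_inr_eq_or_eq_neg hh k).resolve_left hk,
      map_isometryMatrix_reflectionIsometry_smul, comp_single_one, polar_splitForm_single_inr,
      Pi.single_eq_same, map_one]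
    module

theorem fixingIsometryGroup_le_map [Subsingleton κ] (hπ : ∀ x : F, x ≠ 0 → ∃ y : Rˣ, π y = x)
    (s : Set (ι ⊕ ι)) :
    fixingIsometryGroup κ s F ≤ (fixingIsometryGroup κ s R).map (GeneralLinearGroup.map π) := by
  induction s using WellFoundedGT.induction with
  | ind s ih =>
    obtain rfl | hs := eq_or_ne s Set.univ
    · exact fixingIsometryGroup_univ_le_map π
    suffices ∃ a ∉ s, ∀ h ∈ fixingIsometryGroup κ s F,
        OrbitRel π (fixingIsometryGroup κ s R) (h • hyp κ F a) (hyp κ F a) by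
      obtain ⟨a, ha, hrel⟩ := this
      exact fixingIsometryGroup_le_map_of_insert hrel (ih _ (Set.ssubset_insert ha))
    by_cases hsymm : ∀ b ∈ s, b.swap ∈ s
    · obtain ⟨a, ha⟩ := (Set.ne_univ_iff_exists_notMem s).1 hs
      exact ⟨a, ha, fun h hh ↦ orbitRel_smul_hyp hπ hsymm ha hh⟩
    · push Not at hsymm
      obtain ⟨b, hb, hb'⟩ := hsymm
      exact ⟨b.swap, hb', fun h hh ↦ orbitRel_smul_hyp_of_swap_mem
        (surjective_of_forall_ne_zero_exists_units hπ) hb' (by rwa [Sum.swap_swap]) hh⟩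

end Lifting

/-! ### Horrocks' theorem -/

section SmulTop

variable {R A J : Type*} [CommRing R] [CommRing A] [Algebra R A] {I : Ideal R}

theorem apply_mem_map_of_mem_smul_top {y : J → A} (hy : y ∈ I • (⊤ : Submodule R (J → A)))
    (k : J) : y k ∈ I.map (algebraMap R A) := by
  have hk := Submodule.mem_map_of_mem (f := LinearMap.proj (R := R) (φ := fun _ : J ↦ A) k) hy
  rw [Submodule.map_smul''] at hk
  have := Submodule.smul_mono (le_refl I) le_top hk
  rwa [Ideal.smul_top_eq_map] at this

theorem mem_smul_top_of_forall_mem_map [Finite J] {y : J → A}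
    (hy : ∀ k, y k ∈ I.map (algebraMap R A)) : y ∈ I • (⊤ : Submodule R (J → A)) := by
  classical
  have := Fintype.ofFinite J
  have hsum : y = ∑ k, LinearMap.single R (fun _ : J ↦ A) k (y k) :=
    (LinearMap.sum_single_apply _ y).symm
  rw [hsum]
  refine Submodule.sum_mem _ fun k _ ↦ ?_
  have hk : y k ∈ I • (⊤ : Submodule R A) := by
    rw [Ideal.smul_top_eq_map]
    exact hy k
  have := Submodule.mem_map_of_mem (f := LinearMap.single R (fun _ ↦ A) k) hk
  rw [Submodule.map_smul''] at this
  exact Submodule.smul_mono le_rfl le_top this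

theorem mulVec_mem_smul_top [Fintype J] {M : Matrix J J A}
    (hM : ∀ i k, M i k ∈ I.map (algebraMap R A)) (y : J → A) :
    M *ᵥ y ∈ I • (⊤ : Submodule R (J → A)) :=
  mem_smul_top_of_forall_mem_map fun k ↦
    Ideal.sum_mem _ fun l _ ↦ Ideal.mul_mem_right _ _ (hM k l)

end SmulTop

namespace MonicLocalization

open Polynomial

variable {B : Type*} [CommRing B]

theorem algebraMap_injective :
    Function.Injective (algebraMap B[X] (MonicLocalization B)) :=
  IsLocalization.injective _ (M := monicSubmonoid B) fun _ hg ↦ Monic.mem_nonZeroDivisors hg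

/-- The `B`-subalgebra of `B(X)` consisting of the fractions `h / g` with `g` monic and
`deg h ≤ deg g`; it is the localization of `B[X⁻¹]` at `1 + X⁻¹ B[X⁻¹]`. -/
def degreeLEZero (B : Type*) [CommRing B] : Subalgebra B (MonicLocalization B) where
  carrier := {z | ∃ h g : B[X], g.Monic ∧ h.natDegree ≤ g.natDegree ∧
    z * algebraMap B[X] (MonicLocalization B) g = algebraMap B[X] (MonicLocalization B) h}
  mul_mem' := by
    rintro a b ⟨h, g, hg, hd, e⟩ ⟨h', g', hg', hd', e'⟩
    refine ⟨h * h', g * g', hg.mul hg', ?_, ?_⟩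
    · rw [hg.natDegree_mul hg']
      exact natDegree_mul_le.trans (add_le_add hd hd')
    · rw [map_mul, map_mul, ← e, ← e']; ring
  add_mem' := by
    rintro a b ⟨h, g, hg, hd, e⟩ ⟨h', g', hg', hd', e'⟩
    refine ⟨h * g' + h' * g, g * g', hg.mul hg', ?_, ?_⟩
    · rw [hg.natDegree_mul hg']
      refine natDegree_add_le_of_degree_le (natDegree_mul_le.trans (by gcongr)) ?_
      rw [add_comm]
      exact natDegree_mul_le.trans (by gcongr)
    · rw [map_add, map_mul, map_mul, map_mul, ← e, ← e']; ring
  algebraMap_mem' r := ⟨C r, 1, monic_one, by simp, by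
    rw [map_one, mul_one, IsScalarTower.algebraMap_apply B B[X], algebraMap_eq]⟩

theorem exists_eq_algebraMap_add (z : MonicLocalization B) :
    ∃ p : B[X], ∃ t ∈ degreeLEZero B, z = algebraMap B[X] (MonicLocalization B) p + t := by
  obtain ⟨p, ⟨g, hgm⟩, rfl⟩ := IsLocalization.exists_mk'_eq (monicSubmonoid B) z
  have hg : g.Monic := hgm
  refine ⟨p /ₘ g, IsLocalization.mk' _ (p %ₘ g) ⟨g, hgm⟩, ⟨p %ₘ g, g, hg,
    natDegree_modByMonic_le _ hg, IsLocalization.mk'_spec _ _ _⟩, ?_⟩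
  rw [IsLocalization.mk'_eq_iff_eq_mul, add_mul, IsLocalization.mk'_spec, ← map_mul, ← map_add,
    mul_comm, add_comm, modByMonic_add_div]

theorem eq_C_of_algebraMap_mem_degreeLEZero {p : B[X]}
    (hp : algebraMap B[X] (MonicLocalization B) p ∈ degreeLEZero B) : p = C (p.eval 0) := by
  nontriviality B
  obtain ⟨h, g, hg, hd, e⟩ := hp
  rw [← map_mul] at e
  have hpg : p * g = h := algebraMap_injective e
  have hp0 : p.natDegree = 0 := by
    by_cases hp : p = 0
    · simp [hp]
    · have hdeg := hg.natDegree_mul' hp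
      rw [mul_comm, hpg] at hdeg
      lia
  rw [eq_C_of_natDegree_eq_zero hp0, eval_C]

section Column

variable {J : Type*} [Fintype J]

/-- The `B`-linear map `p ↦ g p` from `B[X]ᴶ` to `B(X)ᴶ`, whose range is the lattice `g B[X]ᴶ`. -/
noncomputable def polynomialMulVec (g : Matrix J J (MonicLocalization B)) :
    (J → B[X]) →ₗ[B] (J → MonicLocalization B) :=
  (g.mulVecLin.restrictScalars B) ∘ₗ
    ((IsScalarTower.toAlgHom B B[X] (MonicLocalization B)).toLinearMap.compLeft J)

theorem polynomialMulVec_apply (g : Matrix J J (MonicLocalization B)) (p : J → B[X]) :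
    polynomialMulVec g p = g *ᵥ (algebraMap B[X] (MonicLocalization B) ∘ p) :=
  rfl

/-- The lattice `Tᴶ + g B[X]ᴶ` in `B(X)ᴶ`, where `T` is the ring of fractions of nonpositive
degree. Horrocks' theorem rests on the fact that it is everything when `g` is residually trivial. -/
noncomputable def sumLattice (g : Matrix J J (MonicLocalization B)) :
    Submodule B (J → MonicLocalization B) :=
  Submodule.pi Set.univ (fun _ ↦ (degreeLEZero B).toSubmodule) ⊔
    LinearMap.range (polynomialMulVec g)

theorem mulVec_mem_sumLattice (g : Matrix J J (MonicLocalization B)) (p : J → B[X]) :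
    g *ᵥ (algebraMap B[X] (MonicLocalization B) ∘ p) ∈ sumLattice g :=
  Submodule.mem_sup_right ⟨p, rfl⟩

theorem exists_sub_algebraMap_comp_mem_sumLattice (g : Matrix J J (MonicLocalization B))
    (y : J → MonicLocalization B) :
    ∃ p : J → B[X], y - algebraMap B[X] (MonicLocalization B) ∘ p ∈ sumLattice g := by
  choose p t ht hy using fun k ↦ exists_eq_algebraMap_add (y k)
  refine ⟨p, Submodule.mem_sup_left fun k _ ↦ ?_⟩
  rw [Pi.sub_apply, hy k, Function.comp_apply, add_sub_cancel_left]
  exact ht k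

variable [DecidableEq J]

theorem exists_monic_forall_smul_mem_sumLattice (g : GL J (MonicLocalization B)) :
    ∃ f : B[X], f.Monic ∧ ∀ p : J → B[X],
      algebraMap B[X] (MonicLocalization B) ∘ (f • p) ∈ sumLattice g.1 := by
  obtain ⟨⟨f, hf⟩, hfg⟩ := IsLocalization.exist_integer_multiples_of_finite (monicSubmonoid B)
    fun ij : J × J ↦ (g⁻¹).1 ij.1 ij.2
  choose G hG using hfg
  refine ⟨f, hf, fun p ↦ ?_⟩
  have hGf : (Matrix.of fun i j ↦ G (i, j)).map (algebraMap B[X] (MonicLocalization B)) =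
      algebraMap B[X] (MonicLocalization B) f • (g⁻¹).1 := by
    ext i j
    simpa [Algebra.smul_def] using hG (i, j)
  have hfp : algebraMap B[X] (MonicLocalization B) ∘ (f • p) =
      g.1 *ᵥ (algebraMap B[X] (MonicLocalization B) ∘ ((Matrix.of fun i j ↦ G (i, j)) *ᵥ p)) := by
    have hmap : algebraMap B[X] (MonicLocalization B) ∘ ((Matrix.of fun i j ↦ G (i, j)) *ᵥ p) = _ :=
      funext (RingHom.map_mulVec _ _ p)
    rw [hmap, hGf, mulVec_mulVec, Matrix.mul_smul, ← Units.val_mul, mul_inv_cancel, Units.val_one,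
      smul_mulVec, one_mulVec]
    ext k
    simp
  rw [hfp]
  exact mulVec_mem_sumLattice _ _

theorem finite_quotient_sumLattice [Nontrivial B] (g : GL J (MonicLocalization B)) :
    Module.Finite B ((J → MonicLocalization B) ⧸ sumLattice g.1) := by
  obtain ⟨f, hf, hfN⟩ := exists_monic_forall_smul_mem_sumLattice g
  have : Module.Finite B (degreeLT B f.natDegree) := .equiv (degreeLTEquiv B _).symm
  refine .of_surjective ((sumLattice g.1).mkQ ∘ₗ
    ((IsScalarTower.toAlgHom B B[X] (MonicLocalization B)).toLinearMap ∘ₗ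
      (degreeLT B f.natDegree).subtype).compLeft J) fun z ↦ ?_
  obtain ⟨y, rfl⟩ := Submodule.mkQ_surjective _ z
  obtain ⟨p, hp⟩ := exists_sub_algebraMap_comp_mem_sumLattice g.1 y
  refine ⟨fun k ↦ ⟨p k %ₘ f, mem_degreeLT.2 ?_⟩, ?_⟩
  · exact (degree_modByMonic_lt _ hf).trans_eq (degree_eq_natDegree hf.ne_zero)
  · refine ((Submodule.Quotient.eq _).2 ?_).symm
    convert add_mem hp (hfN fun k ↦ p k /ₘ f) using 1
    ext k
    change y k - algebraMap B[X] _ (p k %ₘ f) =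
      y k - algebraMap B[X] _ (p k) + algebraMap B[X] _ (f * (p k /ₘ f))
    rw [modByMonic_eq_sub_mul_div, map_sub]
    ring

open IsLocalRing

variable [IsLocalRing B]

theorem sumLattice_eq_top (g : GL J (MonicLocalization B))
    (hg : ∀ i k, (g.1 - 1) i k ∈ (maximalIdeal B).map (algebraMap B (MonicLocalization B))) :
    sumLattice g.1 = ⊤ := by
  have := finite_quotient_sumLattice g
  rw [← Submodule.Quotient.subsingleton_iff, ← Submodule.subsingleton_iff B,
    ← subsingleton_iff_bot_eq_top, eq_comm]
  refine Submodule.eq_bot_of_le_smul_of_le_jacobson_bot (maximalIdeal B) _ Module.Finite.fg_top ?_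
    (jacobson_eq_maximalIdeal ⊥ bot_ne_top).ge
  rintro z -
  obtain ⟨y, rfl⟩ := Submodule.mkQ_surjective _ z
  obtain ⟨p, hp⟩ := exists_sub_algebraMap_comp_mem_sumLattice g.1 y
  set q := algebraMap B[X] (MonicLocalization B) ∘ p
  have hyq : (sumLattice g.1).mkQ y = (sumLattice g.1).mkQ (-((g.1 - 1) *ᵥ q)) := by
    refine (Submodule.Quotient.eq _).2 ?_
    have hgq : y - -((g.1 - 1) *ᵥ q) = y - q + g.1 *ᵥ q := by
      rw [Matrix.sub_mulVec, one_mulVec]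
      abel
    rw [hgq]
    exact add_mem hp (mulVec_mem_sumLattice _ _)
  rw [hyq, ← Submodule.range_mkQ (sumLattice g.1), ← Submodule.map_top, ← Submodule.map_smul'']
  exact Submodule.mem_map_of_mem (neg_mem (mulVec_mem_smul_top hg q))

theorem exists_mulVec_single_add_mem_degreeLEZero (g : GL J (MonicLocalization B))
    (hg : ∀ i k, (g.1 - 1) i k ∈ (maximalIdeal B).map (algebraMap B (MonicLocalization B)))
    (i : J) :
    ∃ p : J → B[X], (∀ k, p k ∈ (maximalIdeal B).map C) ∧ ∀ k,
      (g.1 *ᵥ (algebraMap B[X] (MonicLocalization B) ∘ (Pi.single i 1 + p))) k ∈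
        degreeLEZero B := by
  have hmem := mulVec_mem_smul_top hg (Pi.single i 1)
  rw [← sumLattice_eq_top g hg, sumLattice, Submodule.smul_sup, LinearMap.range_eq_map,
    ← Submodule.map_smul''] at hmem
  obtain ⟨t, ht, _, ⟨p, hp, rfl⟩, htp⟩ := Submodule.mem_sup.1 hmem
  refine ⟨-p, fun k ↦ neg_mem (apply_mem_map_of_mem_smul_top hp k), fun k ↦ ?_⟩
  · have hgt : g.1 *ᵥ (algebraMap B[X] (MonicLocalization B) ∘ (Pi.single i 1 + -p)) =
        Pi.single i 1 + t := by
      have hcomp : algebraMap B[X] (MonicLocalization B) ∘ (Pi.single i 1 + -p) =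
          Pi.single i 1 - algebraMap B[X] (MonicLocalization B) ∘ p := by
        rw [← comp_single_one (algebraMap B[X] (MonicLocalization B))]
        ext k
        simp [sub_eq_add_neg]
      rw [Matrix.sub_mulVec, one_mulVec, eq_sub_iff_add_eq] at htp
      rw [hcomp, Matrix.mulVec_sub, ← polynomialMulVec_apply, ← htp]
      abel
    rw [hgt]
    refine add_mem ?_ (Submodule.smul_le_right ht k trivial)
    obtain rfl | hki := eq_or_ne k i
    · simp
    · simp [hki]

end Column

end MonicLocalization

section Isometry

variable {J R S : Type*} [Fintype J] [DecidableEq J] [CommRing R] [CommRing S] (U : Matrix J J ℤ)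

theorem mem_isometryGroup_of_forall_indicator {g : GL J R} (hg : ∀ s : Set J,
    intForm U R (g • s.indicator 1) = intForm U R (s.indicator 1)) : g ∈ isometryGroup U R := by
  suffices h : (intForm U R).comp g.1.mulVecLin = intForm U R from fun v ↦ congr($h v)
  have hsingle (i : J) : Pi.basisFun R J i = Set.indicator {i} 1 := by
    rw [Pi.basisFun_apply, Set.indicator_singleton, Pi.one_apply]
  have hQ (i : J) : intForm U R (g • Pi.basisFun R J i) = intForm U R (Pi.basisFun R J i) := by
    rw [hsingle, hg]
  refine quadraticMap_ext_basis (Pi.basisFun R J) hQ fun i j ↦ ?_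
  rcases eq_or_ne i j with rfl | hij
  · rw [QuadraticMap.polar_self, QuadraticMap.polar_self]
    exact congrArg (2 • ·) (hQ i)
  · have hadd : Pi.basisFun R J i + Pi.basisFun R J j = Set.indicator ({i} ∪ {j}) 1 := by
      rw [hsingle, hsingle, Set.indicator_union_of_disjoint (Set.disjoint_singleton.2 hij)]
      rfl
    simp only [QuadraticMap.polar, hadd, QuadraticMap.comp_apply]
    exact congr($(hg _) - $(hQ i) - $(hQ j))

theorem mem_isometryGroup_of_forall_comp (φ : R →+* S) {g : GL J S}
    (hg : ∀ y : J → R, intForm U S (g • (φ ∘ y)) = intForm U S (φ ∘ y)) :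
    g ∈ isometryGroup U S :=
  mem_isometryGroup_of_forall_indicator U fun s ↦ comp_indicator_one φ s ▸ hg _

end Isometry

section Factorization

variable {J A B L T : Type*} [Fintype J] [DecidableEq J] [CommRing A] [CommRing B] [CommRing L]
  [CommRing T] {α : A →+* L} {τ : T →+* L} {c : B →+* A} {σ : B →+* T} {e : A →+* B}

theorem isUnit_and_isUnit_of_mul_map_eq_map (hτ : Function.Injective τ)
    (hcσ : α.comp c = τ.comp σ) (hconst : ∀ p t, α p = τ t → p = c (e p)) {g : GL J L}
    {P P' : Matrix J J A} {W W' : Matrix J J T} (hPW : g.1 * P.map α = W.map τ)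
    (hPW' : (g⁻¹).1ᵀ * P'.map α = W'.map τ) (hP : IsUnit ((P'ᵀ * P).map e)) :
    IsUnit P ∧ IsUnit W := by
  have hWP : (W'ᵀ * W).map τ = (P'ᵀ * P).map α := by
    rw [Matrix.map_mul, Matrix.map_mul, transpose_map, transpose_map, ← hPW, ← hPW', transpose_mul,
      transpose_transpose, Matrix.mul_assoc, ← Matrix.mul_assoc (g⁻¹).1, ← Units.val_mul,
      inv_mul_cancel, Units.val_one, one_mul]
  have hc : P'ᵀ * P = ((P'ᵀ * P).map e).map c :=
    Matrix.ext fun i k ↦ hconst _ _ congr($hWP.symm i k)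
  have hσ : W'ᵀ * W = ((P'ᵀ * P).map e).map σ := by
    refine Matrix.map_injective hτ (hWP.trans ((congr(map $hc α)).trans ?_))
    ext i k
    exact congr($hcσ (((P'ᵀ * P).map e) i k))
  exact ⟨isUnit_of_mul_isUnit_right (hc ▸ hP.map c.mapMatrix : IsUnit (P'ᵀ * P)),
    isUnit_of_mul_isUnit_right (hσ ▸ hP.map σ.mapMatrix : IsUnit (W'ᵀ * W))⟩

theorem exists_map_eq_one_of_mul_map_eq_map (hec : e.comp c = RingHom.id B)
    (hcσ : α.comp c = τ.comp σ) {g : GL J L} {P : GL J A} {W : GL J T}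
    (hPW : g * GeneralLinearGroup.map α P = GeneralLinearGroup.map τ W) :
    ∃ (P' : GL J A) (W' : GL J T), GeneralLinearGroup.map e P' = 1 ∧
      g * GeneralLinearGroup.map α P' = GeneralLinearGroup.map τ W' := by
  set P₀ := GeneralLinearGroup.map e P with hP₀
  refine ⟨P * (GeneralLinearGroup.map c P₀)⁻¹, W * (GeneralLinearGroup.map σ P₀)⁻¹, ?_, ?_⟩
  · have he : GeneralLinearGroup.map e (GeneralLinearGroup.map c P₀) = P₀ :=
      congr(GeneralLinearGroup.map $hec P₀)
    rw [map_mul, map_inv, ← hP₀, he, mul_inv_cancel]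
  · have hα : GeneralLinearGroup.map α (GeneralLinearGroup.map c P₀) =
        GeneralLinearGroup.map τ (GeneralLinearGroup.map σ P₀) :=
      congr(GeneralLinearGroup.map $hcσ P₀)
    rw [map_mul, map_mul, map_inv, map_inv, ← mul_assoc, hPW, hα]

theorem mem_isometryGroup_of_mul_map_eq_map (hec : e.comp c = RingHom.id B)
    (hcσ : α.comp c = τ.comp σ) (hconst : ∀ p t, α p = τ t → p = c (e p)) {g : GL J L} {P : GL J A}
    {W : GL J T} (hPW : g * GeneralLinearGroup.map α P = GeneralLinearGroup.map τ W)
    (hP : GeneralLinearGroup.map e P = 1) {U : Matrix J J ℤ} (hg : g ∈ isometryGroup U L) :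
    P ∈ isometryGroup U A := by
  refine mem_isometryGroup_of_forall_comp U c fun y ↦ ?_
  have hτ : α (intForm U A (P • (c ∘ y))) = τ (intForm U T (W • (σ ∘ y))) := by
    have hy : α ∘ c ∘ y = τ ∘ σ ∘ y := funext fun i ↦ congr($hcσ (y i))
    rw [← intForm_comp, ← intForm_comp, ← map_smul_comp, ← map_smul_comp, ← hg, ← hPW, mul_smul, hy]
  have hy : e ∘ c ∘ y = y := funext fun i ↦ congr($hec (y i))
  rw [hconst _ _ hτ, ← intForm_comp U e, ← map_smul_comp, hP, one_smul, hy, intForm_comp]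

theorem smul_comp_eq_of_mul_map_eq_map (hconst : ∀ p t, α p = τ t → p = c (e p)) {g : GL J L}
    {P : GL J A} {W : GL J T} (hPW : g * GeneralLinearGroup.map α P = GeneralLinearGroup.map τ W)
    (hP : GeneralLinearGroup.map e P = 1) {v : J → A} {w : J → T} (hv : g • (α ∘ v) = τ ∘ w) :
    P • (c ∘ e ∘ v) = v := by
  have hτ : α ∘ (P⁻¹ • v) = τ ∘ (W⁻¹ • w) := by
    rw [← map_smul_comp, ← map_smul_comp, map_inv, map_inv, ← hPW, _root_.mul_inv_rev, mul_smul,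
      ← hv, inv_smul_smul]
  have hc : P⁻¹ • v = c ∘ e ∘ (P⁻¹ • v) := funext fun i ↦ hconst _ _ congr($hτ i)
  rw [← map_smul_comp e, map_inv, hP, inv_one, one_smul] at hc
  rw [← hc, smul_inv_smul]

end Factorization

theorem isUnit_of_map_residue_eq_one {J B : Type*} [Fintype J] [DecidableEq J] [CommRing B]
    [IsLocalRing B] {M : Matrix J J B} (hM : M.map (IsLocalRing.residue B) = 1) : IsUnit M := by
  rw [Matrix.isUnit_iff_isUnit_det]
  refine isUnit_of_map_unit (IsLocalRing.residue B) _ ?_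
  rw [RingHom.map_det, RingHom.mapMatrix_apply, hM, det_one]
  exact isUnit_one

theorem transpose_inv_sub_one_apply_mem {J R : Type*} [Fintype J] [DecidableEq J] [CommRing R]
    {I : Ideal R} {g : GL J R} (hg : ∀ i k, (g.1 - 1) i k ∈ I) (i k : J) :
    ((g⁻¹).1ᵀ - 1) i k ∈ I := by
  have htranspose : (g⁻¹).1ᵀ - 1 = -((g⁻¹).1 * (g.1 - 1))ᵀ := by
    rw [Matrix.mul_sub, ← Units.val_mul, inv_mul_cancel, Units.val_one, mul_one, transpose_sub,
      transpose_one, neg_sub]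
  rw [htranspose, Matrix.neg_apply, transpose_apply, Matrix.mul_apply]
  exact neg_mem (Ideal.sum_mem _ fun l _ ↦ Ideal.mul_mem_left _ _ (hg l i))

section Horrocks

open Polynomial IsLocalRing

variable {J B L : Type*} [Fintype J] [DecidableEq J] [CommRing B] [IsLocalRing B] [CommRing L]
  [Algebra B L] [Algebra B[X] L] {T : Subalgebra B L} {g : GL J L}

theorem exists_mul_map_eq_map
    (hg : ∀ i, ∃ p : J → B[X], (∀ k, p k ∈ (maximalIdeal B).map C) ∧
      ∀ k, (g.1 *ᵥ (algebraMap B[X] L ∘ (Pi.single i 1 + p))) k ∈ T) :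
    ∃ (P : Matrix J J B[X]) (W : Matrix J J T),
      (P.map (evalRingHom 0)).map (residue B) = 1 ∧
        g.1 * P.map (algebraMap B[X] L) = W.map (algebraMap T L) := by
  choose p hp hpT using hg
  refine ⟨of fun k i ↦ (Pi.single i 1 + p i : J → B[X]) k, of fun k i ↦ ⟨_, hpT i k⟩, ?_, rfl⟩
  have hmap : (maximalIdeal B).map (C : B →+* B[X]) ≤
      RingHom.ker ((residue B).comp (evalRingHom 0)) := by
    rw [Ideal.map_le_iff_le_comap]
    intro x hx
    simpa [RingHom.mem_ker] using hx
  ext k i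
  have hpk : residue B ((p i k).eval 0) = 0 := hmap (hp i k)
  obtain rfl | hki := eq_or_ne k i
  · simp [hpk]
  · simp [hpk, hki]

variable [IsScalarTower B B[X] L]

theorem orbitRel_C_comp_eval_of_forall_exists_mulVec_mem
    (hT : ∀ p : B[X], algebraMap B[X] L p ∈ T → p = C (p.eval 0))
    (hcol : ∀ h : GL J L, (∀ i k, (h.1 - 1) i k ∈ (maximalIdeal B).map (algebraMap B L)) →
      ∀ i, ∃ p : J → B[X], (∀ k, p k ∈ (maximalIdeal B).map C) ∧
        ∀ k, (h.1 *ᵥ (algebraMap B[X] L ∘ (Pi.single i 1 + p))) k ∈ T)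
    (U : Matrix J J ℤ) (hgU : g ∈ isometryGroup U L)
    (hg : ∀ i k, (g.1 - 1) i k ∈ (maximalIdeal B).map (algebraMap B L))
    {v : J → B[X]} {w : J → B} (hv : g • (algebraMap B[X] L ∘ v) = algebraMap B L ∘ w) :
    OrbitRel (RingHom.id B[X]) (isometryGroup U B[X]) (C ∘ eval 0 ∘ v) v := by
  have hgt : IsUnit (g⁻¹).1ᵀ := (isUnit_transpose _).2 (g⁻¹).isUnit
  obtain ⟨P, W, hP, hPW⟩ := exists_mul_map_eq_map (hcol g hg)
  obtain ⟨P', W', hP', hPW'⟩ :=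
    exists_mul_map_eq_map (hcol hgt.unit (transpose_inv_sub_one_apply_mem hg))
  have hn : IsUnit ((P'ᵀ * P).map (evalRingHom 0)) := by
    refine isUnit_of_map_residue_eq_one ?_
    rw [Matrix.map_mul, Matrix.map_mul, transpose_map, transpose_map, hP, hP', transpose_one,
      one_mul]
  have hec : (evalRingHom 0).comp C = RingHom.id B := by ext; simp
  have hcσ : (algebraMap B[X] L).comp C = (algebraMap T L).comp (algebraMap B T) := by
    ext b
    exact (IsScalarTower.algebraMap_apply B B[X] L b).symm
  have hconst (p : B[X]) (t : T) (h : algebraMap B[X] L p = algebraMap T L t) :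
      p = C (evalRingHom 0 p) := hT p (h ▸ t.2)
  obtain ⟨hPu, hWu⟩ := isUnit_and_isUnit_of_mul_map_eq_map Subtype.val_injective hcσ hconst hPW
    hPW' hn
  obtain ⟨P₁, W₁, hP₁, hPW₁⟩ := exists_map_eq_one_of_mul_map_eq_map hec hcσ (P := hPu.unit)
    (W := hWu.unit) (Units.ext hPW)
  exact ⟨P₁, mem_isometryGroup_of_mul_map_eq_map hec hcσ hconst hPW₁ hP₁ hgU,
    smul_comp_eq_of_mul_map_eq_map hconst hPW₁ hP₁ (w := algebraMap B T ∘ w) hv⟩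

theorem orbitRel_C_comp_eval_of_residue_trivial (U : Matrix J J ℤ)
    {g : GL J (MonicLocalization B)} (hgU : g ∈ isometryGroup U (MonicLocalization B))
    (hg : ∀ i k, (g.1 - 1) i k ∈ (maximalIdeal B).map (algebraMap B (MonicLocalization B)))
    {v : J → B[X]} {w : J → B} (hv : g • (algebraMap B[X] (MonicLocalization B) ∘ v) =
      algebraMap B (MonicLocalization B) ∘ w) :
    OrbitRel (RingHom.id B[X]) (isometryGroup U B[X]) (C ∘ eval 0 ∘ v) v :=
  orbitRel_C_comp_eval_of_forall_exists_mulVec_mem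
    (fun _ ↦ MonicLocalization.eq_C_of_algebraMap_mem_degreeLEZero)
    MonicLocalization.exists_mulVec_single_add_mem_degreeLEZero U hgU hg hv

end Horrocks

/-! ### Isotropic vectors over polynomial rings over local rings -/

namespace MonicLocalization

open Polynomial IsLocalRing

variable {B : Type*} [CommRing B] [IsLocalRing B]

theorem isUnit_algebraMap_map_residue (y : monicSubmonoid B) :
    IsUnit ((algebraMap (ResidueField B)[X] (FractionRing (ResidueField B)[X])).comp
      (mapRingHom (residue B)) y) := by
  have hy : (mapRingHom (residue B) (y : B[X])).Monic := Monic.map _ y.2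
  rw [RingHom.comp_apply, isUnit_iff_ne_zero, Ne,
    map_eq_zero_iff _ (IsFractionRing.injective _ _)]
  exact hy.ne_zero

/-- The reduction map from `B(X)` to the field of rational functions over the residue field
of `B`. -/
noncomputable def reduction (B : Type*) [CommRing B] [IsLocalRing B] :
    MonicLocalization B →+* FractionRing (ResidueField B)[X] :=
  IsLocalization.lift (M := monicSubmonoid B) isUnit_algebraMap_map_residue

theorem reduction_algebraMap (p : B[X]) :
    reduction B (algebraMap B[X] (MonicLocalization B) p) =
      algebraMap _ _ (p.map (residue B)) :=
  IsLocalization.lift_eq _ _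

theorem exists_units_reduction_eq_algebraMap {h : (ResidueField B)[X]} (hh : h ≠ 0) :
    ∃ y : (MonicLocalization B)ˣ, reduction B y = algebraMap _ _ h := by
  have hlead : h.leadingCoeff ≠ 0 := leadingCoeff_ne_zero.2 hh
  obtain ⟨c, hc⟩ := residue_surjective h.leadingCoeff
  have hcu : IsUnit c := isUnit_of_map_unit (residue B) c (hc ▸ hlead.isUnit)
  obtain ⟨p, hp, -, hpm⟩ := lifts_and_natDegree_eq_and_monic (f := residue B)
    ((mem_lifts _).2 (Polynomial.map_surjective _ residue_surjective (h * C h.leadingCoeff⁻¹)))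
    (monic_mul_leadingCoeff_inv hh)
  have hpu : IsUnit (algebraMap B[X] (MonicLocalization B) (C c * p)) := by
    rw [map_mul]
    exact ((hcu.map C).map _).mul
      (IsLocalization.map_units (MonicLocalization B) (⟨p, hpm⟩ : monicSubmonoid B))
  refine ⟨hpu.unit, ?_⟩
  rw [IsUnit.unit_spec, reduction_algebraMap, Polynomial.map_mul, map_C, hp, hc, mul_left_comm,
    ← C_mul, mul_inv_cancel₀ hlead, C_1, mul_one]

theorem exists_units_reduction_eq (x : FractionRing (ResidueField B)[X]) (hx : x ≠ 0) :
    ∃ y : (MonicLocalization B)ˣ, reduction B y = x := by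
  obtain ⟨a, b, hb, rfl⟩ := IsFractionRing.div_surjective (A := (ResidueField B)[X]) x
  have ha : a ≠ 0 := by
    rintro rfl
    simp at hx
  obtain ⟨y, hy⟩ := exists_units_reduction_eq_algebraMap ha
  obtain ⟨z, hz⟩ := exists_units_reduction_eq_algebraMap (nonZeroDivisors.ne_zero hb)
  refine ⟨y * z⁻¹, ?_⟩
  rw [Units.val_mul, map_mul, hy, div_eq_mul_inv]
  congr 1
  exact eq_inv_of_mul_eq_one_left (by rw [← hz, ← map_mul, Units.inv_mul, map_one])

theorem mem_map_maximalIdeal_of_reduction_eq_zero {z : MonicLocalization B}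
    (hz : reduction B z = 0) :
    z ∈ (maximalIdeal B).map (algebraMap B (MonicLocalization B)) := by
  obtain ⟨⟨p, s⟩, hp⟩ := IsLocalization.surj (monicSubmonoid B) z
  have hred : algebraMap _ (FractionRing (ResidueField B)[X]) (p.map (residue B)) = 0 := by
    rw [← reduction_algebraMap, ← hp, map_mul, hz, zero_mul]
  have hpm : p ∈ (maximalIdeal B).map (C : B →+* B[X]) := by
    rw [← ker_residue, ← ker_mapRingHom]
    exact (map_eq_zero_iff _ (IsFractionRing.injective _ _)).1 hred
  have hpz := Ideal.mem_map_of_mem (algebraMap B[X] (MonicLocalization B)) hpm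
  rw [Ideal.map_map, ← algebraMap_eq, ← IsScalarTower.algebraMap_eq, ← hp] at hpz
  exact (Ideal.mul_unit_mem_iff_mem _ (IsLocalization.map_units _ s)).1 hpz

end MonicLocalization

section Local

open Polynomial IsLocalRing MonicLocalization

variable {B : Type*} [CommRing B] [IsLocalRing B]
variable {ι κ : Type*} [Fintype ι] [DecidableEq ι] [Fintype κ] [DecidableEq κ]
variable {o : ι} {v : (ι ⊕ ι) ⊕ κ → B[X]}

theorem exists_residue_trivial_of_residue_comp_eq_hyp [Subsingleton κ]
    (hv : mapRingHom (residue B) ∘ v = hyp κ _ (.inl o))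
    (hrel : OrbitRel (RingHom.id _) (isometryGroup (splitMatrix ι κ) (MonicLocalization B))
      (algebraMap B[X] (MonicLocalization B) ∘ v) (hyp κ _ (.inl o))) :
    ∃ g ∈ isometryGroup (splitMatrix ι κ) (MonicLocalization B),
      (∀ i k, (g.1 - 1) i k ∈ (maximalIdeal B).map (algebraMap B (MonicLocalization B))) ∧
      g • (algebraMap B[X] (MonicLocalization B) ∘ v) = hyp κ _ (.inl o) := by
  obtain ⟨g, hg, hgv⟩ := hrel
  replace hgv : g • (algebraMap B[X] (MonicLocalization B) ∘ v) = hyp κ _ (.inl o) := hgv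
  have hred : reduction B ∘ algebraMap B[X] (MonicLocalization B) ∘ v = hyp κ _ (.inl o) := by
    rw [← comp_hyp (algebraMap (ResidueField B)[X] _), ← hv]
    exact funext fun i ↦ reduction_algebraMap _
  have hfix : GeneralLinearGroup.map (reduction B) g ∈ fixingIsometryGroup κ {.inl o} _ := by
    refine mem_fixingIsometryGroup.2 ⟨map_mem_isometryGroup _ hg, ?_⟩
    rintro _ rfl
    nth_rw 1 [← hred]
    rw [map_smul_comp, hgv, comp_hyp]
  obtain ⟨h, hh, hhg⟩ := fixingIsometryGroup_le_map exists_units_reduction_eq _ hfix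
  obtain ⟨hhU, hho⟩ := mem_fixingIsometryGroup.1 hh
  refine ⟨h⁻¹ * g, mul_mem (inv_mem hhU) hg, fun i k ↦ ?_, ?_⟩
  · refine mem_map_maximalIdeal_of_reduction_eq_zero (map_sub_one_apply_eq_zero ?_ i k)
    rw [map_mul, map_inv, hhg, inv_mul_cancel]
  · rw [mul_smul, hgv, inv_smul_eq_iff, hho _ rfl]

theorem orbitRel_C_comp_eval_of_residue_comp_eq_hyp [Subsingleton κ]
    (hv : mapRingHom (residue B) ∘ v = hyp κ _ (.inl o))
    (hrel : OrbitRel (RingHom.id _) (isometryGroup (splitMatrix ι κ) (MonicLocalization B))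
      (algebraMap B[X] (MonicLocalization B) ∘ v) (hyp κ _ (.inl o))) :
    OrbitRel (RingHom.id B[X]) (isometryGroup (splitMatrix ι κ) B[X]) (C ∘ eval 0 ∘ v) v := by
  obtain ⟨g, hg, hg1, hgv⟩ := exists_residue_trivial_of_residue_comp_eq_hyp hv hrel
  rw [← comp_hyp (algebraMap B _)] at hgv
  exact orbitRel_C_comp_eval_of_residue_trivial _ hg hg1 hgv

theorem orbitRel_C_comp_eval_of_isLocalRing [Subsingleton κ] (hι : 3 ≤ Fintype.card ι)
    (hQ : splitForm ι κ B[X] v = 0) (hv : UnimodularOn Set.univ v)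
    (hrel : OrbitRel (RingHom.id _) (isometryGroup (splitMatrix ι κ) (MonicLocalization B))
      (algebraMap B[X] (MonicLocalization B) ∘ v) (hyp κ _ (.inl o))) :
    OrbitRel (RingHom.id B[X]) (isometryGroup (splitMatrix ι κ) B[X]) (C ∘ eval 0 ∘ v) v := by
  have hdim : ringKrullDim (ResidueField B)[X] + 1 < Fintype.card ι := by
    rw [ringKrullDim_of_isNoetherianRing, ringKrullDim_eq_zero_of_field, zero_add]
    exact_mod_cast (by omega : 1 + 1 < Fintype.card ι)
  have hQ' : splitForm ι κ _ (mapRingHom (residue B) ∘ v) = 0 := by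
    rw [splitForm, intForm_comp, hQ, map_zero]
  obtain ⟨γ, hγ, hγv⟩ := orbitRel_hyp_of_unimodularOn_univ (φ := mapRingHom (residue B))
    (Polynomial.map_surjective _ residue_surjective) hdim hQ' (hv.comp _) o
  rw [map_smul_comp] at hγv
  have hrelγ : OrbitRel (RingHom.id B[X]) (isometryGroup (splitMatrix ι κ) B[X]) v (γ • v) :=
    ⟨γ, hγ, rfl⟩
  have hconst := hrelγ.map (C.comp (evalRingHom 0))
  exact hconst.trans ((orbitRel_C_comp_eval_of_residue_comp_eq_hyp hγv
    ((hrelγ.map _).symm.trans hrel)).trans hrelγ.symm)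

end Local

/-! ### Quillen patching -/

section Dilation

open Polynomial

variable {R S T : Type*} [CommRing R] [CommRing S] [CommRing T]

/-- The substitution `X ↦ s X`. -/
noncomputable def dilation (s : R) : R[X] →+* R[X] := compRingHom (C s * X)

theorem dilation_comp_dilation (s t : R) : (dilation t).comp (dilation s) = dilation (s * t) := by
  ext <;> simp [dilation, mul_assoc]

theorem evalRingHom_zero_comp_dilation (s : R) :
    (evalRingHom 0).comp (dilation s) = evalRingHom 0 := by
  ext <;> simp [dilation]

theorem mapRingHom_comp_dilation (φ : R →+* S) (s : R) :
    (mapRingHom φ).comp (dilation s) = (dilation (φ s)).comp (mapRingHom φ) := by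
  ext <;> simp [dilation]

variable [Algebra R T] (M : Submonoid R) [IsLocalization M T]

theorem exists_dilation_comp_eq {α : Type*} [Finite α] {p q : α → R[X]}
    (h0 : evalRingHom 0 ∘ p = evalRingHom 0 ∘ q)
    (hT : mapRingHom (algebraMap R T) ∘ p = mapRingHom (algebraMap R T) ∘ q) :
    ∃ s ∈ M, dilation s ∘ p = dilation s ∘ q := by
  cases nonempty_fintype α
  have hs (a : α) : ∃ s ∈ M, ∀ n, s * (p a).coeff n = s * (q a).coeff n := by
    let _ := Polynomial.algebra R T
    have := Polynomial.isLocalization M T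
    obtain ⟨⟨_, s, hs, rfl⟩, h⟩ := (IsLocalization.eq_iff_exists (M.map (C : R →+* R[X]))
      T[X]).1 (congr_fun hT a)
    exact ⟨s, hs, fun n ↦ by simpa using congr_arg (coeff · n) h⟩
  choose s hs hsp using hs
  refine ⟨∏ a, s a, prod_mem fun a _ ↦ hs a, funext fun a ↦ ?_⟩
  ext n
  simp only [Function.comp_apply, dilation, coe_compRingHom_apply, comp_C_mul_X_coeff]
  rcases n with _ | n
  · rw [coeff_zero_eq_eval_zero, coeff_zero_eq_eval_zero]
    exact congr_arg (· * _) (congr_fun h0 a)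
  · obtain ⟨t, ht⟩ := Finset.dvd_prod_of_mem s (Finset.mem_univ a)
    rw [ht, pow_succ]
    linear_combination t * (s a * t) ^ n * hsp a (n + 1)

theorem exists_map_eq_dilation {α : Type*} [Finite α] {p : α → T[X]} {c : α → R}
    (hp : ∀ a, (p a).eval 0 = algebraMap R T (c a)) :
    ∃ s ∈ M, ∃ q : α → R[X], (∀ a, (q a).eval 0 = c a) ∧
      ∀ a, (q a).map (algebraMap R T) = dilation (algebraMap R T s) (p a) := by
  let _ := Polynomial.algebra R T
  have := Polynomial.isLocalization M T
  obtain ⟨⟨_, s, hs, rfl⟩, hb⟩ := IsLocalization.exist_integer_multiples_of_finite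
    (M.map (C : R →+* R[X])) (fun a ↦ (p a).divX)
  choose Q hQ using hb
  refine ⟨s, hs, fun a ↦ X * dilation s (Q a) + C (c a), fun a ↦ by simp, fun a ↦ ?_⟩
  have hQa : (Q a).map (algebraMap R T) = C (algebraMap R T s) * (p a).divX := by
    have h := hQ a
    rw [Algebra.smul_def, Polynomial.algebraMap_def] at h
    simpa using h
  have hdil : (dilation s (Q a)).map (algebraMap R T) =
      dilation (algebraMap R T s) (C (algebraMap R T s) * (p a).divX) := by
    rw [← hQa]
    exact RingHom.congr_fun (mapRingHom_comp_dilation (algebraMap R T) s) (Q a)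
  rw [Polynomial.map_add, Polynomial.map_mul, hdil]
  conv_rhs => rw [← X_mul_divX_add (p a), coeff_zero_eq_eval_zero, hp]
  simp only [map_X, dilation, coe_compRingHom, mul_comp, C_comp, map_C, add_comp, X_comp]
  ring

end Dilation

section DilationMatrix

open Polynomial

variable {R T : Type*} [CommRing R] [CommRing T] [Algebra R T] (M : Submonoid R)
  [IsLocalization M T] {J : Type*} [Fintype J] [DecidableEq J]

theorem exists_mapMatrix_dilation_eq {P Q : Matrix J J R[X]}
    (h0 : (evalRingHom 0).mapMatrix P = (evalRingHom 0).mapMatrix Q)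
    (hT : (mapRingHom (algebraMap R T)).mapMatrix P = (mapRingHom (algebraMap R T)).mapMatrix Q) :
    ∃ s ∈ M, (dilation s).mapMatrix P = (dilation s).mapMatrix Q := by
  obtain ⟨s, hs, h⟩ := exists_dilation_comp_eq M (p := fun a : J × J ↦ P a.1 a.2)
    (q := fun a ↦ Q a.1 a.2) (funext fun a ↦ congr_fun₂ h0 a.1 a.2)
    (funext fun a ↦ congr_fun₂ hT a.1 a.2)
  exact ⟨s, hs, Matrix.ext fun i j ↦ congr_fun h (i, j)⟩

theorem exists_mapMatrix_eq_mapMatrix_dilation {N : Matrix J J T[X]}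
    (hN : (evalRingHom 0).mapMatrix N = 1) : ∃ s ∈ M, ∃ P : Matrix J J R[X],
      (evalRingHom 0).mapMatrix P = 1 ∧
      (mapRingHom (algebraMap R T)).mapMatrix P =
        (dilation (algebraMap R T s)).mapMatrix N := by
  obtain ⟨s, hs, q, hq0, hq⟩ := exists_map_eq_dilation M (p := fun a : J × J ↦ N a.1 a.2)
    (c := fun a ↦ (1 : Matrix J J R) a.1 a.2) fun a ↦ by
      have h : (N a.1 a.2).eval 0 = (1 : Matrix J J T) a.1 a.2 := congr_fun₂ hN a.1 a.2
      rw [h, Matrix.one_apply, Matrix.one_apply, apply_ite (algebraMap R T), map_one, map_zero]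
  exact ⟨s, hs, Matrix.of fun i j ↦ q (i, j), Matrix.ext fun i j ↦ hq0 (i, j),
    Matrix.ext fun i j ↦ hq (i, j)⟩

theorem mapMatrix_mapMatrix_dilation {s t : R} {N : Matrix J J T[X]} {P : Matrix J J R[X]}
    (hP : (mapRingHom (algebraMap R T)).mapMatrix P =
      (dilation (algebraMap R T s)).mapMatrix N) :
    (mapRingHom (algebraMap R T)).mapMatrix ((dilation t).mapMatrix P) =
      (dilation (algebraMap R T (s * t))).mapMatrix N := by
  rw [map_mul, ← dilation_comp_dilation, ← RingHom.mapMatrix_comp, RingHom.comp_apply, ← hP,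
    ← RingHom.comp_apply, ← RingHom.comp_apply, RingHom.mapMatrix_comp, RingHom.mapMatrix_comp,
    mapRingHom_comp_dilation]

theorem exists_gl_map_eq_map_dilation {g : GL J T[X]}
    (hg : GeneralLinearGroup.map (evalRingHom 0) g = 1) : ∃ s ∈ M, ∃ h : GL J R[X],
      GeneralLinearGroup.map (evalRingHom 0) h = 1 ∧
      GeneralLinearGroup.map (mapRingHom (algebraMap R T)) h =
        GeneralLinearGroup.map (dilation (algebraMap R T s)) g := by
  have hg' : GeneralLinearGroup.map (evalRingHom 0) g⁻¹ = 1 := by rw [map_inv, hg, inv_one]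
  obtain ⟨s, hs, P, hP0, hP⟩ :=
    exists_mapMatrix_eq_mapMatrix_dilation M (congr_arg Units.val hg)
  obtain ⟨t, ht, P', hP'0, hP'⟩ :=
    exists_mapMatrix_eq_mapMatrix_dilation M (congr_arg Units.val hg')
  have hdil0 (r : R) (N : Matrix J J R[X]) :
      (evalRingHom 0).mapMatrix ((dilation r).mapMatrix N) = (evalRingHom 0).mapMatrix N := by
    rw [← RingHom.comp_apply, RingHom.mapMatrix_comp, evalRingHom_zero_comp_dilation]
  obtain ⟨r, hr, hPP'⟩ := exists_mapMatrix_dilation_eq (T := T) M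
    (P := (dilation t).mapMatrix P * (dilation s).mapMatrix P') (Q := 1)
    (by rw [map_mul, hdil0, hdil0, hP0, hP'0, mul_one, map_one])
    (by rw [map_mul, mapMatrix_mapMatrix_dilation hP,
      mapMatrix_mapMatrix_dilation hP',
      mul_comm t s, ← map_mul, ← Units.val_mul, mul_inv_cancel, Units.val_one, map_one, map_one])
  rw [map_mul, map_one] at hPP'
  refine ⟨s * t * r, mul_mem (mul_mem hs ht) hr,
    ⟨_, _, hPP', mul_eq_one_comm.1 hPP'⟩, Units.ext ?_, Units.ext ?_⟩
  · exact (hdil0 _ _).trans ((hdil0 _ _).trans hP0)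
  · exact mapMatrix_mapMatrix_dilation (mapMatrix_mapMatrix_dilation hP)

theorem map_intForm_smul {S : Type*} [CommRing S] {U : Matrix J J ℤ} {φ : R →+* S} {g : GL J R}
    (hg : GeneralLinearGroup.map φ g ∈ isometryGroup U S) (v : J → R) :
    φ (intForm U R (g • v)) = φ (intForm U R v) := by
  rw [← intForm_comp, ← intForm_comp, ← map_smul_comp]
  exact hg _

variable {U : Matrix J J ℤ} {g : GL J T[X]}

theorem exists_mem_isometryGroup_map_eq_map_dilation
    (hgU : g ∈ isometryGroup U T[X]) (hg : GeneralLinearGroup.map (evalRingHom 0) g = 1) :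
    ∃ s ∈ M, ∃ h ∈ isometryGroup U R[X], GeneralLinearGroup.map (evalRingHom 0) h = 1 ∧
      GeneralLinearGroup.map (mapRingHom (algebraMap R T)) h =
        GeneralLinearGroup.map (dilation (algebraMap R T s)) g := by
  obtain ⟨s, hs, h, h0, hT⟩ := exists_gl_map_eq_map_dilation M hg
  obtain ⟨t, ht, hQ⟩ := exists_dilation_comp_eq M
    (p := fun a : Set J ↦ intForm U R[X] (h • a.indicator 1))
    (q := fun a ↦ intForm U R[X] (a.indicator 1))
    (funext fun a ↦ map_intForm_smul (h0 ▸ one_mem _) _)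
    (funext fun a ↦ map_intForm_smul (hT ▸ map_mem_isometryGroup _ hgU) _)
  refine ⟨s * t, mul_mem hs ht, GeneralLinearGroup.map (dilation t) h,
    mem_isometryGroup_of_forall_indicator U fun a ↦ ?_, ?_, Units.ext ?_⟩
  · rw [← comp_indicator_one (dilation t), map_smul_comp, intForm_comp, intForm_comp]
    exact congr_fun hQ a
  · exact (congr_arg (GeneralLinearGroup.map · h) (evalRingHom_zero_comp_dilation t)).trans h0
  · exact mapMatrix_mapMatrix_dilation (congr_arg Units.val hT)

theorem exists_orbitRel_dilation_comp
    (hgU : g ∈ isometryGroup U T[X]) (hg : GeneralLinearGroup.map (evalRingHom 0) g = 1)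
    {v w : J → R[X]} (hvw : evalRingHom 0 ∘ v = evalRingHom 0 ∘ w)
    (hgv : g • (mapRingHom (algebraMap R T) ∘ v) = mapRingHom (algebraMap R T) ∘ w) :
    ∃ s ∈ M, OrbitRel (RingHom.id R[X]) (isometryGroup U R[X])
      (dilation s ∘ v) (dilation s ∘ w) := by
  obtain ⟨s, hs, h, hhU, h0, hT⟩ := exists_mem_isometryGroup_map_eq_map_dilation M hgU hg
  have hdil0 (x : J → R[X]) : evalRingHom 0 ∘ dilation s ∘ x = evalRingHom 0 ∘ x := by
    rw [← Function.comp_assoc, ← RingHom.coe_comp, evalRingHom_zero_comp_dilation]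
  have hdilT (x : J → R[X]) : mapRingHom (algebraMap R T) ∘ dilation s ∘ x =
      dilation (algebraMap R T s) ∘ mapRingHom (algebraMap R T) ∘ x := by
    rw [← Function.comp_assoc, ← Function.comp_assoc, ← RingHom.coe_comp,
      mapRingHom_comp_dilation, RingHom.coe_comp]
  obtain ⟨t, ht, hst⟩ := exists_dilation_comp_eq (T := T) M (α := J) (p := h • (dilation s ∘ v))
    (q := dilation s ∘ w)
    (by rw [← map_smul_comp, h0, one_smul, hdil0, hdil0, hvw])
    (by rw [← map_smul_comp, hT, hdilT, hdilT, map_smul_comp, hgv])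
  refine ⟨s * t, mul_mem hs ht, GeneralLinearGroup.map (dilation t) h,
    map_mem_isometryGroup _ hhU, ?_⟩
  rw [← dilation_comp_dilation, RingHom.coe_comp, Function.comp_assoc, Function.comp_assoc, ← hst]
  exact map_smul_comp (dilation t) h _

end DilationMatrix

section Quillen

open Polynomial

variable {J : Type*} [Fintype J] [DecidableEq J] {B : Type*} [CommRing B]

/-- The ideal of all `s` such that replacing `X` by `x + s y` instead of `x` does not change the
orbit of `v` under isometries over `B[X]`. -/
def quillenIdeal (U : Matrix J J ℤ) (v : J → B[X]) : Ideal B where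
  carrier := {s | ∀ x y : B[X], OrbitRel (RingHom.id B[X]) (isometryGroup U B[X])
    (compRingHom x ∘ v) (compRingHom (x + C s * y) ∘ v)}
  zero_mem' x y := by
    rw [C_0, zero_mul, add_zero]
    exact .refl _ _ _
  add_mem' {s t} hs ht x y := by
    rw [C_add, add_mul, ← add_assoc]
    exact (hs x y).trans (ht _ y)
  smul_mem' c s hs x y := by
    rw [smul_eq_mul, C_mul, mul_comm (C c), mul_assoc]
    exact hs x _

/-- The substitution `X ↦ X + Y` from `R[X]` to `R[X][Y]`. -/
noncomputable def translation (R : Type*) [CommRing R] : R[X] →+* R[X][X] :=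
  eval₂RingHom (C.comp C) (C X + X)

theorem evalRingHom_zero_comp_C (R : Type*) [CommRing R] :
    (evalRingHom 0).comp C = RingHom.id R := by
  ext; simp

theorem evalRingHom_zero_comp_translation (R : Type*) [CommRing R] :
    (evalRingHom 0).comp (translation R) = RingHom.id R[X] := by
  ext <;> simp [translation]

theorem mapRingHom_comp_translation {R S : Type*} [CommRing R] [CommRing S] (φ : R →+* S) :
    (mapRingHom (mapRingHom φ)).comp (translation R) = (translation S).comp (mapRingHom φ) := by
  ext <;> simp [translation]

variable {T : Type*} [CommRing T] [Algebra B T] (M : Submonoid B) [IsLocalization M T]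
  {U : Matrix J J ℤ} {v : J → B[X]} {w : J → T}

theorem exists_orbitRel_dilation_comp_translation
    (h : OrbitRel (RingHom.id T[X]) (isometryGroup U T[X]) (C ∘ w)
      (mapRingHom (algebraMap B T) ∘ v)) :
    ∃ s ∈ M, OrbitRel (RingHom.id B[X][X]) (isometryGroup U B[X][X])
      (dilation (C s) ∘ C ∘ v) (dilation (C s) ∘ translation B ∘ v) := by
  let _ := Polynomial.algebra B T
  have := Polynomial.isLocalization M T
  obtain ⟨g, hgU, hgv⟩ := h
  replace hgv : g • (C ∘ w) = mapRingHom (algebraMap B T) ∘ v := hgv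
  have hC : mapRingHom (mapRingHom (algebraMap B T)) ∘ C ∘ v =
      C ∘ mapRingHom (algebraMap B T) ∘ v := by ext1; simp
  have htranslation : mapRingHom (mapRingHom (algebraMap B T)) ∘ translation B ∘ v =
      translation T ∘ mapRingHom (algebraMap B T) ∘ v := by
    rw [← Function.comp_assoc, ← RingHom.coe_comp, mapRingHom_comp_translation]
    rfl
  have hconst : translation T ∘ C ∘ w = C ∘ C ∘ w := by ext1; simp [translation]
  have hC0 : GeneralLinearGroup.map (evalRingHom 0) (GeneralLinearGroup.map C g) = g :=
    congr_arg (GeneralLinearGroup.map · g) (evalRingHom_zero_comp_C T[X])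
  have htranslation0 :
      GeneralLinearGroup.map (evalRingHom 0) (GeneralLinearGroup.map (translation T) g) = g :=
    congr_arg (GeneralLinearGroup.map · g) (evalRingHom_zero_comp_translation T)
  have hv0 : evalRingHom 0 ∘ C ∘ v = evalRingHom 0 ∘ translation B ∘ v := by
    rw [← Function.comp_assoc, ← Function.comp_assoc, ← RingHom.coe_comp, ← RingHom.coe_comp,
      evalRingHom_zero_comp_C, evalRingHom_zero_comp_translation]
  obtain ⟨_, ⟨s, hs, rfl⟩, h⟩ := exists_orbitRel_dilation_comp (R := B[X]) (T := T[X])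
    (M.map C) (U := U)
    (g := GeneralLinearGroup.map (translation T) g * (GeneralLinearGroup.map C g)⁻¹)
    (mul_mem (map_mem_isometryGroup _ hgU) (inv_mem (map_mem_isometryGroup _ hgU)))
    (by rw [map_mul, map_inv, htranslation0, hC0, mul_inv_cancel])
    (v := C ∘ v) (w := translation B ∘ v) hv0
    (by
      change _ • (mapRingHom (mapRingHom (algebraMap B T)) ∘ _) =
        mapRingHom (mapRingHom (algebraMap B T)) ∘ _
      rw [hC, htranslation, ← hgv, mul_smul, ← map_smul_comp C, inv_smul_smul,
        ← map_smul_comp, hconst])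
  exact ⟨s, hs, h⟩

theorem exists_mem_quillenIdeal
    (h : OrbitRel (RingHom.id T[X]) (isometryGroup U T[X]) (C ∘ w)
      (mapRingHom (algebraMap B T) ∘ v)) : ∃ s ∈ M, s ∈ quillenIdeal U v := by
  obtain ⟨s, hs, hrel⟩ := exists_orbitRel_dilation_comp_translation M h
  refine ⟨s, hs, fun x y ↦ ?_⟩
  have hC : ((eval₂RingHom (compRingHom x) y).comp (dilation (C s))).comp C = compRingHom x := by
    ext <;> simp [dilation]
  have htranslation : ((eval₂RingHom (compRingHom x) y).comp (dilation (C s))).comp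
      (translation B) = compRingHom (x + C s * y) := by
    ext <;> simp [dilation, translation]
  rw [← hC, ← htranslation]
  exact hrel.map (eval₂RingHom (compRingHom x) y)

theorem orbitRel_C_comp_eval_of_forall_isMaximal
    (hloc : ∀ (m : Ideal B) [m.IsMaximal], ∃ w, OrbitRel (RingHom.id (Localization.AtPrime m)[X])
      (isometryGroup U (Localization.AtPrime m)[X]) (C ∘ w)
      (mapRingHom (algebraMap B (Localization.AtPrime m)) ∘ v)) :
    OrbitRel (RingHom.id B[X]) (isometryGroup U B[X]) (C ∘ eval 0 ∘ v) v := by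
  have htop : quillenIdeal U v = ⊤ := by
    by_contra hne
    obtain ⟨m, hm, hle⟩ := Ideal.exists_le_maximal _ hne
    obtain ⟨w, hw⟩ := hloc m
    obtain ⟨s, hs, hsv⟩ := exists_mem_quillenIdeal m.primeCompl hw
    exact hs (hle hsv)
  have h1 : (1 : B) ∈ quillenIdeal U v := htop ▸ Submodule.mem_top
  have h0 : compRingHom (0 : B[X]) ∘ v = C ∘ eval 0 ∘ v := by ext1; simp
  have hX : compRingHom (0 + C 1 * X : B[X]) ∘ v = v := by ext1; simp
  simpa only [h0, hX] using h1 0 X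

end Quillen

/-! ### Isotropic vectors over polynomial rings -/

namespace MonicLocalization

open Polynomial

variable {R T : Type*} [CommRing R] [CommRing T] {σ : Type*}

/-- The map `R(X) → T(X)` induced by a ring homomorphism `R → T`. -/
noncomputable def map (f : R →+* T) : MonicLocalization R →+* MonicLocalization T :=
  IsLocalization.map (M := monicSubmonoid R) (T := monicSubmonoid T) (MonicLocalization T)
    (mapRingHom f) fun _ hp ↦ Monic.map f hp

theorem map_algebraMap (f : R →+* T) (p : R[X]) :
    map f (algebraMap R[X] (MonicLocalization R) p) = algebraMap _ _ (p.map f) :=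
  IsLocalization.map_eq (M := monicSubmonoid R) (T := monicSubmonoid T) _ p

/-- The map `R[σ][X] → R(X)[σ]` which regards `X` as a constant. -/
noncomputable def variableToConstant (σ R : Type*) [CommRing R] :
    (MvPolynomial σ R)[X] →+* MvPolynomial σ (MonicLocalization R) :=
  eval₂RingHom (MvPolynomial.map (algebraMap R (MonicLocalization R)))
    (MvPolynomial.C (algebraMap R[X] _ X))

/-- The map `R(X)[σ] → T(X)` induced by a ring homomorphism `R[σ] → T`. -/
noncomputable def mvPolynomialMap (a : MvPolynomial σ R →+* T) :
    MvPolynomial σ (MonicLocalization R) →+* MonicLocalization T :=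
  MvPolynomial.eval₂Hom (map (a.comp MvPolynomial.C))
    fun i ↦ algebraMap T _ (a (MvPolynomial.X i))

theorem mvPolynomialMap_comp_variableToConstant (a : MvPolynomial σ R →+* T) :
    (mvPolynomialMap a).comp (variableToConstant σ R) =
      (algebraMap T[X] (MonicLocalization T)).comp (mapRingHom a) := by
  have hC (r : R) : algebraMap R (MonicLocalization R) r = algebraMap R[X] _ (C r) :=
    IsScalarTower.algebraMap_apply R R[X] _ r
  refine Polynomial.ringHom_ext' (MvPolynomial.ringHom_ext (fun r ↦ ?_) fun i ↦ ?_) ?_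
  · simp [mvPolynomialMap, variableToConstant, hC, map_algebraMap]
  · simpa [mvPolynomialMap, variableToConstant] using
      IsScalarTower.algebraMap_apply T T[X] (MonicLocalization T) (a (MvPolynomial.X i))
  · simp [mvPolynomialMap, variableToConstant, map_algebraMap]

end MonicLocalization

section MvPolynomial

open Polynomial MonicLocalization

variable {ι κ : Type*} [Fintype ι] [DecidableEq ι] [Fintype κ] [DecidableEq κ] [Subsingleton κ]

theorem orbitRel_C_comp_eval_of_variableToConstant {σ R : Type*} [CommRing R]
    (hι : 3 ≤ Fintype.card ι) {o : ι} {v : (ι ⊕ ι) ⊕ κ → (MvPolynomial σ R)[X]}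
    (hQ : splitForm ι κ _ v = 0) (hv : UnimodularOn Set.univ v)
    (h : OrbitRel (RingHom.id _) (isometryGroup (splitMatrix ι κ) _)
      (variableToConstant σ R ∘ v) (hyp κ _ (.inl o))) :
    OrbitRel (RingHom.id _) (isometryGroup (splitMatrix ι κ) (MvPolynomial σ R)[X])
      (C ∘ eval 0 ∘ v) v := by
  refine orbitRel_C_comp_eval_of_forall_isMaximal fun m _ ↦ ?_
  let a := algebraMap (MvPolynomial σ R) (Localization.AtPrime m)
  have hQm : splitForm ι κ _ (mapRingHom a ∘ v) = 0 := by
    rw [splitForm, intForm_comp, hQ, map_zero]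
  have hm : OrbitRel (RingHom.id _) (isometryGroup (splitMatrix ι κ) _)
      (algebraMap _ (MonicLocalization (Localization.AtPrime m)) ∘ mapRingHom a ∘ v)
      (hyp κ _ (.inl o)) := by
    convert h.map (mvPolynomialMap a) using 1
    · exact congrArg (fun f : _ →+* _ ↦ f ∘ v) (mvPolynomialMap_comp_variableToConstant a).symm
    · symm
      exact comp_hyp (R := MvPolynomial σ (MonicLocalization R)) (S := MonicLocalization _) _ _
  exact ⟨_, orbitRel_C_comp_eval_of_isLocalRing hι hQm (hv.comp _) hm⟩

theorem orbitRel_hyp_of_unimodularOn_univ_mvPolynomial {D : ℕ} (h3 : 3 ≤ Fintype.card ι)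
    (hD : D + 2 ≤ Fintype.card ι) (o : ι) (n : ℕ) {R : Type u} [CommRing R] [IsNoetherianRing R]
    (hR : ringKrullDim R ≤ D) {v : (ι ⊕ ι) ⊕ κ → MvPolynomial (Fin n) R}
    (hQ : splitForm ι κ _ v = 0) (hv : UnimodularOn Set.univ v) :
    OrbitRel (RingHom.id _) (isometryGroup (splitMatrix ι κ) _) v (hyp κ _ (.inl o)) := by
  induction n generalizing R with
  | zero =>
    refine orbitRel_hyp_of_unimodularOn_univ Function.surjective_id ?_ hQ hv o
    rw [ringKrullDim_eq_of_ringEquiv (MvPolynomial.isEmptyRingEquiv R (Fin 0))]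
    calc ringKrullDim R + 1 ≤ D + 1 := by gcongr
      _ < Fintype.card ι := by exact_mod_cast hD
  | succ n ih =>
    let e := (MvPolynomial.finSuccEquiv R n).toRingEquiv
    have he : e.symm.toRingHom ∘ e.toRingHom ∘ v = v := funext fun i ↦ e.symm_apply_apply (v i)
    have hQe {S : Type u} [CommRing S] (φ : (MvPolynomial (Fin n) R)[X] →+* S) :
        splitForm ι κ S (φ ∘ e.toRingHom ∘ v) = 0 := by
      rw [splitForm, intForm_comp, intForm_comp, hQ, map_zero, map_zero]
    have hve := hv.comp e.toRingHom
    have hgeneric := ih (ringKrullDim_monicLocalization_le hR) (hQe (variableToConstant _ R))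
      (hve.comp _)
    have hconst := (ih hR (hQe (evalRingHom 0)) (hve.comp _)).map C
    have hpoly := hconst.symm.trans
      (orbitRel_C_comp_eval_of_variableToConstant h3 (hQe (RingHom.id _)) hve hgeneric)
    have h := hpoly.symm.map e.symm.toRingHom
    rwa [he, comp_hyp, comp_hyp] at h

end MvPolynomial

/-! ### Cancellation of hyperbolic planes -/

section HyperbolicPlane

open QuadraticMap

variable {R V W : Type*} [CommRing R] [AddCommGroup V] [Module R V] [AddCommGroup W] [Module R W]

variable (R) in
/-- The hyperbolic plane, `R × R` with the form `(a, b) ↦ a * b`. -/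
abbrev hyperbolicPlane : QuadraticForm R (R × R) :=
  linMulLin (LinearMap.fst R R R) (LinearMap.snd R R R)

theorem polar_isometryEquiv_apply {Q : QuadraticForm R V} {Q' : QuadraticForm R W}
    (f : Q.IsometryEquiv Q') (x y : V) : polar Q' (f x) (f y) = polar Q x y := by
  simp only [polar, ← map_add, f.map_app]

variable {Q : QuadraticForm R V} {Q' : QuadraticForm R W}

theorem polar_prod_hyperbolicPlane_left (x : V × R × R) :
    polar (Q.prod (hyperbolicPlane R)) x (0, (1, 0)) = x.2.2 := by
  rw [polar_prod, polar_zero_right, zero_add]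
  simp [polar, add_mul]

theorem polar_prod_hyperbolicPlane_right (x : V × R × R) :
    polar (Q.prod (hyperbolicPlane R)) x (0, (0, 1)) = x.2.1 := by
  rw [polar_prod, polar_zero_right, zero_add]
  simp [polar, mul_add]

theorem isometryEquiv_apply_prod_zero
    {f : (Q.prod (hyperbolicPlane R)).IsometryEquiv (Q'.prod (hyperbolicPlane R))}
    (hleft : f (0, (1, 0)) = (0, (1, 0))) (hright : f (0, (0, 1)) = (0, (0, 1))) (v : V) :
    f (v, 0) = ((f (v, 0)).1, 0) := by
  refine Prod.ext rfl (Prod.ext ?_ ?_)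
  · rw [← polar_prod_hyperbolicPlane_right (Q := Q'), ← hright, polar_isometryEquiv_apply,
      polar_prod_hyperbolicPlane_right]
  · rw [← polar_prod_hyperbolicPlane_left (Q := Q'), ← hleft, polar_isometryEquiv_apply,
      polar_prod_hyperbolicPlane_left]

theorem equivalent_of_isometryEquiv_prod_hyperbolicPlane
    (f : (Q.prod (hyperbolicPlane R)).IsometryEquiv (Q'.prod (hyperbolicPlane R)))
    (hleft : f (0, (1, 0)) = (0, (1, 0))) (hright : f (0, (0, 1)) = (0, (0, 1))) :
    Q.Equivalent Q' := by
  have hf := isometryEquiv_apply_prod_zero hleft hright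
  have hf' := isometryEquiv_apply_prod_zero (f := f.symm)
    (f.toLinearEquiv.symm_apply_eq.2 hleft.symm) (f.toLinearEquiv.symm_apply_eq.2 hright.symm)
  let g : V →ₗ[R] W := LinearMap.fst R W (R × R) ∘ₗ f.toLinearEquiv ∘ₗ LinearMap.inl R V (R × R)
  let g' : W →ₗ[R] V :=
    LinearMap.fst R V (R × R) ∘ₗ f.symm.toLinearEquiv ∘ₗ LinearMap.inl R W (R × R)
  have hgg' : g ∘ₗ g' = LinearMap.id := LinearMap.ext fun w ↦ by
    change (f ((f.symm (w, 0)).1, 0)).1 = w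
    rw [← hf', f.apply_symm_apply]
  have hg'g : g' ∘ₗ g = LinearMap.id := LinearMap.ext fun v ↦ by
    change (f.symm ((f (v, 0)).1, 0)).1 = v
    rw [← hf, f.symm_apply_apply]
  refine ⟨⟨LinearEquiv.ofLinearMap g g' hgg' hg'g, fun v ↦ ?_⟩⟩
  have hv : Q' (g v) + 0 * 0 = Q v + 0 * 0 := (congrArg _ (hf v)).symm.trans (f.map_app (v, 0))
  simpa using hv

end HyperbolicPlane

section SplitForm

open QuadraticMap

variable {ι κ R : Type*} [Fintype ι] [DecidableEq ι] [Fintype κ] [DecidableEq κ] [CommRing R]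

theorem unimodularOn_univ_of_polar_eq_one [Subsingleton κ] {v w : (ι ⊕ ι) ⊕ κ → R}
    (hv : splitForm ι κ R v = 0) (hvw : polar (splitForm ι κ R) v w = 1) :
    UnimodularOn Set.univ v := by
  refine unimodularOn_iff_forall_isPrime.2 fun P hP hvP ↦ hP.ne_top ?_
  have hinl (a : ι ⊕ ι) : v (.inl a) ∈ P := hvP a trivial
  have hinr (k : κ) : v (.inr k) ∈ P := by
    rw [splitForm_apply, Fintype.sum_subsingleton _ k] at hv
    refine hP.mem_of_pow_mem 2 ?_
    rw [eq_neg_of_add_eq_zero_right hv]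
    exact neg_mem (sum_mem fun i _ ↦ P.mul_mem_right _ (hinl (.inl i)))
  rw [Ideal.eq_top_iff_one, ← hvw, polar_splitForm]
  exact add_mem (sum_mem fun a _ ↦ P.mul_mem_right _ (hinl a))
    (P.mul_mem_left _ (sum_mem fun k _ ↦ P.mul_mem_right _ (hinr k)))

theorem exists_isometryEquiv_hyp {v w : (ι ⊕ ι) ⊕ κ → R} {o : ι}
    (hvo : OrbitRel (RingHom.id R) (isometryGroup (splitMatrix ι κ) R) v (hyp κ R (.inl o)))
    (hw : splitForm ι κ R w = 0) (hvw : polar (splitForm ι κ R) v w = 1) :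
    ∃ f : (splitForm ι κ R).IsometryEquiv (splitForm ι κ R),
      f v = hyp κ R (.inl o) ∧ f w = hyp κ R (.inr o) := by
  obtain ⟨g, hg, hgv⟩ := hvo
  have hgw : (g • w) (.inl (.inr o)) = 1 := by
    refine (polar_splitForm_hyp (g • w) (.inl o)).symm.trans ?_
    rw [← hgv, polar_comm, ← hvw]
    exact polar_smul_smul hg v w
  obtain ⟨h, hh, hhw⟩ := orbitRel_hyp_of_apply_eq_one (φ := RingHom.id R) (s := {.inl o})
    Function.surjective_id (by simp) ((hg w).trans hw) hgw (by simp [hgw])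
  rw [mem_fixingIsometryGroup] at hh
  refine ⟨isometryEquivOfMem (mul_mem hh.1 hg), ?_, ?_⟩
  · change (h * g) • v = _
    rw [mul_smul]
    exact (congrArg (h • ·) hgv).trans (hh.2 _ rfl)
  · exact (mul_smul h g w).trans hhw

variable (κ R) in
/-- Splitting off the hyperbolic plane spanned by the first hyperbolic pair. -/
def splitFormSuccEquiv (r : ℕ) : (splitForm (Fin (r + 1)) κ R).IsometryEquiv
    ((splitForm (Fin r) κ R).prod (hyperbolicPlane R)) where
  toFun x := (x ∘ Sum.map (Sum.map Fin.succ Fin.succ) id, x (.inl (.inl 0)), x (.inl (.inr 0)))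
  invFun y := Sum.elim (Sum.elim (Fin.cons y.2.1 (y.1 ∘ .inl ∘ .inl))
    (Fin.cons y.2.2 (y.1 ∘ .inl ∘ .inr))) (y.1 ∘ .inr)
  left_inv x := by
    ext ((i | i) | k)
    · exact congrFun (Fin.cons_self_tail (x ∘ .inl ∘ .inl)) i
    · exact congrFun (Fin.cons_self_tail (x ∘ .inl ∘ .inr)) i
    · rfl
  right_inv y := Prod.ext (by ext ((i | i) | k) <;> rfl) rfl
  map_add' _ _ := rfl
  map_smul' _ _ := rfl
  map_app' x := by
    simp [splitForm_apply, Fin.sum_univ_succ, add_comm, add_left_comm]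

theorem splitFormSuccEquiv_apply (r : ℕ) (x : (Fin (r + 1) ⊕ Fin (r + 1)) ⊕ κ → R) :
    splitFormSuccEquiv κ R r x =
      (x ∘ Sum.map (Sum.map Fin.succ Fin.succ) id, x (.inl (.inl 0)), x (.inl (.inr 0))) := rfl

theorem splitFormSuccEquiv_hyp_inl (r : ℕ) :
    splitFormSuccEquiv κ R r (hyp κ R (.inl 0)) = (0, (1, 0)) := by
  rw [splitFormSuccEquiv_apply]
  refine Prod.ext (funext ?_) (by simp)
  rintro ((i | i) | k) <;> simp

theorem splitFormSuccEquiv_hyp_inr (r : ℕ) :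
    splitFormSuccEquiv κ R r (hyp κ R (.inr 0)) = (0, (0, 1)) := by
  rw [splitFormSuccEquiv_apply]
  refine Prod.ext (funext ?_) (by simp)
  rintro ((i | i) | k) <;> simp

theorem equivalent_splitForm_of_forall_orbitRel [Subsingleton κ] {V : Type*} [AddCommGroup V]
    [Module R V] {Q : QuadraticForm R V} {r : ℕ}
    (h : (Q.prod (hyperbolicPlane R)).Equivalent (splitForm (Fin (r + 1)) κ R))
    (htrans : ∀ v, splitForm (Fin (r + 1)) κ R v = 0 → UnimodularOn Set.univ v →
      OrbitRel (RingHom.id R) (isometryGroup (splitMatrix _ κ) R) v (hyp κ R (.inl 0))) :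
    Q.Equivalent (splitForm (Fin r) κ R) := by
  obtain ⟨e⟩ := h
  have hleft : splitForm (Fin (r + 1)) κ R (e (0, (1, 0))) = 0 := by simp [e.map_app]
  have hright : splitForm (Fin (r + 1)) κ R (e (0, (0, 1))) = 0 := by simp [e.map_app]
  have hpolar : polar (splitForm (Fin (r + 1)) κ R) (e (0, (1, 0))) (e (0, (0, 1))) = 1 := by
    rw [polar_isometryEquiv_apply, polar_prod_hyperbolicPlane_right]
  obtain ⟨f, hfleft, hfright⟩ := exists_isometryEquiv_hyp
    (htrans _ hleft (unimodularOn_univ_of_polar_eq_one hleft hpolar)) hright hpolar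
  refine equivalent_of_isometryEquiv_prod_hyperbolicPlane
    ((e.trans f).trans (splitFormSuccEquiv κ R r)) ?_ ?_
  · exact (congrArg _ hfleft).trans (splitFormSuccEquiv_hyp_inl r)
  · exact (congrArg _ hfright).trans (splitFormSuccEquiv_hyp_inr r)

/-- The position of each coordinate of the split form in the basis `e_1, …, e_r, e_{-r}, …, e_{-1}`
of `R^{2r}`. -/
def evenIndexEquiv (r : ℕ) : (Fin r ⊕ Fin r) ⊕ Empty ≃ Fin (2 * r) :=
  (Equiv.sumEmpty _ _).trans <| ((Equiv.refl _).sumCongr Fin.revPerm).trans <|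
    finSumFinEquiv.trans (finCongr (two_mul r).symm)

/-- The position of each coordinate of the split form in the basis
`e_1, …, e_r, e_0, e_{-r}, …, e_{-1}` of `R^{2r+1}`. -/
def oddIndexEquiv (r : ℕ) : (Fin r ⊕ Fin r) ⊕ Unit ≃ Fin (2 * r + 1) :=
  (((Equiv.sumEmpty _ _).symm.trans (evenIndexEquiv r)).sumCongr (Equiv.refl _)).trans <|
    (Equiv.optionEquivSumPUnit _).symm.trans (finSuccEquiv' (midO r)).symm

theorem evenIndexEquiv_inl_inl {r : ℕ} (i : Fin r) :
    evenIndexEquiv r (.inl (.inl i)) = ⟨i, by lia⟩ := rfl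

theorem evenIndexEquiv_inl_inr {r : ℕ} (i : Fin r) :
    evenIndexEquiv r (.inl (.inr i)) = ⟨2 * r - 1 - i, by lia⟩ :=
  Fin.ext <| show r + (r - (i + 1)) = 2 * r - 1 - i by lia

theorem quadE_eq_splitForm (r : ℕ) (x : Fin (2 * r) → R) :
    quadE r x = splitForm (Fin r) Empty R (x ∘ evenIndexEquiv r) := by
  simp [quadE, splitForm_apply, evenIndexEquiv_inl_inl, evenIndexEquiv_inl_inr]

theorem oddIndexEquiv_inl {r : ℕ} (a : Fin r ⊕ Fin r) :
    oddIndexEquiv r (.inl a) = (midO r).succAbove (evenIndexEquiv r (.inl a)) := rfl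

theorem oddIndexEquiv_inl_inl {r : ℕ} (i : Fin r) :
    oddIndexEquiv r (.inl (.inl i)) = ⟨i, by lia⟩ := by
  rw [oddIndexEquiv_inl, evenIndexEquiv_inl_inl, Fin.succAbove_of_castSucc_lt _ _ i.2]
  rfl

theorem oddIndexEquiv_inl_inr {r : ℕ} (i : Fin r) :
    oddIndexEquiv r (.inl (.inr i)) = ⟨2 * r - i, by lia⟩ := by
  rw [oddIndexEquiv_inl, evenIndexEquiv_inl_inr, Fin.succAbove_of_le_castSucc]
  · exact Fin.ext <| show 2 * r - 1 - i + 1 = 2 * r - i by lia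
  · exact show r ≤ 2 * r - 1 - i by lia

theorem oddIndexEquiv_inr (r : ℕ) : oddIndexEquiv r (.inr ()) = midO r :=
  finSuccEquiv'_symm_none _

theorem quadO_eq_splitForm (r : ℕ) (x : Fin (2 * r + 1) → R) :
    quadO r x = splitForm (Fin r) Unit R (x ∘ oddIndexEquiv r) := by
  simp [quadO, splitForm_apply, oddIndexEquiv_inl_inl, oddIndexEquiv_inl_inr, oddIndexEquiv_inr,
    pow_two, add_comm]

end SplitForm

section Cancellation

open QuadraticMap

variable {κ : Type*} [Fintype κ] [DecidableEq κ] [Subsingleton κ]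

theorem equivalent_splitForm_of_prod_hyperbolicPlane {C : Type*} [CommRing C] [IsNoetherianRing C]
    {n D r : ℕ} (hdim : ringKrullDim C ≤ D) (hr : max 3 (D + 2) ≤ r + 1) {V : Type*}
    [AddCommGroup V] [Module (MvPolynomial (Fin n) C) V]
    {Q : QuadraticForm (MvPolynomial (Fin n) C) V}
    (h : (Q.prod (hyperbolicPlane _)).Equivalent (splitForm (Fin (r + 1)) κ _)) :
    Q.Equivalent (splitForm (Fin r) κ _) := by
  rw [max_le_iff, ← Fintype.card_fin (r + 1)] at hr
  exact equivalent_splitForm_of_forall_orbitRel h fun v hQ hv ↦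
    orbitRel_hyp_of_unimodularOn_univ_mvPolynomial hr.1 hr.2 0 n hdim hQ hv

theorem exists_linearEquiv_of_splitForm_comp {C : Type*} [CommRing C] [IsNoetherianRing C]
    {n D r : ℕ} (hdim : ringKrullDim C ≤ D) (hr : max 3 (D + 2) ≤ r + 1) {V : Type*}
    [AddCommGroup V] [Module (MvPolynomial (Fin n) C) V]
    (Q : QuadraticForm (MvPolynomial (Fin n) C) V) {J J' : Type*}
    (ε : (Fin (r + 1) ⊕ Fin (r + 1)) ⊕ κ ≃ J) (ε' : (Fin r ⊕ Fin r) ⊕ κ ≃ J')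
    (e : (V × MvPolynomial (Fin n) C × MvPolynomial (Fin n) C) ≃ₗ[MvPolynomial (Fin n) C]
      (J → MvPolynomial (Fin n) C))
    (he : ∀ x, splitForm _ κ _ (e x ∘ ε) = Q x.1 + x.2.1 * x.2.2) :
    ∃ f : V ≃ₗ[MvPolynomial (Fin n) C] (J' → MvPolynomial (Fin n) C),
      ∀ v, Q v = splitForm _ κ _ (f v ∘ ε') := by
  obtain ⟨f⟩ := equivalent_splitForm_of_prod_hyperbolicPlane hdim hr
    ⟨⟨e.trans (LinearEquiv.funCongrLeft _ _ ε), he⟩⟩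
  refine ⟨f.toLinearEquiv.trans (LinearEquiv.funCongrLeft _ _ ε').symm, fun v ↦ ?_⟩
  rw [← f.map_app]
  exact congrArg _ ((LinearEquiv.funCongrLeft _ _ ε').apply_symm_apply (f v)).symm

end Cancellation

/-- Cancellation of a hyperbolic plane: if the orthogonal sum of a quadratic module `(V,q)`
over `A = C[x_1,…,x_n]` with a hyperbolic plane is isometric to the free module of rank `2r`
(resp. `2r+1`) with the split quadratic form, where `r ≥ max(3, D+2)` and `D = dim C`,
then `V` is free and `q` is split of the corresponding rank `2r−2` (resp. `2r−1`). -/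
theorem hyperbolic_cancellation
    (C : Type*) [CommRing C] [IsNoetherianRing C] (n D : ℕ)
    (hdim : ringKrullDim C = (D : WithBot ℕ∞))
    (r : ℕ) (hr : max 3 (D + 2) ≤ r)
    (V : Type*) [AddCommGroup V] [Module (MvPolynomial (Fin n) C) V]
    (q : V → MvPolynomial (Fin n) C)
    (hq_smul : ∀ (a : MvPolynomial (Fin n) C) (v : V), q (a • v) = a ^ 2 * q v)
    (hq_polar_add : ∀ x x' y : V,
      (q (x + x' + y) - q (x + x') - q y) =
        (q (x + y) - q x - q y) + (q (x' + y) - q x' - q y))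
    (hq_polar_smul : ∀ (a : MvPolynomial (Fin n) C) (x y : V),
      q (a • x + y) - q (a • x) - q y = a * (q (x + y) - q x - q y)) :
    (∀ e : (V × (MvPolynomial (Fin n) C × MvPolynomial (Fin n) C)) ≃ₗ[MvPolynomial (Fin n) C]
        (Fin (2 * r) → MvPolynomial (Fin n) C),
      (∀ v, quadE r (e v) = q v.1 + v.2.1 * v.2.2) →
      ∃ f : V ≃ₗ[MvPolynomial (Fin n) C] (Fin (2 * (r - 1)) → MvPolynomial (Fin n) C),
        ∀ v, q v = quadE (r - 1) (f v)) ∧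
    (∀ e : (V × (MvPolynomial (Fin n) C × MvPolynomial (Fin n) C)) ≃ₗ[MvPolynomial (Fin n) C]
        (Fin (2 * r + 1) → MvPolynomial (Fin n) C),
      (∀ v, quadO r (e v) = q v.1 + v.2.1 * v.2.2) →
      ∃ f : V ≃ₗ[MvPolynomial (Fin n) C] (Fin (2 * (r - 1) + 1) → MvPolynomial (Fin n) C),
        ∀ v, q v = quadO (r - 1) (f v)) := by
  obtain ⟨r, rfl⟩ := Nat.exists_eq_add_of_le' (show 1 ≤ r by lia)
  let Q := QuadraticMap.ofPolar q (fun a v ↦ by rw [hq_smul, pow_two, smul_eq_mul])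
    hq_polar_add hq_polar_smul
  simp only [quadE_eq_splitForm, quadO_eq_splitForm]
  exact ⟨exists_linearEquiv_of_splitForm_comp hdim.le hr Q (evenIndexEquiv _) (evenIndexEquiv _),
    exists_linearEquiv_of_splitForm_comp hdim.le hr Q (oddIndexEquiv _) (oddIndexEquiv _)⟩
end

section
/- Let C be a commutative Noetherian ring with Krull dimension D < ∞, A = C[x_1,…,x_n], and r ≥ max(3, D+2). Then for every column b ∈ IUm_{2r}(A) there exists a column b′ ∈ EO(2r,A)^{≤ 11r−7} · b such that its entry b′_{−2} is lexicographically monic. -/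
open Matrix

/-- A multivariate polynomial is lexicographically monic if the coefficient at the
lexicographically largest occurring monomial equals `1` (variables with smaller index
are more significant). -/
def LexMonic {C : Type*} [CommRing C] {n : ℕ} (f : MvPolynomial (Fin n) C) : Prop :=
  ∃ d : Fin n →₀ ℕ, f.coeff d = 1 ∧ ∀ e : Fin n →₀ ℕ, toLex d < toLex e → f.coeff e = 0

/-!
Call a prime of `A = C[x_1,…,x_n]` bad if it contains no lexicographically monic polynomial. Bad
primes have height at most `dim C`: one variable at a time, either a prime `P` of `B[x]` is
extended from its contraction `p` to `B`, or the leading coefficient of some element of `P` lies in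
a strictly larger bad prime `q` of `B`, and then `ht P ≤ ht p + 1 ≤ ht q`. By prime avoidance,
`r - 1 > dim C` elements of `A` in general position therefore lie in no common bad prime, so the
ideal they generate contains a lexicographically monic polynomial, and adding a multiple of such a
polynomial makes any other polynomial lexicographically monic.

Moving into general position is done with Eichler–Siegel–Dickson transvections, products of `r - 1`
elementary ones: these add arbitrary multiples of one coordinate `b_k` to half of the coordinates
other than `b_{±k}`, at the cost of changing `b_{-k}`. After two of them (with pivots `k` and `-k`)
the coordinates other than `b_{±k}` lie in no common bad prime. A third one achieves the same for
`b_{-k}` together with one half, and a fourth one, with pivot `-k`, for this half alone. The fifth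
one then adds a suitable combination of this half to `b_{-k}`.
-/

/-- `p` is a prime ideal containing no element of `S`; when `S` is a multiplicative set these are
the primes surviving in the localization at `S`. -/
structure IsPrimeAvoiding {A : Type*} [CommRing A] (S : Set A) (p : Ideal A) : Prop where
  isPrime : p.IsPrime
  disjoint : Disjoint (p : Set A) S

section PrimeAvoiding

variable {A : Type*} [CommRing A]

theorem IsPrimeAvoiding.notMem {S : Set A} {p : Ideal A} (hp : IsPrimeAvoiding S p) {f : A}
    (hf : f ∈ S) : f ∉ p :=
  Set.disjoint_right.mp hp.disjoint hf

theorem exists_mem_of_forall_isPrimeAvoiding_not_le (S : Submonoid A) (I : Ideal A)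
    (h : ∀ p, IsPrimeAvoiding (S : Set A) p → ¬ I ≤ p) : ∃ f ∈ I, f ∈ S := by
  by_contra! hI
  obtain ⟨p, hp, hIp, hpS⟩ := I.exists_le_prime_disjoint S (Set.disjoint_left.mpr hI)
  exact h p ⟨hp, hpS⟩ hIp

theorem exists_mem_forall_add_notMem (Q : Finset (Ideal A)) (hQ : ∀ q ∈ Q, q.IsPrime)
    (K : Ideal A) (hK : ∀ q ∈ Q, ¬ K ≤ q) (a : A) : ∃ t ∈ K, ∀ q ∈ Q, a + t ∉ q := by
  classical
  let M := Q.filter (Maximal (· ∈ Q))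
  have hM {q : Ideal A} (hq : q ∈ M) : Maximal (· ∈ Q) q := (Finset.mem_filter.mp hq).2
  -- `t` is taken in every maximal `q ∌ a` and outside every maximal `q ∋ a`.
  let J : Ideal A := K ⊓ (M.filter (a ∉ ·)).inf id
  have hJ : ¬ (J : Set A) ⊆ ⋃ q ∈ (M.filter (a ∈ ·) : Set (Ideal A)), (q : Set A) := by
    rw [Ideal.subset_union_prime (f := fun q ↦ q) ⊥ ⊥
      fun q hq _ _ ↦ hQ q (hM (Finset.mem_filter.mp hq).1).prop]
    rintro ⟨q, hq, hJq⟩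
    obtain ⟨hqM, haq⟩ := Finset.mem_filter.mp hq
    have hqQ := (hM hqM).prop
    obtain ⟨q', hq', hle⟩ :=
      (hQ q hqQ).inf_le'.mp (((hQ q hqQ).inf_le.mp hJq).resolve_left (hK q hqQ))
    obtain ⟨hq'M, haq'⟩ := Finset.mem_filter.mp hq'
    exact haq' ((hM hq'M).eq_of_le hqQ hle ▸ haq)
  obtain ⟨t, ht, htn⟩ := Set.not_subset.mp hJ
  refine ⟨t, ht.1, fun q hq hmem ↦ ?_⟩
  obtain ⟨m, hqm, hm⟩ := Q.exists_le_maximal hq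
  have hmM : m ∈ M := Finset.mem_filter.mpr ⟨hm.prop, hm⟩
  by_cases ham : a ∈ m
  · exact htn (Set.mem_biUnion (Finset.mem_filter.mpr ⟨hmM, ham⟩)
      ((m.add_mem_iff_right ham).mp (hqm hmem)))
  · have htm : t ∈ m := Finset.inf_le (f := id) (Finset.mem_filter.mpr ⟨hmM, ham⟩) ht.2
    exact ham ((m.add_mem_iff_left htm).mp (hqm hmem))

variable [IsNoetherianRing A] {ι : Type*}

theorem exists_forall_mem_card_le_height (s : Finset ι) (a : ι → A) (K : Ideal A) :
    ∃ t : ι → A, (∀ i, t i ∈ K) ∧ ∀ p : Ideal A, p.IsPrime → (∀ i ∈ s, a i + t i ∈ p) →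
      ¬ K ≤ p → (s.card : ℕ∞) ≤ p.height := by
  classical
  induction s using Finset.induction_on with
  | empty => exact ⟨0, fun _ ↦ K.zero_mem, fun p _ _ _ ↦ by simp⟩
  | insert j s hj ih =>
    obtain ⟨t, htK, ht⟩ := ih
    let I : Ideal A := Ideal.span ((fun i ↦ a i + t i) '' s)
    let Q := (I.finite_minimalPrimes_of_isNoetherianRing A).toFinset.filter (¬ K ≤ ·)
    have mem_Q {q : Ideal A} : q ∈ Q ↔ q ∈ I.minimalPrimes ∧ ¬ K ≤ q := by simp [Q]
    obtain ⟨u, huK, hu⟩ := exists_mem_forall_add_notMem Q (fun q hq ↦ (mem_Q.mp hq).1.isPrime)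
      K (fun q hq ↦ (mem_Q.mp hq).2) (a j)
    refine ⟨Function.update t j u, fun i ↦ ?_, fun p hp hmem hKp ↦ ?_⟩
    · rcases eq_or_ne i j with rfl | hij
      · simpa using huK
      · simpa [hij] using htK i
    have hIp : I ≤ p := by
      rw [Ideal.span_le, Set.image_subset_iff]
      intro i hi
      simpa [ne_of_mem_of_not_mem hi hj] using hmem i (Finset.mem_insert_of_mem hi)
    obtain ⟨q, hq, hqp⟩ := Ideal.exists_minimalPrimes_le hIp
    have hKq : ¬ K ≤ q := fun h ↦ hKp (h.trans hqp)
    have hq_prime := hq.isPrime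
    have hlt : q < p := by
      refine lt_of_le_of_ne hqp ?_
      rintro rfl
      exact hu q (mem_Q.mpr ⟨hq, hKq⟩) (by simpa using hmem j (Finset.mem_insert_self j s))
    calc ((insert j s).card : ℕ∞) = s.card + 1 := by
          rw [Finset.card_insert_of_notMem hj, Nat.cast_add_one]
      _ ≤ q.height + 1 := by
          gcongr
          exact ht q hq_prime (fun i hi ↦ hq.le (Ideal.subset_span ⟨i, hi, rfl⟩)) hKq
      _ ≤ p.height := Ideal.height_add_one_le_of_lt_of_isPrime hlt

variable [Fintype ι] {S : Set A}
  (hS : ∀ p, IsPrimeAvoiding S p → p.height < (Fintype.card ι : ℕ∞))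

include hS

theorem exists_forall_mem_isPrimeAvoiding_le (a : ι → A) (K : Ideal A) :
    ∃ t : ι → A, (∀ i, t i ∈ K) ∧
      ∀ p, IsPrimeAvoiding S p → (∀ i, a i + t i ∈ p) → K ≤ p := by
  obtain ⟨t, htK, ht⟩ := exists_forall_mem_card_le_height Finset.univ a K
  refine ⟨t, htK, fun p hp hmem ↦ ?_⟩
  by_contra hKp
  exact (hS p hp).not_ge (ht p hp.isPrime (fun i _ ↦ hmem i) hKp)

theorem exists_forall_isPrimeAvoiding_mem (a : ι → A) (x : A) :
    ∃ t : ι → A, ∀ p, IsPrimeAvoiding S p → (∀ i, a i + t i * x ∈ p) →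
      x ∈ p ∧ ∀ i, a i ∈ p := by
  obtain ⟨t, ht, hp⟩ := exists_forall_mem_isPrimeAvoiding_le hS a (Ideal.span {x})
  choose u hu using fun i ↦ Ideal.mem_span_singleton'.mp (ht i)
  simp only [← hu] at hp
  refine ⟨u, fun p hpS hmem ↦ ?_⟩
  have hx : x ∈ p := hp p hpS hmem (Ideal.mem_span_singleton_self x)
  exact ⟨hx, fun i ↦ (p.add_mem_iff_left (p.mul_mem_left _ hx)).mp (hmem i)⟩

theorem exists_forall_mem_span_isPrimeAvoiding_mem (a u : ι → A) (x : A) :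
    ∃ t : ι → A, (∀ i, t i - u i ∈ Ideal.span (Set.range a)) ∧
      ∀ p, IsPrimeAvoiding S p → (∀ i, a i + t i * x ∈ p) → ∀ i, a i ∈ p := by
  let I := Ideal.span (Set.range a)
  obtain ⟨μ, hμ, hle⟩ := exists_forall_mem_isPrimeAvoiding_le hS
    (fun i ↦ a i + u i * x) (Ideal.span {x} * I)
  choose l hlI hlμ using fun i ↦ Ideal.mem_span_singleton_mul.mp (hμ i)
  refine ⟨fun i ↦ u i + l i, fun i ↦ by simpa using hlI i, fun p hp hmem i ↦ ?_⟩
  have hK : Ideal.span {x} * I ≤ p := hle p hp fun i ↦ by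
    convert hmem i using 1
    rw [← hlμ]; ring
  rcases hp.isPrime.mul_le.mp hK with hx | hI
  · have hxp : x ∈ p := hx (Ideal.mem_span_singleton_self x)
    exact (p.add_mem_iff_left (p.mul_mem_left _ hxp)).mp (hmem i)
  · exact hI (Ideal.subset_span ⟨i, rfl⟩)

end PrimeAvoiding

section PolynomialHeight

open Polynomial

variable {B : Type*} [CommRing B]

theorem le_map_C_of_leadingCoeff_mem {P : Ideal B[X]} {p : Ideal B} (hpP : p.map C ≤ P)
    (h : ∀ f ∈ P, f.leadingCoeff ∈ p) : P ≤ p.map C := by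
  intro f hf
  induction hn : f.support.card using Nat.strong_induction_on generalizing f with
  | h n ih =>
    rcases eq_or_ne f 0 with rfl | hf0
    · exact zero_mem _
    have hlead : C f.leadingCoeff * X ^ f.natDegree ∈ p.map C :=
      Ideal.mul_mem_right _ _ (Ideal.mem_map_of_mem C (h f hf))
    rw [← f.eraseLead_add_C_mul_X_pow] at hf ⊢
    exact add_mem (ih _ (hn ▸ eraseLead_support_card_lt hf0)
      ((P.add_mem_iff_left (hpP hlead)).mp hf) rfl) hlead

variable [IsNoetherianRing B]

theorem height_map_C_le_of_isPrime (p : Ideal B) [p.IsPrime] : (p.map C).height ≤ p.height := by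
  have : (p.map (C : B →+* B[X])).IsPrime := Ideal.isPrime_map_C_of_isPrime
  have : (p.map (C : B →+* B[X])).LiesOver p := ⟨by
    ext; simp [Ideal.under_def, Ideal.mem_map_C_iff, coeff_C, apply_ite]⟩
  simpa using Ideal.height_le_height_add_of_liesOver p (p.map (C : B →+* B[X]))

theorem height_le_height_comap_C_add_one (P : Ideal B[X]) [P.IsPrime] :
    P.height ≤ (P.comap C).height + 1 := by
  -- Localizing at the contraction `p` of `P` reduces the bound to `dim Bₚ[X] = dim Bₚ + 1`.
  let p := P.comap (C : B →+* B[X])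
  let Bₚ := Localization.AtPrime p
  let : Algebra B[X] Bₚ[X] := Polynomial.algebra B Bₚ
  have : IsLocalization (p.primeCompl.map C) Bₚ[X] := Polynomial.isLocalization p.primeCompl Bₚ
  have hdisj : Disjoint (p.primeCompl.map C : Set B[X]) P := by
    rw [Set.disjoint_left]
    rintro _ ⟨b, hb, rfl⟩ hbP
    exact hb hbP
  have := IsLocalization.isPrime_of_isPrime_disjoint _ Bₚ[X] P inferInstance hdisj
  have h := (P.map (algebraMap B[X] Bₚ[X])).height_le_ringKrullDim_of_isPrime
  rw [IsLocalization.height_map_of_disjoint _ _ hdisj, ringKrullDim_of_isNoetherianRing,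
    IsLocalization.AtPrime.ringKrullDim_eq_height p] at h
  exact_mod_cast h

/-- The polynomials with leading coefficient in `S`, for `0 ∉ S`. The exponent `d` is not required
to be the degree so that the case of the zero ring, where `0 ∈ S`, needs no special treatment. -/
def leadingCoeffIn (S : Set B) : Set B[X] :=
  {f | ∃ d, f.natDegree ≤ d ∧ f.coeff d ∈ S}

theorem height_le_of_isPrimeAvoiding_leadingCoeffIn {S : Submonoid B} {D : ℕ∞}
    (hS : ∀ p, IsPrimeAvoiding (S : Set B) p → p.height ≤ D) {P : Ideal B[X]}
    (hP : IsPrimeAvoiding (leadingCoeffIn S) P) : P.height ≤ D := by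
  have := hP.isPrime
  let p := P.comap (C : B →+* B[X])
  have hpS : IsPrimeAvoiding (S : Set B) p :=
    ⟨inferInstance, Set.disjoint_right.mpr fun s hs ↦ hP.notMem ⟨0, by simp, by simpa⟩⟩
  by_cases hlead : ∀ f ∈ P, f.leadingCoeff ∈ p
  · have hPp : P ≤ p.map C := le_map_C_of_leadingCoeff_mem Ideal.map_comap_le hlead
    exact (Ideal.height_mono hPp).trans <| (height_map_C_le_of_isPrime p).trans (hS p hpS)
  push Not at hlead
  obtain ⟨f, hfP, hfp⟩ := hlead
  have hdisj : Disjoint ((p ⊔ Ideal.span {f.leadingCoeff} : Ideal B) : Set B) S := by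
    rw [Set.disjoint_left]
    intro s hs hsS
    obtain ⟨y, hy, z, hz, rfl⟩ := Submodule.mem_sup.mp hs
    obtain ⟨w, rfl⟩ := Ideal.mem_span_singleton'.mp hz
    refine hP.notMem (f := C y * X ^ f.natDegree + C w * f) ⟨f.natDegree, ?_, ?_⟩
      (P.add_mem (P.mul_mem_right _ hy) (P.mul_mem_left _ hfP))
    · exact natDegree_add_le_of_degree_le (natDegree_C_mul_X_pow_le _ _) (natDegree_C_mul_le _ _)
    · simpa using hsS
  obtain ⟨q, hq, hpq, hqS⟩ := Ideal.exists_le_prime_disjoint _ S hdisj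
  have hlt : p < q := SetLike.lt_iff_le_and_exists.mpr ⟨le_sup_left.trans hpq, f.leadingCoeff,
    hpq (Ideal.mem_sup_right (Ideal.mem_span_singleton_self _)), hfp⟩
  calc P.height ≤ p.height + 1 := height_le_height_comap_C_add_one P
    _ ≤ q.height := Ideal.height_add_one_le_of_lt_of_isPrime hlt
    _ ≤ D := hS q ⟨hq, hqS⟩

end PolynomialHeight

section LexMonic

open MvPolynomial

variable {C : Type*} [CommRing C] {n : ℕ}

theorem lexMonic_iff_monic {f : MvPolynomial (Fin n) C} :
    LexMonic f ↔ MonomialOrder.lex.Monic f := by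
  constructor
  · rintro ⟨d, hd, hlt⟩
    nontriviality C
    have hdeg : MonomialOrder.lex.degree f = d := by
      apply MonomialOrder.lex.toSyn.injective
      refine le_antisymm (MonomialOrder.lex.degree_le_iff.mpr fun e he ↦ ?_)
        (MonomialOrder.lex.le_degree (mem_support_iff.mpr (by simp [hd])))
      by_contra! hde
      exact mem_support_iff.mp he (hlt e (MonomialOrder.lex_lt_iff.mp hde))
    rw [MonomialOrder.Monic, MonomialOrder.leadingCoeff, hdeg, hd]
  · intro hf
    exact ⟨MonomialOrder.lex.degree f, hf, fun e he ↦
      MonomialOrder.lex.coeff_eq_zero_of_lt (MonomialOrder.lex_lt_iff.mpr he)⟩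

/-- The multiplicative set of lexicographically monic polynomials. -/
def lexMonicSubmonoid (C : Type*) [CommRing C] (n : ℕ) : Submonoid (MvPolynomial (Fin n) C) where
  carrier := {f | LexMonic f}
  one_mem' := lexMonic_iff_monic.mpr MonomialOrder.monic_one
  mul_mem' hf hg := lexMonic_iff_monic.mpr
    ((lexMonic_iff_monic.mp hf).mul (lexMonic_iff_monic.mp hg))

theorem toLex_cons_lt_toLex_cons_iff {i j : ℕ} {m m' : Fin n →₀ ℕ} :
    toLex (Finsupp.cons i m) < toLex (Finsupp.cons j m') ↔
      i < j ∨ i = j ∧ toLex m < toLex m' := by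
  simp [Finsupp.Lex.lt_iff, Fin.exists_fin_succ, Fin.forall_fin_succ, and_assoc]

theorem lexMonic_succ_iff {f : MvPolynomial (Fin (n + 1)) C} :
    LexMonic f ↔ finSuccEquiv C n f ∈ leadingCoeffIn (lexMonicSubmonoid C n) := by
  constructor
  · rintro ⟨d, hd, hlt⟩
    rw [← Finsupp.cons_tail d] at hd hlt
    refine ⟨d 0, Polynomial.natDegree_le_iff_coeff_eq_zero.mpr fun i hi ↦ ?_, d.tail, ?_,
      fun m hm ↦ ?_⟩
    · ext m
      rw [finSuccEquiv_coeff_coeff, coeff_zero]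
      exact hlt _ (toLex_cons_lt_toLex_cons_iff.mpr (Or.inl hi))
    · rw [finSuccEquiv_coeff_coeff, hd]
    · rw [finSuccEquiv_coeff_coeff]
      exact hlt _ (toLex_cons_lt_toLex_cons_iff.mpr (Or.inr ⟨rfl, hm⟩))
  · rintro ⟨i, hdeg, d, hd, hlt⟩
    refine ⟨d.cons i, by rw [← finSuccEquiv_coeff_coeff, hd], fun e he ↦ ?_⟩
    rw [← Finsupp.cons_tail e] at he ⊢
    rw [← finSuccEquiv_coeff_coeff]
    rcases toLex_cons_lt_toLex_cons_iff.mp he with h | ⟨rfl, h⟩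
    · rw [Polynomial.coeff_eq_zero_of_natDegree_lt (hdeg.trans_lt h), coeff_zero]
    · exact hlt _ h

theorem lexMonic_fin_zero_iff {f : MvPolynomial (Fin 0) C} : LexMonic f ↔ f = 1 := by
  constructor
  · rintro ⟨d, hd, -⟩
    ext m
    rw [Subsingleton.elim m d, hd, Subsingleton.elim d 0, coeff_zero_one]
  · rintro rfl
    exact (lexMonicSubmonoid C 0).one_mem

theorem LexMonic.exists_lexMonic_add_mul {f : MvPolynomial (Fin n) C} (hf : LexMonic f)
    (y : MvPolynomial (Fin n) C) : ∃ h, LexMonic (y + h * f) := by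
  cases n with
  | zero =>
    obtain rfl := lexMonic_fin_zero_iff.mp hf
    exact ⟨1 - y, lexMonic_fin_zero_iff.mpr (by ring)⟩
  | succ n =>
    obtain ⟨d, hdeg, hd⟩ := lexMonic_succ_iff.mp hf
    let N := (finSuccEquiv C n y).natDegree + 1
    refine ⟨X 0 ^ N, lexMonic_succ_iff.mpr ⟨d + N, ?_, ?_⟩⟩ <;>
      rw [map_add, map_mul, map_pow, finSuccEquiv_X_zero]
    · refine Polynomial.natDegree_add_le_of_degree_le (by omega) ?_
      rw [add_comm d]
      exact Polynomial.natDegree_mul_le_of_le (Polynomial.natDegree_X_pow_le N) hdeg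
    · rwa [Polynomial.coeff_add, Polynomial.coeff_X_pow_mul,
        Polynomial.coeff_eq_zero_of_natDegree_lt (by omega), zero_add]

theorem height_le_of_isPrimeAvoiding_lexMonicSubmonoid [IsNoetherianRing C] {D : ℕ∞}
    (hC : ringKrullDim C ≤ D) {P : Ideal (MvPolynomial (Fin n) C)}
    (hP : IsPrimeAvoiding (lexMonicSubmonoid C n : Set (MvPolynomial (Fin n) C)) P) :
    P.height ≤ D := by
  induction n with
  | zero =>
    have := hP.isPrime
    have h := P.height_le_ringKrullDim_of_isPrime
    rw [ringKrullDim_eq_of_ringEquiv (isEmptyRingEquiv C (Fin 0))] at h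
    exact_mod_cast h.trans hC
  | succ n ih =>
    let e := (finSuccEquiv C n).toRingEquiv
    have := hP.isPrime
    rw [← e.height_map]
    refine height_le_of_isPrimeAvoiding_leadingCoeffIn (S := lexMonicSubmonoid C n)
      (fun p hp ↦ ih hp) ⟨Ideal.map_isPrime_of_equiv e, Set.disjoint_left.mpr fun f hfP hf ↦ ?_⟩
    rw [SetLike.mem_coe, ← Ideal.comap_symm, Ideal.mem_comap] at hfP
    refine hP.notMem (lexMonic_succ_iff.mpr ?_) hfP
    rwa [show finSuccEquiv C n (e.symm f) = f from e.apply_symm_apply f]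

end LexMonic

section OrthogonalMoves

variable {R : Type*} [CommRing R] {r : ℕ}

theorem negE_negE (i : Fin (2 * r)) : negE r (negE r i) = i := by
  ext; simp only [negE]; omega

theorem negE_ne (i : Fin (2 * r)) : negE r i ≠ i := by
  rw [Ne, Fin.ext_iff]; simp only [negE]; omega

theorem negE_injective : Function.Injective (negE r) :=
  Function.LeftInverse.injective negE_negE

theorem TE_mulVec (i j : Fin (2 * r)) (ξ : R) (v : Fin (2 * r) → R) :
    TE r i j ξ *ᵥ v =
      v + (Pi.single i (ξ * v j) - Pi.single (negE r j) (ξ * v (negE r i))) := by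
  ext m
  simp [TE, sub_mulVec, add_mulVec, single_mulVec, Pi.single_apply,
    Function.update_apply, add_sub_assoc]

theorem EOE_mono {N M : ℕ} (hNM : N ≤ M) : EOE r N R ⊆ EOE r M R :=
  fun _ ⟨L, hL, hE⟩ ↦ ⟨L, hL.trans hNM, hE⟩

/-- `b'` is obtained from `b` by at most `N` elementary orthogonal transvections, i.e.
`b' ∈ EO(2r,R)^{≤N} · b`. -/
def EReachable (r N : ℕ) (b b' : Fin (2 * r) → R) : Prop :=
  ∃ E ∈ EOE r N R, E *ᵥ b = b'

namespace EReachable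

variable {N M : ℕ} {b b' b'' : Fin (2 * r) → R}

theorem refl (b : Fin (2 * r) → R) : EReachable r 0 b b :=
  ⟨1, ⟨[], by simp⟩, one_mulVec b⟩

theorem trans (h : EReachable r N b b') (h' : EReachable r M b' b'') :
    EReachable r (N + M) b b'' := by
  obtain ⟨_, ⟨L, hL, hLelem, rfl⟩, rfl⟩ := h
  obtain ⟨_, ⟨L', hL', hLelem', rfl⟩, rfl⟩ := h'
  refine ⟨(L' ++ L).prod, ⟨L' ++ L, ?_, fun g hg ↦ ?_, rfl⟩, ?_⟩
  · rw [List.length_append]; omega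
  · exact (List.mem_append.mp hg).elim (hLelem' g) (hLelem g)
  · rw [List.prod_append, mulVec_mulVec]

theorem of_TE {i j : Fin (2 * r)} (hij : i ≠ j) (hij' : i ≠ negE r j) (ξ : R)
    (b : Fin (2 * r) → R) : EReachable r 1 b (TE r i j ξ *ᵥ b) :=
  ⟨TE r i j ξ, ⟨[TE r i j ξ], by simp, by simpa using ⟨i, j, ξ, hij, hij', rfl⟩, by simp⟩, rfl⟩

end EReachable

/-- The basis vectors `e_k`, `e_{-k}` span a hyperbolic plane, and the `e_{e i}` are a basis of a
maximal totally isotropic subspace of its orthogonal complement; thus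
`k`, `-k`, `e i`, `-e i` enumerate all `2r` indices without repetition. -/
structure IsHyperbolicFrame {ι : Type*} (k : Fin (2 * r)) (e : ι → Fin (2 * r)) : Prop where
  injective : Function.Injective e
  ne_pivot (i : ι) : e i ≠ k
  ne_neg_pivot (i : ι) : e i ≠ negE r k
  ne_neg (i j : ι) : e i ≠ negE r (e j)
  cover (m : Fin (2 * r)) : m = k ∨ m = negE r k ∨ (∃ i, m = e i) ∨ ∃ i, m = negE r (e i)

namespace IsHyperbolicFrame

variable {ι : Type*} {k : Fin (2 * r)} {e : ι → Fin (2 * r)}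

theorem neg_pivot (he : IsHyperbolicFrame k e) : IsHyperbolicFrame (negE r k) e where
  injective := he.injective
  ne_pivot := he.ne_neg_pivot
  ne_neg_pivot i := by simpa [negE_negE] using he.ne_pivot i
  ne_neg := he.ne_neg
  cover m := by simpa [negE_negE, or_left_comm] using he.cover m

theorem neg (he : IsHyperbolicFrame k e) : IsHyperbolicFrame k fun i ↦ negE r (e i) where
  injective := negE_injective.comp he.injective
  ne_pivot i h := he.ne_neg_pivot i (by rw [← h, negE_negE])
  ne_neg_pivot i h := he.ne_pivot i (negE_injective h)
  ne_neg i j h := he.ne_neg i j (negE_injective h)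
  cover m := by simpa [negE_negE, or_comm (a := ∃ i, m = e i)] using he.cover m

end IsHyperbolicFrame

theorem exists_isHyperbolicFrame (k : Fin (2 * r)) :
    ∃ e : Fin (r - 1) → Fin (2 * r), IsHyperbolicFrame k e := by
  wlog hk : k.val < r generalizing k
  · obtain ⟨e, he⟩ := this (negE r k) (by simp only [negE]; omega)
    exact ⟨e, negE_negE k ▸ he.neg_pivot⟩
  refine ⟨fun i ↦ ⟨if i.val < k.val then i else i + 1, by split_ifs <;> omega⟩,
    fun i j hij ↦ ?_, fun i ↦ ?_, fun i ↦ ?_, fun i j ↦ ?_, fun m ↦ ?_⟩ <;>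
    simp only [negE, Fin.ext_iff, Fin.exists_iff, ne_eq] at *
  · split_ifs at hij <;> omega
  · split_ifs <;> omega
  · split_ifs <;> omega
  · split_ifs <;> omega
  · have hsurj : ∀ x < r, x ≠ k → ∃ i, ∃ _ : i < r - 1, x = if i < k.val then i else i + 1 :=
      fun x hx hxk ↦ ⟨if x < k then x else x - 1, by split_ifs <;> omega, by split_ifs <;> omega⟩
    by_cases hm : m.val < r
    · have := hsurj m hm
      tauto
    by_cases hmk : 2 * r - 1 - m.val = k
    · omega
    · obtain ⟨i, hi, hmi⟩ := hsurj _ (by omega) hmk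
      exact Or.inr (Or.inr (Or.inr ⟨i, hi, by omega⟩))

section Siegel

variable {ι : Type*} {k : Fin (2 * r)} {e : ι → Fin (2 * r)}

/-- The Eichler–Siegel–Dickson transvection adding `t i` times the pivot coordinate `b k` to the
coordinates `b (e i)`, for those `i` in `s`, and correcting `b (-k)` so as to preserve the quadratic
form. -/
def siegel (k : Fin (2 * r)) (e : ι → Fin (2 * r)) (t : ι → R) (s : Finset ι)
    (b : Fin (2 * r) → R) : Fin (2 * r) → R :=
  b + ∑ i ∈ s, (Pi.single (e i) (t i * b k) - Pi.single (negE r k) (t i * b (negE r (e i))))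

variable (he : IsHyperbolicFrame k e) (t : ι → R) (s : Finset ι) (b : Fin (2 * r) → R)

include he

theorem siegel_apply_pivot : siegel k e t s b k = b k := by
  simp [siegel, Finset.sum_apply, (he.ne_pivot _).symm, (negE_ne k).symm]

theorem siegel_apply_neg_pivot :
    siegel k e t s b (negE r k) = b (negE r k) - ∑ i ∈ s, t i * b (negE r (e i)) := by
  simp [siegel, Finset.sum_apply, (he.ne_neg_pivot _).symm, sub_eq_add_neg]

theorem siegel_apply_neg (i : ι) : siegel k e t s b (negE r (e i)) = b (negE r (e i)) := by
  have hk : negE r (e i) ≠ negE r k := fun h ↦ he.ne_pivot i (negE_injective h)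
  simp [siegel, Finset.sum_apply, (he.ne_neg _ i).symm, hk]

theorem siegel_apply_of_mem {i : ι} (hi : i ∈ s) :
    siegel k e t s b (e i) = b (e i) + t i * b k := by
  classical
  simp [siegel, Finset.sum_apply, Pi.single_apply, he.injective.eq_iff, he.ne_neg_pivot i, hi]

theorem eReachable_siegel : EReachable r s.card b (siegel k e t s b) := by
  classical
  induction s using Finset.induction_on with
  | empty => simpa [siegel] using EReachable.refl b
  | insert i s hi ih =>
    have hstep := EReachable.of_TE (he.ne_pivot i) (he.ne_neg_pivot i) (t i) (siegel k e t s b)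
    rw [TE_mulVec, siegel_apply_pivot he, siegel_apply_neg he] at hstep
    rw [Finset.card_insert_of_notMem hi]
    convert ih.trans hstep using 1
    rw [siegel, siegel, Finset.sum_insert hi, add_assoc, add_comm (_ - _)]

theorem forall_mem_of_forall_siegel_mem [Fintype ι] {I : Ideal R}
    (h : ∀ m, siegel k e t Finset.univ b m ∈ I) (m : Fin (2 * r)) : b m ∈ I := by
  have hk : b k ∈ I := siegel_apply_pivot he t Finset.univ b ▸ h k
  have hneg (i : ι) : b (negE r (e i)) ∈ I := siegel_apply_neg he t Finset.univ b i ▸ h _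
  rcases he.cover m with rfl | rfl | ⟨i, rfl⟩ | ⟨i, rfl⟩
  · exact hk
  · rw [← I.sub_mem_iff_left (I.sum_mem fun i _ ↦ I.mul_mem_left (t i) (hneg i)),
      ← siegel_apply_neg_pivot he]
    exact h _
  · rw [← I.add_mem_iff_left (I.mul_mem_left (t i) hk),
      ← siegel_apply_of_mem he t _ b (Finset.mem_univ i)]
    exact h _
  · exact hneg i

end Siegel

end OrthogonalMoves

section Steps

variable {A : Type*} [CommRing A] {r : ℕ} {ι : Type*} [Fintype ι]
  {k : Fin (2 * r)} {e : ι → Fin (2 * r)} (he : IsHyperbolicFrame k e) {S : Submonoid A}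
  {b : Fin (2 * r) → A}

include he

theorem exists_eReachable_apply_mem_of_mem_span_frame (hadd : ∀ f ∈ S, ∀ y, ∃ h, y + h * f ∈ S)
    (hb : ∃ f ∈ Ideal.span (Set.range fun i ↦ b (e i)), f ∈ S) :
    ∃ b', EReachable r (Fintype.card ι) b b' ∧ b' (negE r k) ∈ S := by
  obtain ⟨f, hf, hfS⟩ := hb
  obtain ⟨ξ, rfl⟩ := Ideal.mem_span_range_iff_exists_fun.mp hf
  obtain ⟨h, hh⟩ := hadd _ hfS (b (negE r k))
  refine ⟨_, eReachable_siegel he.neg (fun i ↦ -(h * ξ i)) Finset.univ b, ?_⟩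
  rw [siegel_apply_neg_pivot he.neg]
  simpa [negE_negE, Finset.mul_sum, mul_assoc] using hh

variable [IsNoetherianRing A]
  (hS : ∀ p, IsPrimeAvoiding (S : Set A) p → p.height < (Fintype.card ι : ℕ∞))

include hS

theorem exists_eReachable_mem_span_sup_span (hb : ∃ f ∈ Ideal.span (Set.range b), f ∈ S) :
    ∃ b', EReachable r (Fintype.card ι + Fintype.card ι) b b' ∧
      ∃ f ∈ Ideal.span (Set.range fun i ↦ b' (e i)) ⊔
        Ideal.span (Set.range fun i ↦ b' (negE r (e i))), f ∈ S := by
  have he' := he.neg_pivot.neg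
  obtain ⟨t₁, ht₁⟩ := exists_forall_isPrimeAvoiding_mem hS (fun i ↦ b (e i)) (b k)
  let b₁ := siegel k e t₁ Finset.univ b
  obtain ⟨t₂, ht₂⟩ := exists_forall_isPrimeAvoiding_mem hS
    (fun i ↦ b₁ (negE r (e i))) (b₁ (negE r k))
  let b₂ := siegel (negE r k) (fun i ↦ negE r (e i)) t₂ Finset.univ b₁
  refine ⟨b₂, (eReachable_siegel he t₁ _ b).trans (eReachable_siegel he' t₂ _ b₁),
    exists_mem_of_forall_isPrimeAvoiding_not_le S _ fun p hp hle ↦ ?_⟩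
  have hb₁_e (i : ι) : b₁ (e i) ∈ p := by
    have h : b₂ (e i) = b₁ (e i) := by
      simpa [negE_negE] using siegel_apply_neg he' t₂ Finset.univ b₁ i
    exact h ▸ hle (Ideal.mem_sup_left (Ideal.subset_span ⟨i, rfl⟩))
  have hb₁_k : b₁ k ∈ p := by
    simp only [b₁, siegel_apply_pivot he, siegel_apply_of_mem he t₁ _ b (Finset.mem_univ _)]
      at hb₁_e ⊢
    exact (ht₁ p hp hb₁_e).1
  obtain ⟨hb₁_neg_k, hb₁_neg⟩ := ht₂ p hp fun i ↦
    siegel_apply_of_mem he' t₂ _ b₁ (Finset.mem_univ i) ▸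
      hle (Ideal.mem_sup_right (Ideal.subset_span ⟨i, rfl⟩))
  have hb₁ (m : Fin (2 * r)) : b₁ m ∈ p := by
    rcases he.cover m with rfl | rfl | ⟨i, rfl⟩ | ⟨i, rfl⟩
    exacts [hb₁_k, hb₁_neg_k, hb₁_e i, hb₁_neg i]
  obtain ⟨f, hf, hfS⟩ := hb
  refine hp.notMem hfS (Ideal.span_le.mpr ?_ hf)
  exact Set.range_subset_iff.mpr (forall_mem_of_forall_siegel_mem he t₁ b hb₁)

theorem exists_eReachable_neg_pivot_notMem (hadd : ∀ f ∈ S, ∀ y, ∃ h, y + h * f ∈ S)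
    (hb : ∃ f ∈ Ideal.span (Set.range fun i ↦ b (e i)) ⊔
      Ideal.span (Set.range fun i ↦ b (negE r (e i))), f ∈ S) :
    ∃ b', EReachable r (Fintype.card ι) b b' ∧
      ∀ p, IsPrimeAvoiding (S : Set A) p → (∀ i, b' (e i) ∈ p) → b' (negE r k) ∉ p := by
  obtain ⟨f, hf, hfS⟩ := hb
  obtain ⟨g, hg, _, hf', rfl⟩ := Submodule.mem_sup.mp hf
  obtain ⟨ξ, rfl⟩ := Ideal.mem_span_range_iff_exists_fun.mp hf'
  obtain ⟨h, hh⟩ := hadd _ hfS (b (negE r k))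
  -- The multipliers `-h * ξ i` bring `b (-k)` into `S` modulo the ideal of the `b (e i)`, and
  -- perturbing them within that ideal makes the new `b (e i)` generic without spoiling this.
  obtain ⟨t, ht, htp⟩ := exists_forall_mem_span_isPrimeAvoiding_mem hS
    (fun i ↦ b (e i)) (fun i ↦ -h * ξ i) (b k)
  refine ⟨_, eReachable_siegel he t Finset.univ b, fun p hp hmem hneg ↦ ?_⟩
  simp only [siegel_apply_of_mem he t _ b (Finset.mem_univ _)] at hmem
  rw [siegel_apply_neg_pivot he] at hneg
  have hle : Ideal.span (Set.range fun i ↦ b (e i)) ≤ p :=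
    Ideal.span_le.mpr (Set.range_subset_iff.mpr (htp p hp hmem))
  have heq : b (negE r k) + h * (g + ∑ i, ξ i * b (negE r (e i))) =
      b (negE r k) - ∑ i, t i * b (negE r (e i)) + h * g +
        ∑ i, (t i - -h * ξ i) * b (negE r (e i)) := by
    simp only [sub_mul, neg_mul, Finset.sum_sub_distrib, Finset.sum_neg_distrib, mul_assoc,
      ← Finset.mul_sum]
    ring
  refine hp.notMem hh (heq ▸ ?_)
  exact p.add_mem (p.add_mem hneg (p.mul_mem_left _ (hle hg)))
    (p.sum_mem fun i _ ↦ p.mul_mem_right _ (hle (ht i)))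

theorem exists_eReachable_mem_span
    (hb : ∀ p, IsPrimeAvoiding (S : Set A) p → (∀ i, b (e i) ∈ p) → b (negE r k) ∉ p) :
    ∃ b', EReachable r (Fintype.card ι) b b' ∧
      ∃ f ∈ Ideal.span (Set.range fun i ↦ b' (e i)), f ∈ S := by
  obtain ⟨t, ht⟩ := exists_forall_isPrimeAvoiding_mem hS (fun i ↦ b (e i)) (b (negE r k))
  refine ⟨_, eReachable_siegel he.neg_pivot t Finset.univ b,
    exists_mem_of_forall_isPrimeAvoiding_not_le S _ fun p hp hle ↦ ?_⟩
  simp only [Ideal.span_le, Set.range_subset_iff, SetLike.mem_coe,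
    siegel_apply_of_mem he.neg_pivot t _ b (Finset.mem_univ _)] at hle
  obtain ⟨hk, hmem⟩ := ht p hp hle
  exact hb p hp hmem hk

theorem exists_eReachable_apply_mem_of_mem_span (hadd : ∀ f ∈ S, ∀ y, ∃ h, y + h * f ∈ S)
    (hb : ∃ f ∈ Ideal.span (Set.range b), f ∈ S) :
    ∃ b', EReachable r (5 * Fintype.card ι) b b' ∧ b' (negE r k) ∈ S := by
  obtain ⟨b₂, hreach₂, hb₂⟩ := exists_eReachable_mem_span_sup_span he hS hb
  obtain ⟨b₃, hreach₃, hb₃⟩ := exists_eReachable_neg_pivot_notMem he hS hadd hb₂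
  obtain ⟨b₄, hreach₄, hb₄⟩ := exists_eReachable_mem_span he hS hb₃
  obtain ⟨b₅, hreach₅, hb₅⟩ := exists_eReachable_apply_mem_of_mem_span_frame he hadd hb₄
  obtain ⟨E, hE, hEb⟩ := ((hreach₂.trans hreach₃).trans hreach₄).trans hreach₅
  exact ⟨b₅, ⟨E, EOE_mono (by omega) hE, hEb⟩, hb₅⟩

end Steps

theorem even_make_lexMonic_general {C : Type*} [CommRing C] [IsNoetherianRing C] {n D r : ℕ}
    (hdim : ringKrullDim C ≤ (D : WithBot ℕ∞)) (hr : D + 2 ≤ r)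
    {b : Fin (2 * r) → MvPolynomial (Fin n) C}
    (hb : ∃ f ∈ Ideal.span (Set.range b), LexMonic f) (k : Fin (2 * r)) :
    ∃ E ∈ EOE r (5 * (r - 1)) (MvPolynomial (Fin n) C), LexMonic ((E *ᵥ b) k) := by
  obtain ⟨e, he⟩ := exists_isHyperbolicFrame (negE r k)
  have hheight (p : Ideal (MvPolynomial (Fin n) C))
      (hp : IsPrimeAvoiding (lexMonicSubmonoid C n : Set (MvPolynomial (Fin n) C)) p) :
      p.height < (Fintype.card (Fin (r - 1)) : ℕ∞) := by
    rw [Fintype.card_fin]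
    exact (height_le_of_isPrimeAvoiding_lexMonicSubmonoid hdim hp).trans_lt
      (Nat.cast_lt.mpr (by omega))
  obtain ⟨_, ⟨E, hE, rfl⟩, hmonic⟩ := exists_eReachable_apply_mem_of_mem_span he hheight
    (fun f hf ↦ hf.exists_lexMonic_add_mul) hb
  rw [negE_negE] at hmonic
  exact ⟨E, by simpa using hE, hmonic⟩

/-- Obtaining a lexicographically monic entry (even case): any
`b ∈ IUm_{2r}(C[x_1,…,x_n])` can be transformed by at most `11r−7` elementary
orthogonal transvections into a column whose entry at position `−2` is
lexicographically monic. -/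
theorem even_make_lexMonic
    (C : Type*) [CommRing C] [IsNoetherianRing C] (n D : ℕ)
    (hdim : ringKrullDim C = (D : WithBot ℕ∞))
    (r : ℕ) (hr : max 3 (D + 2) ≤ r)
    (b : Fin (2 * r) → MvPolynomial (Fin n) C)
    (hb : b ∈ IUmE r (MvPolynomial (Fin n) C)) :
    ∃ E ∈ EOE r (11 * r - 7) (MvPolynomial (Fin n) C),
      LexMonic (E.mulVec b ⟨2 * r - 2, by omega⟩) := by
  have hspan : ∃ f ∈ Ideal.span (Set.range b), LexMonic f :=
    ⟨1, hb.1 ▸ Submodule.mem_top, (lexMonicSubmonoid C n).one_mem⟩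
  obtain ⟨E, hE, hmonic⟩ := even_make_lexMonic_general hdim.le (le_of_max_le_right hr) hspan _
  exact ⟨E, EOE_mono (by omega) hE, hmonic⟩
end
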